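/- arXiv:1806.06389 — 2 statements merged into one kernel-verified Lean document; each statement's English description precedes it below -/
import Mathlib

section
/- Let d ≥ 1 and let γ be the standard Gaussian measure on ℝ^d. Let μ be a centered probability measure on ℝ^d and ν a probability measure on ℝ^d, both with finite second moment and finite relative entropy with respect to γ. If equality holds in the symmetrized Talagrand inequality, i.e. W₂(μ, ν)² = 2 Ent_γ(μ) + 2 Ent_γ(ν), then there exists a symmetric positive definite d×d matrix A and a point m ∈ ℝ^d such that μ is the centered Gaussian measure with covariance matrix A and ν is the Gaussian measure with mean m and covariance matrix A⁻¹. -/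
open MeasureTheory ENNReal
open scoped RealInnerProductSpace

/-- The standard Gaussian measure on `ℝ^d`, with density
`(2π)^{-d/2} exp(-|x|²/2)` with respect to Lebesgue measure. -/
noncomputable def stdGaussian (d : ℕ) : Measure (EuclideanSpace ℝ (Fin d)) :=
  volume.withDensity fun x =>
    ENNReal.ofReal ((2 * Real.pi) ^ (-(d : ℝ) / 2) * Real.exp (-‖x‖ ^ 2 / 2))

/-- `π` is a coupling of `μ` and `ν`: a measure on the product with the given marginals. -/
def IsCoupling {E : Type*} [MeasurableSpace E] (π : Measure (E × E)) (μ ν : Measure E) : Prop :=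
  π.map Prod.fst = μ ∧ π.map Prod.snd = ν

/-- The squared `L²` Kantorovich-Wasserstein distance `W₂(μ,ν)²`: the infimum of
`∫ |x-y|² dπ` over all couplings `π` of `μ` and `ν`. -/
noncomputable def W2sq {E : Type*} [MeasurableSpace E] [NormedAddCommGroup E]
    (μ ν : Measure E) : ℝ≥0∞ :=
  ⨅ (π : Measure (E × E)) (_ : IsCoupling π μ ν), ∫⁻ p, (‖p.1 - p.2‖₊ : ℝ≥0∞) ^ 2 ∂π

open Classical in
/-- The relative entropy (KL divergence) `Ent_γ(μ) = ∫ log(dμ/dγ) dμ` if `μ ≪ γ` (and the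
integral makes sense), and `+∞` otherwise. -/
noncomputable def relEnt {E : Type*} [MeasurableSpace E] (μ γ : Measure E) : ℝ≥0∞ :=
  if μ ≪ γ ∧ Integrable (fun x => Real.log (μ.rnDeriv γ x).toReal) μ
  then ENNReal.ofReal (∫ x, Real.log (μ.rnDeriv γ x).toReal ∂μ)
  else ∞

/-- The Gaussian measure `N(m, A)` on `ℝ^d` with mean `m` and (invertible) covariance
matrix `A`, given by its density with respect to Lebesgue measure. -/
noncomputable def gaussianMeasure {d : ℕ} (m : EuclideanSpace ℝ (Fin d))
    (A : Matrix (Fin d) (Fin d) ℝ) : Measure (EuclideanSpace ℝ (Fin d)) :=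
  volume.withDensity fun x =>
    ENNReal.ofReal (((2 * Real.pi) ^ d * A.det) ^ (-(1 : ℝ) / 2) *
      Real.exp (-⟪x - m, Matrix.toEuclideanLin A⁻¹ (x - m)⟫ / 2))

/-!
Let `T` and `S` be the Knothe maps pushing `γ` forward to `μ` and to `ν`, but built in opposite
orders of the coordinates: `T i` depends on the coordinates `≤ i` and `S i` on those `≥ i`. Given
the `i`-th coordinate, the conditional means of `T i` and `S i` are functions of disjoint sets of
coordinates, so they are independent and `cov (T i, S i)` is an average of one-dimensional
covariances. Hoeffding's formula writes each of those as the expectation of the product of the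
derivatives `∂ᵢ T i` and `∂ᵢ S i` under a coupling of the Gaussian with itself whose density is the
Hoeffding kernel; its marginals are Gaussian because the Stein kernel of the Gaussian is `1`. Hence
`r ≥ 1 + log r` and the change of variables formula bound an explicit coupling of `μ` and `ν` by
entropies, which is the symmetrized Talagrand inequality.

In the case of equality `∂ᵢ T i * ∂ᵢ S i = 1` almost everywhere. Since `T 0` depends only on the
first coordinate, it is affine, and the first coordinate of `μ` is Gaussian. Any orthonormal basis
may be used, so all one-dimensional marginals of `μ` and `ν` are Gaussian, hence so are `μ` and `ν`.
Between Gaussians, testing the inequality on linear couplings reduces the relation between the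
covariances to `trace M ≤ d + log (det M)` for a positive definite `M`, which forces `M = 1`.
-/

namespace SymmTalagrand

open Set Filter
open ProbabilityTheory hiding stdGaussian
open InformationTheory
open scoped Topology NNReal

section HoeffdingKernel

/-- The Hoeffding kernel of a measure `m` on the line: the weight which, integrated against a
product of two derivatives, gives the covariance of the primitives under `m`. -/
noncomputable def hoeffdingKernel (m : Measure ℝ) (p : ℝ × ℝ) : ℝ≥0∞ :=
  m (Iio (min p.1 p.2)) * m (Ioi (max p.1 p.2))

lemma hoeffdingKernel_swap (m : Measure ℝ) (p : ℝ × ℝ) :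
    hoeffdingKernel m p.swap = hoeffdingKernel m p := by
  simp [hoeffdingKernel, min_comm, max_comm]

@[fun_prop]
lemma measurable_hoeffdingKernel (m : Measure ℝ) : Measurable (hoeffdingKernel m) := by
  have hIio : Measurable fun s => m (Iio s) :=
    Monotone.measurable fun _ _ hst => measure_mono (Iio_subset_Iio hst)
  have hIoi : Measurable fun s => m (Ioi s) :=
    Antitone.measurable fun _ _ hst => measure_mono (Ioi_subset_Ioi hst)
  exact (hIio.comp (measurable_fst.min measurable_snd)).mul
    (hIoi.comp (measurable_fst.max measurable_snd))

lemma hoeffdingKernel_ne_zero (m : Measure ℝ) [m.IsOpenPosMeasure] (p : ℝ × ℝ) :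
    hoeffdingKernel m p ≠ 0 :=
  mul_ne_zero (isOpen_Iio.measure_ne_zero m nonempty_Iio)
    (isOpen_Ioi.measure_ne_zero m nonempty_Ioi)

lemma measurableSet_mem_Ioo_prod_Ioo :
    MeasurableSet {z : (ℝ × ℝ) × ℝ × ℝ | z.1 ∈ Ioo z.2.1 z.2.2 ×ˢ Ioo z.2.1 z.2.2} := by
  simp only [mem_prod, mem_Ioo]
  measurability

lemma hoeffdingKernel_mul_eq_lintegral (m : Measure ℝ) [SFinite m] (p : ℝ × ℝ) (c : ℝ≥0∞) :
    hoeffdingKernel m p * c =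
      ∫⁻ q, (Ioo q.1 q.2 ×ˢ Ioo q.1 q.2).indicator (fun _ => c) p ∂(m.prod m) := by
  have hset : Iio (min p.1 p.2) ×ˢ Ioi (max p.1 p.2) =
      Prod.mk p ⁻¹' {z : (ℝ × ℝ) × ℝ × ℝ | z.1 ∈ Ioo z.2.1 z.2.2 ×ˢ Ioo z.2.1 z.2.2} := by
    ext q
    simp only [mem_prod, mem_Iio, mem_Ioi, lt_min_iff, max_lt_iff, mem_preimage, mem_ofPred_eq,
      mem_Ioo]
    tauto
  rw [hoeffdingKernel, ← Measure.prod_prod, hset, mul_comm, ← lintegral_indicator_const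
    (measurableSet_mem_Ioo_prod_Ioo.preimage measurable_prodMk_left)]
  rfl

lemma lintegral_hoeffdingKernel_mul (m : Measure ℝ) [SFinite m] (ρ : Measure (ℝ × ℝ)) [SFinite ρ]
    {f : ℝ × ℝ → ℝ≥0∞} (hf : Measurable f) :
    ∫⁻ p, hoeffdingKernel m p * f p ∂ρ =
      ∫⁻ q, ∫⁻ p in Ioo q.1 q.2 ×ˢ Ioo q.1 q.2, f p ∂ρ ∂(m.prod m) := by
  have hind : Measurable fun z : (ℝ × ℝ) × ℝ × ℝ =>
      (Ioo z.2.1 z.2.2 ×ˢ Ioo z.2.1 z.2.2).indicator f z.1 :=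
    Measurable.indicator (hf.comp measurable_fst) measurableSet_mem_Ioo_prod_Ioo
  calc ∫⁻ p, hoeffdingKernel m p * f p ∂ρ
      = ∫⁻ p, ∫⁻ q, (Ioo q.1 q.2 ×ˢ Ioo q.1 q.2).indicator f p ∂(m.prod m) ∂ρ :=
        lintegral_congr fun p => hoeffdingKernel_mul_eq_lintegral m p (f p)
    _ = ∫⁻ q, ∫⁻ p, (Ioo q.1 q.2 ×ˢ Ioo q.1 q.2).indicator f p ∂ρ ∂(m.prod m) :=
        lintegral_lintegral_swap hind.aemeasurable
    _ = ∫⁻ q, ∫⁻ p in Ioo q.1 q.2 ×ˢ Ioo q.1 q.2, f p ∂ρ ∂(m.prod m) :=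
        lintegral_congr fun q => lintegral_indicator (measurableSet_Ioo.prod measurableSet_Ioo) f

lemma lintegral_hoeffdingKernel_right (m : Measure ℝ) [SFinite m] (s : ℝ) :
    ∫⁻ t, hoeffdingKernel m (s, t) =
      ∫⁻ q in Iio s ×ˢ Ioi s, ENNReal.ofReal (q.2 - q.1) ∂(m.prod m) := by
  calc ∫⁻ t, hoeffdingKernel m (s, t)
      = ∫⁻ p, hoeffdingKernel m p * 1 ∂((Measure.dirac s).prod volume) := by
        rw [lintegral_prod _ (by fun_prop), lintegral_dirac' _ (by fun_prop)]
        simp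
    _ = ∫⁻ q, (Iio s ×ˢ Ioi s).indicator (fun q => ENNReal.ofReal (q.2 - q.1)) q ∂(m.prod m) := by
        rw [lintegral_hoeffdingKernel_mul m _ measurable_const]
        refine lintegral_congr fun q => ?_
        simp [Measure.prod_prod, indicator, ite_and]
    _ = ∫⁻ q in Iio s ×ˢ Ioi s, ENNReal.ofReal (q.2 - q.1) ∂(m.prod m) :=
        lintegral_indicator (measurableSet_Iio.prod measurableSet_Ioi) _

lemma lintegral_hoeffdingKernel_right_eq_ofReal {m : Measure ℝ} [IsFiniteMeasure m]
    (hm : Integrable (fun x => x) m) (s : ℝ) :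
    ∫⁻ t, hoeffdingKernel m (s, t) =
      ENNReal.ofReal
        (m.real (Iio s) * ∫ x in Ioi s, x ∂m - m.real (Ioi s) * ∫ x in Iio s, x ∂m) := by
  have hi : ∀ u : Set ℝ, Integrable (fun x : ℝ => x) (m.restrict u) := fun u => hm.integrableOn
  rw [lintegral_hoeffdingKernel_right, ← ofReal_integral_eq_lintegral_ofReal,
    ← Measure.prod_restrict, integral_sub ((hi _).comp_snd _) ((hi _).comp_fst _),
    integral_fun_snd (fun x : ℝ => x), integral_fun_fst (fun x : ℝ => x)]
  · simp
  · exact ((hm.comp_snd m).sub (hm.comp_fst m)).integrableOn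
  · filter_upwards [ae_restrict_mem (measurableSet_Iio.prod measurableSet_Ioi)] with q hq
    exact sub_nonneg.2 (hq.1.trans hq.2).le

end HoeffdingKernel

section GaussianBridge

/-- The standard Gaussian measure on the real line. -/
noncomputable abbrev gauss : Measure ℝ := gaussianReal 0 1

lemma volume_absolutelyContinuous_gauss : volume ≪ gauss :=
  gaussianReal_absolutelyContinuous' 0 one_ne_zero

instance : gauss.IsOpenPosMeasure := volume_absolutelyContinuous_gauss.isOpenPosMeasure

instance : NullSingletonClass gauss := nullSingletonClass_gaussianReal one_ne_zero

lemma gauss_eq_withDensity : gauss = volume.withDensity (gaussianPDF 0 1) :=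
  gaussianReal_of_var_ne_zero 0 one_ne_zero

lemma gaussianPDFReal_zero_one (x : ℝ) :
    gaussianPDFReal 0 1 x = (√(2 * Real.pi))⁻¹ * Real.exp (-x ^ 2 / 2) := by
  simp [gaussianPDFReal]

lemma hasDerivAt_neg_gaussianPDFReal (x : ℝ) :
    HasDerivAt (fun y => -gaussianPDFReal 0 1 y) (gaussianPDFReal 0 1 x * x) x := by
  simp only [gaussianPDFReal_zero_one]
  have h : HasDerivAt (fun y : ℝ => -y ^ 2 / 2) (-x) x :=
    ((hasDerivAt_pow 2 x).neg.div_const 2).congr_deriv (by norm_num; ring)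
  exact ((h.exp).const_mul (√(2 * Real.pi))⁻¹).neg.congr_deriv (by ring)

lemma tendsto_neg_gaussianPDFReal_cocompact :
    Tendsto (fun y => -gaussianPDFReal 0 1 y) (cocompact ℝ) (𝓝 0) := by
  simp only [gaussianPDFReal_zero_one]
  have hsq : Tendsto (fun y : ℝ => y ^ 2 / 2) (cocompact ℝ) atTop := by
    simpa using ((tendsto_pow_atTop two_ne_zero).comp
      (tendsto_norm_cocompact_atTop (E := ℝ))).atTop_div_const two_pos
  have hexp := Real.tendsto_exp_atBot.comp (tendsto_neg_atTop_atBot.comp hsq)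
  simpa [Function.comp_def, neg_div] using (hexp.const_mul (√(2 * Real.pi))⁻¹).neg

lemma integrable_id_gauss : Integrable (fun x : ℝ => x) gauss :=
  (memLp_id_gaussianReal (μ := 0) (v := 1) 1).integrable le_rfl

lemma integrable_gaussianPDFReal_mul_id : Integrable fun x : ℝ => gaussianPDFReal 0 1 x * x := by
  have h := integrable_id_gauss
  rw [gauss_eq_withDensity, integrable_withDensity_iff (measurable_gaussianPDF 0 1)
    (.of_forall fun x => gaussianPDF_lt_top)] at h
  simpa [mul_comm] using h

lemma setIntegral_id_gauss {s : Set ℝ} (hs : MeasurableSet s) :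
    ∫ x in s, x ∂gauss = ∫ x in s, gaussianPDFReal 0 1 x * x := by
  rw [gauss_eq_withDensity, setIntegral_withDensity_eq_setIntegral_toReal_smul
    (measurable_gaussianPDF 0 1) (.of_forall fun x => gaussianPDF_lt_top) _ hs]
  simp

lemma setIntegral_Ioi_id_gauss (s : ℝ) : ∫ x in Ioi s, x ∂gauss = gaussianPDFReal 0 1 s := by
  rw [setIntegral_id_gauss measurableSet_Ioi,
    integral_Ioi_of_hasDerivAt_of_tendsto' (fun x _ => hasDerivAt_neg_gaussianPDFReal x)
      integrable_gaussianPDFReal_mul_id.integrableOn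
      (tendsto_neg_gaussianPDFReal_cocompact.mono_left atTop_le_cocompact)]
  ring

lemma setIntegral_Iio_id_gauss (s : ℝ) : ∫ x in Iio s, x ∂gauss = -gaussianPDFReal 0 1 s := by
  rw [setIntegral_id_gauss measurableSet_Iio, ← integral_Iic_eq_integral_Iio,
    integral_Iic_of_hasDerivAt_of_tendsto' (fun x _ => hasDerivAt_neg_gaussianPDFReal x)
      integrable_gaussianPDFReal_mul_id.integrableOn
      (tendsto_neg_gaussianPDFReal_cocompact.mono_left atBot_le_cocompact)]
  ring

-- The marginal of the kernel is the Gaussian density itself because the Stein kernel of `gauss`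
-- is constant.
lemma lintegral_hoeffdingKernel_gauss (s : ℝ) :
    ∫⁻ t, hoeffdingKernel gauss (s, t) = gaussianPDF 0 1 s := by
  have hsum : gauss.real (Iio s) + gauss.real (Ioi s) = 1 := by
    rw [measureReal_congr Iio_ae_eq_Iic, ← compl_Iic]
    exact probReal_add_probReal_compl measurableSet_Iic
  rw [lintegral_hoeffdingKernel_right_eq_ofReal integrable_id_gauss, setIntegral_Ioi_id_gauss,
    setIntegral_Iio_id_gauss, gaussianPDF]
  congr 1
  linear_combination gaussianPDFReal 0 1 s * hsum

/-- The coupling of the standard Gaussian with itself whose density is its Hoeffding kernel; it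
represents covariances under the Gaussian measure in terms of derivatives. -/
noncomputable def bridge : Measure (ℝ × ℝ) := volume.withDensity (hoeffdingKernel gauss)

lemma lintegral_bridge {f : ℝ × ℝ → ℝ≥0∞} (hf : Measurable f) :
    ∫⁻ p, f p ∂bridge = ∫⁻ p, hoeffdingKernel gauss p * f p := by
  rw [bridge, lintegral_withDensity_eq_lintegral_mul _ (measurable_hoeffdingKernel gauss) hf]
  rfl

lemma map_fst_bridge : bridge.map Prod.fst = gauss := by
  refine Measure.ext_of_lintegral _ fun h hh => ?_
  rw [lintegral_map hh measurable_fst, lintegral_bridge (by fun_prop),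
    Measure.volume_eq_prod, lintegral_prod _ (by fun_prop)]
  conv_rhs => rw [gauss_eq_withDensity,
    lintegral_withDensity_eq_lintegral_mul _ (measurable_gaussianPDF 0 1) hh]
  refine lintegral_congr fun s => ?_
  simp only [Pi.mul_apply]
  rw [lintegral_mul_const _ (by fun_prop), lintegral_hoeffdingKernel_gauss]

lemma map_swap_bridge : bridge.map Prod.swap = bridge := by
  refine Measure.ext_of_lintegral _ fun h hh => ?_
  rw [lintegral_map hh measurable_swap, lintegral_bridge (by fun_prop),
    lintegral_bridge hh, Measure.volume_eq_prod, ← lintegral_prod_swap]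
  simp [hoeffdingKernel_swap]

lemma map_snd_bridge : bridge.map Prod.snd = gauss := by
  rw [← map_swap_bridge, Measure.map_map measurable_snd measurable_swap]
  exact map_fst_bridge

instance : IsProbabilityMeasure bridge :=
  (Measure.isProbabilityMeasure_map_iff measurable_fst.aemeasurable).1
    (map_fst_bridge ▸ inferInstance)

lemma volume_absolutelyContinuous_bridge : (volume : Measure (ℝ × ℝ)) ≪ bridge :=
  withDensity_absolutelyContinuous' (measurable_hoeffdingKernel gauss).aemeasurable
    (.of_forall (hoeffdingKernel_ne_zero gauss))

end GaussianBridge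

section Covariance

section Generic

variable {α : Type*} [MeasurableSpace α] {m : Measure α} [IsProbabilityMeasure m] {T S : α → ℝ}

lemma integrable_sub_mul_sub (hT : MemLp T 2 m) (hS : MemLp S 2 m) :
    Integrable (fun q : α × α => (T q.1 - T q.2) * (S q.1 - S q.2)) (m.prod m) :=
  ((hT.comp_fst m).sub (hT.comp_snd m)).integrable_mul ((hS.comp_fst m).sub (hS.comp_snd m))

lemma integral_sub_mul_sub (hT : MemLp T 2 m) (hS : MemLp S 2 m) :
    ∫ q : α × α, (T q.1 - T q.2) * (S q.1 - S q.2) ∂(m.prod m) = 2 * cov[T, S; m] := by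
  have hT1 := hT.integrable one_le_two
  have hS1 := hS.integrable one_le_two
  have hTS : Integrable (fun x => T x * S x) m := hT.integrable_mul hS
  have hexpand : ∀ q : α × α, (T q.1 - T q.2) * (S q.1 - S q.2) =
      T q.1 * S q.1 + T q.2 * S q.2 - (T q.1 * S q.2 + S q.1 * T q.2) := fun q => by ring
  simp_rw [hexpand]
  rw [integral_sub ((hTS.comp_fst m).fun_add (hTS.comp_snd m))
      ((hT1.mul_prod hS1).fun_add (hS1.mul_prod hT1)),
    integral_add (hTS.comp_fst m) (hTS.comp_snd m),
    integral_add (hT1.mul_prod hS1) (hS1.mul_prod hT1), integral_prod_mul, integral_prod_mul,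
    integral_fun_fst (fun x => T x * S x), integral_fun_snd (fun x => T x * S x),
    covariance_eq_sub hT hS]
  simp only [probReal_univ, one_smul, Pi.mul_apply]
  ring

end Generic

lemma sub_mul_sub_nonneg {T S : ℝ → ℝ} (hT : Monotone T) (hS : Monotone S) (a b : ℝ) :
    0 ≤ (T a - T b) * (S a - S b) := by
  rcases le_total a b with h | h
  · exact mul_nonneg_of_nonpos_of_nonpos (sub_nonpos.2 (hT h)) (sub_nonpos.2 (hS h))
  · exact mul_nonneg (sub_nonneg.2 (hT h)) (sub_nonneg.2 (hS h))

/-- `T` is monotone and increases at least as much as the integral of `τ`. This is all that is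
known of the pointwise derivative of a monotone function, which may have a singular part. -/
structure IsLowerDeriv (T : ℝ → ℝ) (τ : ℝ → ℝ≥0∞) : Prop where
  monotone : Monotone T
  lintegral_Ioo_le : ∀ ⦃a b⦄, a < b → ∫⁻ s in Ioo a b, τ s ≤ ENNReal.ofReal (T b - T a)

section RealLine

variable {m : Measure ℝ} [IsProbabilityMeasure m] {T S : ℝ → ℝ} {τ σ : ℝ → ℝ≥0∞}

lemma covariance_nonneg_of_monotone (hT : Monotone T) (hS : Monotone S) (hT2 : MemLp T 2 m)
    (hS2 : MemLp S 2 m) : 0 ≤ cov[T, S; m] := by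
  have h : 0 ≤ ∫ q : ℝ × ℝ, (T q.1 - T q.2) * (S q.1 - S q.2) ∂(m.prod m) :=
    integral_nonneg fun q => sub_mul_sub_nonneg hT hS q.1 q.2
  rw [integral_sub_mul_sub hT2 hS2] at h
  linarith

lemma IsLowerDeriv.lintegral_Ioo_mul_lintegral_Ioo_le (hT : IsLowerDeriv T τ)
    (hS : IsLowerDeriv S σ) (a b : ℝ) :
    (∫⁻ s in Ioo a b, τ s) * (∫⁻ s in Ioo a b, σ s) +
      (∫⁻ s in Ioo b a, τ s) * (∫⁻ s in Ioo b a, σ s) ≤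
      ENNReal.ofReal ((T a - T b) * (S a - S b)) := by
  wlog hba : b ≤ a generalizing a b
  · rw [add_comm, ← neg_sub (T b), ← neg_sub (S b), neg_mul_neg]
    exact this b a (not_le.1 hba).le
  rcases hba.eq_or_lt with rfl | hlt
  · simp
  · rw [Ioo_eq_empty_of_le hba, ENNReal.ofReal_mul (sub_nonneg.2 (hT.monotone hba))]
    simpa using mul_le_mul' (hT.lintegral_Ioo_le hlt) (hS.lintegral_Ioo_le hlt)

lemma IsLowerDeriv.lintegral_hoeffdingKernel_mul_le_covariance (hT : IsLowerDeriv T τ)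
    (hS : IsLowerDeriv S σ) (hτ : Measurable τ) (hσ : Measurable σ) (hT2 : MemLp T 2 m)
    (hS2 : MemLp S 2 m) :
    ∫⁻ p, hoeffdingKernel m p * (τ p.1 * σ p.2) ≤ ENNReal.ofReal cov[T, S; m] := by
  set F : ℝ × ℝ → ℝ≥0∞ := fun q => (∫⁻ s in Ioo q.1 q.2, τ s) * ∫⁻ s in Ioo q.1 q.2, σ s
  have hleft : ∫⁻ p, hoeffdingKernel m p * (τ p.1 * σ p.2) = ∫⁻ q, F q ∂(m.prod m) := by
    rw [lintegral_hoeffdingKernel_mul m _ (by fun_prop)]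
    refine lintegral_congr fun q => ?_
    rw [Measure.volume_eq_prod, ← Measure.prod_restrict,
      lintegral_prod_mul hτ.aemeasurable.restrict hσ.aemeasurable.restrict]
  have hdouble : 2 * ∫⁻ q, F q ∂(m.prod m) ≤ 2 * ENNReal.ofReal cov[T, S; m] := by
    calc 2 * ∫⁻ q, F q ∂(m.prod m)
        = ∫⁻ q, F q ∂(m.prod m) + ∫⁻ q, F q.swap ∂(m.prod m) := by
          rw [two_mul, lintegral_prod_swap]
      _ ≤ ∫⁻ q, F q + F q.swap ∂(m.prod m) := le_lintegral_add _ _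
      _ ≤ ∫⁻ q, ENNReal.ofReal ((T q.1 - T q.2) * (S q.1 - S q.2)) ∂(m.prod m) :=
          lintegral_mono fun q => hT.lintegral_Ioo_mul_lintegral_Ioo_le hS q.1 q.2
      _ = 2 * ENNReal.ofReal cov[T, S; m] := by
          rw [← ofReal_integral_eq_lintegral_ofReal (integrable_sub_mul_sub hT2 hS2)
            (.of_forall fun q => sub_mul_sub_nonneg hT.monotone hS.monotone q.1 q.2),
            integral_sub_mul_sub hT2 hS2, ENNReal.ofReal_mul zero_le_two, ENNReal.ofReal_ofNat]
  rw [hleft]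
  exact (ENNReal.mul_le_mul_iff_right two_ne_zero ofNat_ne_top).1 hdouble

lemma ae_eq_const_of_covariance_id_nonpos (hT : Monotone T) (hT2 : MemLp T 2 m)
    (hid : MemLp id 2 m) (hcov : cov[T, id; m] ≤ 0) : ∃ b, ∀ᵐ x ∂m, T x = b := by
  have hnonneg : ∀ q : ℝ × ℝ, 0 ≤ (T q.1 - T q.2) * (id q.1 - id q.2) :=
    fun q => sub_mul_sub_nonneg hT monotone_id q.1 q.2
  have hzero : ∫ q : ℝ × ℝ, (T q.1 - T q.2) * (id q.1 - id q.2) ∂(m.prod m) = 0 := by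
    refine le_antisymm ?_ (integral_nonneg hnonneg)
    rw [integral_sub_mul_sub hT2 hid]
    linarith
  have hae := (integral_eq_zero_iff_of_nonneg hnonneg (integrable_sub_mul_sub hT2 hid)).1 hzero
  obtain ⟨a, ha⟩ := (Measure.ae_ae_of_ae_prod hae).exists
  refine ⟨T a, ?_⟩
  filter_upwards [ha] with b hb
  rcases mul_eq_zero.1 hb with hTab | hab
  · exact (sub_eq_zero.1 hTab).symm
  · rw [(sub_eq_zero.1 hab : a = b)]

lemma ae_eq_affine_of_covariance_le_variance {c : ℝ} (hc : 0 < c)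
    (hT : Monotone fun x => T x - c * x) (hS : Monotone fun x => S x - c⁻¹ * x)
    (hT2 : MemLp T 2 m) (hS2 : MemLp S 2 m) (hid : MemLp id 2 m)
    (hcov : cov[T, S; m] ≤ Var[id; m]) : ∃ b, ∀ᵐ x ∂m, T x = c * x + b := by
  set T' : ℝ → ℝ := fun x => T x - c * x with hT'
  set S' : ℝ → ℝ := fun x => S x - c⁻¹ * x with hS'
  have hT'2 : MemLp T' 2 m := hT2.sub (hid.const_mul c)
  have hS'2 : MemLp S' 2 m := hS2.sub (hid.const_mul c⁻¹)
  have hTeq : T = T' + c • id := by ext x; simp [hT']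
  have hSeq : S = S' + c⁻¹ • id := by ext x; simp [hS']
  have hsum : cov[T, S; m] =
      cov[T', S'; m] + c⁻¹ * cov[T', id; m] + c * cov[id, S'; m] + Var[id; m] := by
    rw [hTeq, hSeq, covariance_add_left hT'2 (hid.const_smul c) (hS'2.add (hid.const_smul c⁻¹)),
      covariance_add_right hT'2 hS'2 (hid.const_smul c⁻¹),
      covariance_add_right (hid.const_smul c) hS'2 (hid.const_smul c⁻¹), covariance_smul_left,
      covariance_smul_left, covariance_smul_right, covariance_smul_right,
      covariance_self hid.aemeasurable]
    field_simp
    ring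
  have hTS := covariance_nonneg_of_monotone hT hS hT'2 hS'2
  have hSid := mul_nonneg hc.le (covariance_nonneg_of_monotone monotone_id hS hid hS'2)
  have hTid : cov[T', id; m] ≤ 0 := by
    have : c⁻¹ * cov[T', id; m] ≤ 0 := by linarith
    exact nonpos_of_mul_nonpos_right this (inv_pos.2 hc)
  obtain ⟨b, hb⟩ := ae_eq_const_of_covariance_id_nonpos hT hT'2 hid hTid
  exact ⟨b, hb.mono fun x hx => by linarith [hx]⟩

lemma IsLowerDeriv.monotone_sub_mul (hT : IsLowerDeriv T τ) {c : ℝ} (hc : 0 ≤ c)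
    (hτ : ∀ᵐ s, τ s = ENNReal.ofReal c) : Monotone fun x => T x - c * x := by
  intro a b hab
  rcases hab.eq_or_lt with rfl | hlt
  · rfl
  have h := hT.lintegral_Ioo_le hlt
  rw [lintegral_congr_ae (ae_restrict_of_ae hτ), setLIntegral_const, Real.volume_Ioo,
    ← ENNReal.ofReal_mul hc, ENNReal.ofReal_le_ofReal_iff (sub_nonneg.2 (hT.monotone hab))] at h
  change T a - c * a ≤ T b - c * b
  linarith

end RealLine

lemma exists_ae_eq_const_of_ae_mul_eq_one {α β : Type*} [MeasurableSpace α] [MeasurableSpace β]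
    {m : Measure α} {n : Measure β} [NeZero m] [NeZero n] [SFinite n] {τ : α → ℝ≥0∞}
    {σ : β → ℝ≥0∞} (h : ∀ᵐ p ∂m.prod n, τ p.1 * σ p.2 = 1) :
    ∃ c : ℝ, 0 < c ∧ (∀ᵐ s ∂m, τ s = ENNReal.ofReal c) ∧ ∀ᵐ t ∂n, σ t = ENNReal.ofReal c⁻¹ := by
  have h' : ∀ᵐ s ∂m, ∀ᵐ t ∂n, τ s = (σ t)⁻¹ :=
    (Measure.ae_ae_of_ae_prod h).mono fun s hs => hs.mono fun t => ENNReal.eq_inv_of_mul_eq_one_left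
  obtain ⟨s₀, hs₀, hs₀'⟩ := ((Measure.ae_ae_of_ae_prod h).and h').exists
  obtain ⟨t₀, ht₀⟩ := hs₀.exists
  have hne_zero : τ s₀ ≠ 0 := fun h0 => by simp [h0] at ht₀
  have hne_top : τ s₀ ≠ ∞ := fun htop => by
    rcases eq_or_ne (σ t₀) 0 with h0 | h0 <;> simp [htop, h0] at ht₀
  have hpos : 0 < (τ s₀).toReal := ENNReal.toReal_pos hne_zero hne_top
  refine ⟨(τ s₀).toReal, hpos, ?_, ?_⟩
  · filter_upwards [h'] with s hs
    obtain ⟨t, ht, ht'⟩ := (hs.and hs₀').exists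
    rw [ENNReal.ofReal_toReal hne_top, ht, ht']
  · filter_upwards [hs₀'] with t ht
    rw [ENNReal.ofReal_inv_of_pos hpos, ENNReal.ofReal_toReal hne_top, ht, inv_inv]

lemma IsLowerDeriv.lintegral_bridge_le_covariance {T S : ℝ → ℝ} {τ σ : ℝ → ℝ≥0∞}
    (hT : IsLowerDeriv T τ) (hS : IsLowerDeriv S σ) (hτ : Measurable τ) (hσ : Measurable σ)
    (hT2 : MemLp T 2 gauss) (hS2 : MemLp S 2 gauss) :
    ∫⁻ p, τ p.1 * σ p.2 ∂bridge ≤ ENNReal.ofReal cov[T, S; gauss] := by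
  rw [lintegral_bridge (by fun_prop)]
  exact hT.lintegral_hoeffdingKernel_mul_le_covariance hS hτ hσ hT2 hS2

lemma IsLowerDeriv.ae_eq_affine_gauss {T S : ℝ → ℝ} {τ σ : ℝ → ℝ≥0∞} (hT : IsLowerDeriv T τ)
    (hS : IsLowerDeriv S σ) (hT2 : MemLp T 2 gauss) (hS2 : MemLp S 2 gauss)
    (hmul : ∀ᵐ p : ℝ × ℝ, τ p.1 * σ p.2 = 1) (hcov : cov[T, S; gauss] ≤ 1) :
    ∃ c b : ℝ, 0 < c ∧ ∀ᵐ x ∂gauss, T x = c * x + b := by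
  obtain ⟨c, hc, hτ, hσ⟩ := exists_ae_eq_const_of_ae_mul_eq_one hmul
  obtain ⟨b, hb⟩ := ae_eq_affine_of_covariance_le_variance hc (hT.monotone_sub_mul hc.le hτ)
    (hS.monotone_sub_mul (inv_pos.2 hc).le hσ) hT2 hS2 (memLp_id_gaussianReal 2)
    (by simpa using hcov)
  exact ⟨c, b, hc, hb⟩

end Covariance

section Rearrangement

section Cdf

variable (n : Measure ℝ) [IsProbabilityMeasure n]

lemma strictMono_cdf [n.IsOpenPosMeasure] : StrictMono (cdf n) := by
  intro a b hab
  have hsplit : n.real (Iic b) = n.real (Iic a) + n.real (Ioc a b) := by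
    rw [← measureReal_union (Iic_disjoint_Ioc le_rfl) measurableSet_Ioc,
      Iic_union_Ioc_eq_Iic hab.le]
  have hpos : 0 < n.real (Ioc a b) := ENNReal.toReal_pos
    (((isOpen_Ioo.measure_pos n (nonempty_Ioo.2 hab)).trans_le
      (measure_mono Ioo_subset_Ioc_self)).ne') (measure_ne_top _ _)
  rw [cdf_eq_real, cdf_eq_real]
  linarith

lemma cdf_pos [n.IsOpenPosMeasure] (s : ℝ) : 0 < cdf n s :=
  (cdf_nonneg n (s - 1)).trans_lt (strictMono_cdf n (sub_one_lt s))

lemma cdf_lt_one [n.IsOpenPosMeasure] (s : ℝ) : cdf n s < 1 :=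
  (strictMono_cdf n (lt_add_one s)).trans_le (cdf_le_one n _)

lemma continuous_cdf [NullSingletonClass n] : Continuous (cdf n) := by
  have hcdf : (cdf n : ℝ → ℝ) = fun s => cdf n 0 + ∫ _ in (0 : ℝ)..s, (1 : ℝ) ∂n := by
    ext s
    rw [← intervalIntegral.integral_Iic_sub_Iic (integrable_const (1 : ℝ)).integrableOn
      (integrable_const (1 : ℝ)).integrableOn]
    simp [cdf_eq_real]
  rw [hcdf]
  exact continuous_const.add ((integrable_const (1 : ℝ)).continuous_primitive 0)

lemma measure_setOf_cdf_le [n.IsOpenPosMeasure] [NullSingletonClass n] {u : ℝ} (h0 : 0 ≤ u)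
    (h1 : u ≤ 1) : n {s | cdf n s ≤ u} = ENNReal.ofReal u := by
  rcases h0.eq_or_lt with rfl | h0
  · simp [not_le.2 (cdf_pos n _)]
  rcases h1.eq_or_lt with rfl | h1
  · simp [cdf_le_one]
  obtain ⟨a, ha⟩ := ((tendsto_cdf_atBot n).eventually (gt_mem_nhds h0)).exists
  obtain ⟨b, hb⟩ := ((tendsto_cdf_atTop n).eventually (lt_mem_nhds h1)).exists
  obtain ⟨s, rfl⟩ := mem_range_of_exists_le_of_exists_ge (continuous_cdf n)
    ⟨a, ha.le⟩ ⟨b, hb.le⟩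
  simp only [(strictMono_cdf n).le_iff_le]
  exact (ofReal_cdf n s).symm

end Cdf

/-- The monotone rearrangement sending `n` to `m`: the quantile function of `m` composed with the
distribution function of `n`. Its values are meaningful only where `0 < cdf n s < 1`. -/
noncomputable def rearrangement (n m : Measure ℝ) (s : ℝ) : ℝ :=
  sInf {t | cdf n s ≤ cdf m t}

section

variable {n : Measure ℝ} [IsProbabilityMeasure n] [n.IsOpenPosMeasure]

lemma rearrangement_le_iff {m : Measure ℝ} {s t : ℝ} :
    rearrangement n m s ≤ t ↔ cdf n s ≤ cdf m t := by
  obtain ⟨b, hb⟩ := ((tendsto_cdf_atTop m).eventually (lt_mem_nhds (cdf_lt_one n s))).exists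
  obtain ⟨a, ha⟩ := ((tendsto_cdf_atBot m).eventually (gt_mem_nhds (cdf_pos n s))).exists
  have hbdd : BddBelow {t | cdf n s ≤ cdf m t} :=
    ⟨a, fun x hx => ((monotone_cdf m).reflect_lt (ha.trans_le hx)).le⟩
  refine ⟨fun h => ?_, fun h => csInf_le hbdd h⟩
  refine ge_of_tendsto (((cdf m).right_continuous t).mono Ioi_subset_Ici_self).tendsto ?_
  filter_upwards [self_mem_nhdsWithin] with x hx
  obtain ⟨y, hy, hyx⟩ := exists_lt_of_csInf_lt ⟨b, hb.le⟩ (h.trans_lt hx)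
  exact le_trans hy (monotone_cdf m hyx.le)

lemma monotone_rearrangement (m : Measure ℝ) : Monotone (rearrangement n m) := fun _ _ hab =>
  rearrangement_le_iff.2 ((monotone_cdf n hab).trans (rearrangement_le_iff.1 le_rfl))

lemma map_rearrangement [NullSingletonClass n] (m : Measure ℝ) [IsProbabilityMeasure m] :
    n.map (rearrangement n m) = m := by
  refine Measure.ext_of_Iic _ _ fun t => ?_
  rw [Measure.map_apply (monotone_rearrangement m).measurable measurableSet_Iic, ← ofReal_cdf m,
    ← measure_setOf_cdf_le n (cdf_nonneg m t) (cdf_le_one m t)]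
  congr 1
  ext s
  exact rearrangement_le_iff

lemma measurable_uncurry_rearrangement {Ω : Type*} [MeasurableSpace Ω] {m : Ω → Measure ℝ}
    (hm : Measurable m) [∀ ω, IsProbabilityMeasure (m ω)] :
    Measurable (Function.uncurry fun ω => rearrangement n (m ω)) := by
  refine measurable_of_Iic fun c => ?_
  have hpre : Function.uncurry (fun ω => rearrangement n (m ω)) ⁻¹' Iic c =
      {p : Ω × ℝ | n (Iic p.2) ≤ m p.1 (Iic c)} := by
    ext ⟨ω, s⟩
    simp only [mem_preimage, Function.uncurry_apply_pair, mem_Iic, rearrangement_le_iff,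
      mem_ofPred_eq]
    rw [← ofReal_cdf, ← ofReal_cdf, ENNReal.ofReal_le_ofReal_iff (cdf_nonneg _ _)]
  have hn : Measurable fun s => n (Iic s) :=
    Monotone.measurable fun _ _ hab => measure_mono (Iic_subset_Iic.2 hab)
  rw [hpre]
  exact measurableSet_le (hn.comp measurable_snd)
    (((Measure.measurable_coe measurableSet_Iic).comp hm).comp measurable_fst)

end

lemma ae_ne_zero_and_ne_top_of_map_eq_withDensity {α β : Type*} [MeasurableSpace α]
    [MeasurableSpace β] {μ : Measure α} {ν : Measure β} {S : α → β} (hS : Measurable S)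
    {g : β → ℝ≥0∞} (hg : Measurable g) (hg_int : ∫⁻ y, g y ∂ν ≠ ∞)
    (hmap : μ.map S = ν.withDensity g) : ∀ᵐ x ∂μ, g (S x) ≠ 0 ∧ g (S x) ≠ ∞ := by
  refine ae_of_ae_map hS.aemeasurable (p := fun y => g y ≠ 0 ∧ g y ≠ ∞) ?_
  rw [hmap, ae_withDensity_iff hg]
  exact (ae_lt_top hg hg_int).mono fun y hy h0 => ⟨h0, hy.ne⟩

section TransportDeriv

/-- The derivative of a monotone map `T` carrying the density `f` to the density `g`, read off from
the Jacobian equation `T' · (g ∘ T) = f`. -/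
noncomputable def transportDeriv (f g : ℝ → ℝ≥0∞) (T : ℝ → ℝ) (s : ℝ) : ℝ≥0∞ :=
  f s * (g (T s))⁻¹

variable {f g : ℝ → ℝ≥0∞} {T : ℝ → ℝ}

lemma isLowerDeriv_transportDeriv (hT : Monotone T) (hf : Measurable f) (hg : Measurable g)
    (hmap : (volume.withDensity f).map T = volume.withDensity g) :
    IsLowerDeriv T (transportDeriv f g T) := by
  refine ⟨hT, fun a b _ => ?_⟩
  have hTm : Measurable T := hT.measurable
  calc ∫⁻ s in Ioo a b, transportDeriv f g T s
      = ∫⁻ s in Ioo a b, (g (T s))⁻¹ ∂(volume.withDensity f) :=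
        (setLIntegral_withDensity_eq_setLIntegral_mul _ hf (by fun_prop) measurableSet_Ioo).symm
    _ ≤ ∫⁻ s in T ⁻¹' Icc (T a) (T b), (g (T s))⁻¹ ∂(volume.withDensity f) :=
        lintegral_mono_set fun _ hs => ⟨hT hs.1.le, hT hs.2.le⟩
    _ = ∫⁻ y in Icc (T a) (T b), (g y)⁻¹ ∂(volume.withDensity g) := by
        rw [← hmap]
        exact (setLIntegral_map measurableSet_Icc hg.inv hTm).symm
    _ = ∫⁻ y in Icc (T a) (T b), g y * (g y)⁻¹ :=
        setLIntegral_withDensity_eq_setLIntegral_mul _ hg hg.inv measurableSet_Icc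
    _ ≤ ∫⁻ _ in Icc (T a) (T b), 1 := lintegral_mono fun _ => ENNReal.mul_inv_le_one _
    _ = ENNReal.ofReal (T b - T a) := by simp

lemma ae_transportDeriv_mul (hT : Measurable T) (hg : Measurable g) (hg_int : ∫⁻ y, g y ≠ ∞)
    (hmap : (volume.withDensity f).map T = volume.withDensity g) :
    ∀ᵐ s ∂volume.withDensity f, transportDeriv f g T s * g (T s) = f s := by
  filter_upwards [ae_ne_zero_and_ne_top_of_map_eq_withDensity hT hg hg_int hmap] with s hs
  rw [transportDeriv, mul_assoc, ENNReal.inv_mul_cancel hs.1 hs.2, mul_one]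

end TransportDeriv

section GaussTransport

/-- The monotone map pushing the standard Gaussian to the measure with density `r` relative to
it. -/
noncomputable def gaussTransport (r : ℝ → ℝ≥0∞) : ℝ → ℝ :=
  rearrangement gauss (gauss.withDensity r)

/-- The derivative of `gaussTransport r`. -/
noncomputable def gaussTransportDeriv (r : ℝ → ℝ≥0∞) : ℝ → ℝ≥0∞ :=
  transportDeriv (gaussianPDF 0 1) (fun y => gaussianPDF 0 1 y * r y) (gaussTransport r)

lemma isProbabilityMeasure_withDensity_of_lintegral_eq_one {α : Type*} [MeasurableSpace α]
    {m : Measure α} {r : α → ℝ≥0∞} (hr1 : ∫⁻ s, r s ∂m = 1) :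
    IsProbabilityMeasure (m.withDensity r) :=
  ⟨by rw [withDensity_apply _ MeasurableSet.univ, setLIntegral_univ, hr1]⟩

lemma monotone_gaussTransport (r : ℝ → ℝ≥0∞) : Monotone (gaussTransport r) :=
  monotone_rearrangement _

lemma gauss_withDensity {r : ℝ → ℝ≥0∞} (hr : Measurable r) :
    gauss.withDensity r = volume.withDensity fun y => gaussianPDF 0 1 y * r y := by
  rw [gauss_eq_withDensity, ← withDensity_mul _ (measurable_gaussianPDF 0 1) hr]
  rfl

section

variable {r : ℝ → ℝ≥0∞} (hr : Measurable r) (hr1 : ∫⁻ s, r s ∂gauss = 1)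

include hr1 in
lemma map_gaussTransport : gauss.map (gaussTransport r) = gauss.withDensity r :=
  have := isProbabilityMeasure_withDensity_of_lintegral_eq_one hr1
  map_rearrangement _

include hr hr1

lemma map_gaussTransport_withDensity :
    (volume.withDensity (gaussianPDF 0 1)).map (gaussTransport r) =
      volume.withDensity fun y => gaussianPDF 0 1 y * r y := by
  rw [← gauss_eq_withDensity, map_gaussTransport hr1, gauss_withDensity hr]

lemma isLowerDeriv_gaussTransport : IsLowerDeriv (gaussTransport r) (gaussTransportDeriv r) :=
  isLowerDeriv_transportDeriv (monotone_gaussTransport r) (measurable_gaussianPDF 0 1)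
    ((measurable_gaussianPDF 0 1).mul hr) (map_gaussTransport_withDensity hr hr1)

lemma ae_gaussTransportDeriv_mul :
    ∀ᵐ s ∂gauss, gaussTransportDeriv r s *
      (gaussianPDF 0 1 (gaussTransport r s) * r (gaussTransport r s)) = gaussianPDF 0 1 s := by
  have hint : ∫⁻ y, gaussianPDF 0 1 y * r y ≠ ∞ := by
    rw [← setLIntegral_univ, ← withDensity_apply _ MeasurableSet.univ, ← gauss_withDensity hr,
      withDensity_apply _ MeasurableSet.univ, setLIntegral_univ, hr1]
    exact one_ne_top
  conv in ae gauss => rw [gauss_eq_withDensity]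
  exact ae_transportDeriv_mul (monotone_gaussTransport r).measurable
    ((measurable_gaussianPDF 0 1).mul hr) hint (map_gaussTransport_withDensity hr hr1)

end

section

variable {Ω : Type*} [MeasurableSpace Ω] {r : Ω → ℝ → ℝ≥0∞} (hr : Measurable (Function.uncurry r))
  (hr1 : ∀ ω, ∫⁻ s, r ω s ∂gauss = 1)

include hr hr1

lemma measurable_uncurry_gaussTransport :
    Measurable (Function.uncurry fun ω => gaussTransport (r ω)) := by
  have hprob := fun ω => isProbabilityMeasure_withDensity_of_lintegral_eq_one (hr1 ω)
  refine measurable_uncurry_rearrangement (Measure.measurable_of_measurable_coe _ fun s hs => ?_)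
  simp_rw [withDensity_apply _ hs]
  exact hr.lintegral_prod_right'

lemma measurable_uncurry_gaussTransportDeriv :
    Measurable (Function.uncurry fun ω => gaussTransportDeriv (r ω)) := by
  have hT := measurable_uncurry_gaussTransport hr hr1
  have hφ := measurable_gaussianPDF 0 1
  exact (hφ.comp measurable_snd).mul ((hφ.comp hT).mul (hr.comp (measurable_fst.prodMk hT))).inv

end

end GaussTransport

end Rearrangement

section CoordinateUpdate

section Pi

variable {ι : Type*} [Fintype ι] [DecidableEq ι] {X : ι → Type*} [∀ i, MeasurableSpace (X i)]
  (m : ∀ i, Measure (X i)) [∀ i, IsProbabilityMeasure (m i)]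

lemma measurePreserving_update (i : ι) :
    MeasurePreserving (fun p : (∀ j, X j) × X i => Function.update p.1 i p.2)
      ((Measure.pi m).prod (m i)) (Measure.pi m) := by
  refine ⟨measurable_update', (Measure.pi_eq fun s hs => ?_).symm⟩
  have hpre : (fun p : (∀ j, X j) × X i => Function.update p.1 i p.2) ⁻¹' univ.pi s =
      univ.pi (Function.update s i univ) ×ˢ s i := by
    ext ⟨x, t⟩
    simp only [mem_preimage, mem_univ_pi, mem_prod]
    refine ⟨fun h => ⟨fun j => ?_, by simpa using h i⟩, fun h j => ?_⟩ <;>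
      rcases eq_or_ne j i with rfl | hj
    · simp
    · simpa [hj] using h j
    · simpa using h.2
    · simpa [hj] using h.1 j
  rw [Measure.map_apply measurable_update' (MeasurableSet.univ_pi hs), hpre, Measure.prod_prod,
    Measure.pi_pi, ← Finset.mul_prod_erase _ _ (Finset.mem_univ i),
    ← Finset.mul_prod_erase _ (fun j => m j (s j)) (Finset.mem_univ i),
    Finset.prod_congr rfl fun j hj => by rw [Function.update_of_ne (Finset.ne_of_mem_erase hj)]]
  simp [mul_comm]

lemma lintegral_pi_update (i : ι) {h : (∀ j, X j) → ℝ≥0∞} (hh : Measurable h) :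
    ∫⁻ x, h x ∂Measure.pi m = ∫⁻ x, ∫⁻ t, h (Function.update x i t) ∂m i ∂Measure.pi m := by
  rw [← (measurePreserving_update m i).lintegral_comp hh]
  exact lintegral_prod _ (hh.comp measurable_update').aemeasurable

lemma integral_pi_update (i : ι) {h : (∀ j, X j) → ℝ} (hh : Integrable h (Measure.pi m)) :
    ∫ x, h x ∂Measure.pi m = ∫ x, ∫ t, h (Function.update x i t) ∂m i ∂Measure.pi m := by
  have hp := measurePreserving_update m i
  rw [← hp.hasLaw.integral_comp hh.aestronglyMeasurable]
  exact integral_prod _ (hp.integrable_comp_of_integrable hh)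

lemma integrable_integral_update (i : ι) {h : (∀ j, X j) → ℝ} (hh : Integrable h (Measure.pi m)) :
    Integrable (fun x => ∫ t, h (Function.update x i t) ∂m i) (Measure.pi m) :=
  ((measurePreserving_update m i).integrable_comp_of_integrable hh).integral_prod_left

lemma ae_ae_update (i : ι) {p : (∀ j, X j) → Prop} (hp : ∀ᵐ x ∂Measure.pi m, p x) :
    ∀ᵐ x ∂Measure.pi m, ∀ᵐ t ∂m i, p (Function.update x i t) :=
  Measure.ae_ae_of_ae_prod ((measurePreserving_update m i).quasiMeasurePreserving.ae hp)

lemma ae_memLp_two_update (i : ι) {f : (∀ j, X j) → ℝ} (hf : Measurable f)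
    (hf2 : MemLp f 2 (Measure.pi m)) :
    ∀ᵐ x ∂Measure.pi m, MemLp (fun t => f (Function.update x i t)) 2 (m i) := by
  have h := (measurePreserving_update m i).integrable_comp_of_integrable hf2.integrable_sq
  filter_upwards [h.prod_right_ae] with x hx
  exact (memLp_two_iff_integrable_sq
    (hf.comp (measurable_update x)).aestronglyMeasurable).2 hx

end Pi

section DependsOn

variable {ι : Type*} {X : ι → Type*} {β : Type*}

lemma dependsOn_update [DecidableEq ι] {f : (∀ i, X i) → β} {s : Set ι} (hf : DependsOn f s)
    (i : ι) (t : X i) : DependsOn (fun x => f (Function.update x i t)) (s \ {i}) := by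
  refine fun x y hxy => hf fun j hj => ?_
  rcases eq_or_ne j i with rfl | hji
  · simp
  · simpa [hji] using hxy j ⟨hj, hji⟩

variable [∀ i, MeasurableSpace (X i)] [MeasurableSpace β]

lemma exists_measurable_comp_restrict [Nonempty (∀ i, X i)] {f : (∀ i, X i) → β}
    (hf : Measurable f) {s : Finset ι} (hs : DependsOn f s) :
    ∃ g : (∀ i : s, X i) → β, Measurable g ∧ f = g ∘ fun x i => x i := by
  classical
  obtain ⟨x₀⟩ := ‹Nonempty (∀ i, X i)›
  refine ⟨fun y => f fun i => if h : i ∈ s then y ⟨i, h⟩ else x₀ i, hf.comp ?_, ?_⟩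
  · refine measurable_pi_lambda _ fun i => ?_
    by_cases h : i ∈ s
    · simpa [h] using measurable_pi_apply _
    · simp [h]
  · ext x
    refine hs fun i hi => ?_
    simp [Finset.mem_coe.1 hi]

lemma indepFun_of_dependsOn [Fintype ι] (m : ∀ i, Measure (X i)) [∀ i, IsProbabilityMeasure (m i)]
    {γ : Type*} [MeasurableSpace γ] {f : (∀ i, X i) → β} {g : (∀ i, X i) → γ} (hf : Measurable f)
    (hg : Measurable g) {s t : Set ι} (hs : DependsOn f s) (ht : DependsOn g t)
    (hst : Disjoint s t) : f ⟂ᵢ[Measure.pi m] g := by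
  classical
  have : Nonempty (∀ i, X i) := ⟨fun i => (nonempty_of_isProbabilityMeasure (m i)).some⟩
  obtain ⟨f', hf', rfl⟩ := exists_measurable_comp_restrict (s := s.toFinset) hf (by simpa)
  obtain ⟨g', hg', rfl⟩ := exists_measurable_comp_restrict (s := t.toFinset) hg (by simpa)
  exact ((iIndepFun_pi (μ := m) fun _ => aemeasurable_id).indepFun_finset s.toFinset t.toFinset
    (by simpa) fun i => measurable_pi_apply i).comp hf' hg'

end DependsOn

section Covariance

section

variable {ι : Type*} [DecidableEq ι] {X : ι → Type*} [∀ i, MeasurableSpace (X i)]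
  (m : ∀ i, Measure (X i)) {f : (∀ i, X i) → ℝ}

lemma dependsOn_integral_update {s : Set ι} (hs : DependsOn f s) (i : ι) :
    DependsOn (fun x => ∫ t, f (Function.update x i t) ∂m i) (s \ {i}) := fun _ _ hxy =>
  integral_congr_ae (ae_of_all _ fun t => dependsOn_update hs i t hxy)

lemma measurable_integral_update [∀ i, SFinite (m i)] (hf : Measurable f) (i : ι) :
    Measurable fun x => ∫ t, f (Function.update x i t) ∂m i :=
  (hf.comp measurable_update').stronglyMeasurable.integral_prod_right'.measurable

end

variable {ι : Type*} [Fintype ι] [DecidableEq ι] {X : ι → Type*} [∀ i, MeasurableSpace (X i)]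
  (m : ∀ i, Measure (X i)) [∀ i, IsProbabilityMeasure (m i)] {f g : (∀ i, X i) → ℝ}
  {s t : Set ι} {i : ι}

/-- The covariance of `f` and `g` when only the `i`-th coordinate is random. -/
noncomputable def updateCov (i : ι) (f g : (∀ i, X i) → ℝ) (x : ∀ i, X i) : ℝ :=
  cov[fun t => f (Function.update x i t), fun t => g (Function.update x i t); m i]

variable (hf : Measurable f) (hg : Measurable g) (hs : DependsOn f s) (ht : DependsOn g t)
  (hst : s ∩ t ⊆ {i}) (hf2 : MemLp f 2 (Measure.pi m)) (hg2 : MemLp g 2 (Measure.pi m))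

include hf hg hs ht hst in
lemma indepFun_integral_update :
    (fun x => ∫ u, f (Function.update x i u) ∂m i) ⟂ᵢ[Measure.pi m]
      fun x => ∫ u, g (Function.update x i u) ∂m i :=
  indepFun_of_dependsOn m (measurable_integral_update m hf i) (measurable_integral_update m hg i)
    (dependsOn_integral_update m hs i) (dependsOn_integral_update m ht i)
    (disjoint_left.2 fun _ hj hj' => hj.2 (hst ⟨hj.1, hj'.1⟩))

include hf hg hf2 hg2 in
lemma updateCov_ae_eq : updateCov m i f g =ᵐ[Measure.pi m] fun x =>
    ∫ t, f (Function.update x i t) * g (Function.update x i t) ∂m i -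
      (∫ t, f (Function.update x i t) ∂m i) * ∫ t, g (Function.update x i t) ∂m i := by
  filter_upwards [ae_memLp_two_update m i hf hf2, ae_memLp_two_update m i hg hg2] with x hx hx'
  exact covariance_eq_sub hx hx'

include hf hg hs ht hst hf2 hg2

lemma integrable_updateCov : Integrable (updateCov m i f g) (Measure.pi m) := by
  have hfg := integrable_integral_update m i (hf2.integrable_mul hg2)
  have hind := indepFun_integral_update m hf hg hs ht hst
  exact (hfg.sub (hind.integrable_mul
    (integrable_integral_update m i (hf2.integrable one_le_two))
    (integrable_integral_update m i (hg2.integrable one_le_two)))).congr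
    (updateCov_ae_eq m hf hg hf2 hg2).symm

-- The conditional means of `f` and `g` are independent, so they do not contribute.
lemma integral_updateCov : ∫ x, updateCov m i f g x ∂Measure.pi m = cov[f, g; Measure.pi m] := by
  have hf1 := hf2.integrable one_le_two
  have hg1 := hg2.integrable one_le_two
  have hfg : Integrable (fun x => f x * g x) (Measure.pi m) := hf2.integrable_mul hg2
  have hf1' := integrable_integral_update m i hf1
  have hg1' := integrable_integral_update m i hg1
  have hind := indepFun_integral_update m hf hg hs ht hst
  have hmul : Integrable (fun x => (∫ t, f (Function.update x i t) ∂m i) *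
      ∫ t, g (Function.update x i t) ∂m i) (Measure.pi m) := hind.integrable_mul hf1' hg1'
  rw [integral_congr_ae (updateCov_ae_eq m hf hg hf2 hg2),
    integral_sub (integrable_integral_update m i hfg) hmul,
    hind.integral_fun_mul_eq_mul_integral hf1'.1 hg1'.1, ← integral_pi_update m i hf1,
    ← integral_pi_update m i hg1, ← integral_pi_update m i hfg, covariance_eq_sub hf2 hg2]
  rfl

end Covariance

end CoordinateUpdate

section PartialLowerDeriv

/-- The standard Gaussian measure on `ι → ℝ`. -/
noncomputable abbrev gaussPi (ι : Type*) [Fintype ι] : Measure (ι → ℝ) :=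
  Measure.pi fun _ => gauss

/-- The self-coupling of `gaussPi ι` made of independent copies of `bridge`. -/
noncomputable abbrev bridgePi (ι : Type*) [Fintype ι] : Measure (ι → ℝ × ℝ) :=
  Measure.pi fun _ => bridge

section Bridge

variable {ι : Type*} [Fintype ι]

lemma measurePreserving_fst_bridgePi :
    MeasurePreserving (fun (z : ι → ℝ × ℝ) j => (z j).1) (bridgePi ι) (gaussPi ι) :=
  measurePreserving_pi _ _ fun _ => ⟨measurable_fst, map_fst_bridge⟩

lemma measurePreserving_snd_bridgePi :
    MeasurePreserving (fun (z : ι → ℝ × ℝ) j => (z j).2) (bridgePi ι) (gaussPi ι) :=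
  measurePreserving_pi _ _ fun _ => ⟨measurable_snd, map_snd_bridge⟩

open Classical in
/-- The vector whose coordinates in `s` are first components, and whose other coordinates are
second components. -/
noncomputable def selectPair {α : Type*} (s : Set ι) (z : ι → α × α) (j : ι) : α :=
  if j ∈ s then (z j).1 else (z j).2

lemma measurePreserving_selectPair (s : Set ι) :
    MeasurePreserving (selectPair s) (bridgePi ι) (gaussPi ι) := by
  classical
  refine measurePreserving_pi (fun _ => bridge) (fun _ => gauss)
    (f := fun j p => if j ∈ s then p.1 else p.2) fun j => ?_
  by_cases h : j ∈ s
  · simpa [h] using ⟨measurable_fst, map_fst_bridge⟩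
  · simpa [h] using ⟨measurable_snd, map_snd_bridge⟩

end Bridge

/-- The product of two functions evaluated at the two components of a family of pairs. -/
noncomputable def pairMul {ι : Type*} (τ σ : (ι → ℝ) → ℝ≥0∞) (z : ι → ℝ × ℝ) : ℝ≥0∞ :=
  τ (fun j => (z j).1) * σ (fun j => (z j).2)

@[fun_prop]
lemma measurable_pairMul {ι : Type*} {τ σ : (ι → ℝ) → ℝ≥0∞} (hτ : Measurable τ)
    (hσ : Measurable σ) : Measurable (pairMul τ σ) := by
  unfold pairMul
  fun_prop

variable {ι : Type*} [DecidableEq ι] {i : ι} {s t : Set ι} {f g : (ι → ℝ) → ℝ}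
  {τ σ : (ι → ℝ) → ℝ≥0∞}

-- Off the index `i` the two functions see disjoint sets of coordinates, so a pair of vectors may
-- be merged into a single one.
lemma pairMul_update (hs : DependsOn τ s) (ht : DependsOn σ t) (hst : s ∩ t ⊆ {i})
    (z : ι → ℝ × ℝ) (q : ℝ × ℝ) :
    pairMul τ σ (Function.update z i q) = τ (Function.update (selectPair s z) i q.1) *
      σ (Function.update (selectPair s z) i q.2) := by
  refine congrArg₂ _ (hs fun j hj => ?_) (ht fun j hj => ?_)
  · rcases eq_or_ne j i with rfl | hji
    · simp
    · simp [hji, selectPair, hj]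
  · rcases eq_or_ne j i with rfl | hji
    · simp
    · simp [hji, selectPair, show j ∉ s from fun h => hji (hst ⟨h, hj⟩)]

/-- `f` is a measurable function of the coordinates in `s`, monotone in the `i`-th coordinate, and
its `i`-th partial derivative is bounded below by the measurable function `τ` of the same
coordinates. -/
structure HasPartialLowerDeriv (i : ι) (s : Set ι) (f : (ι → ℝ) → ℝ) (τ : (ι → ℝ) → ℝ≥0∞) :
    Prop where
  measurable : Measurable f
  measurable_deriv : Measurable τ
  dependsOn : DependsOn f s
  dependsOn_deriv : DependsOn τ s
  isLowerDeriv : ∀ x, IsLowerDeriv (fun u => f (Function.update x i u))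
    (fun u => τ (Function.update x i u))

namespace HasPartialLowerDeriv

variable [Fintype ι] (hf : HasPartialLowerDeriv i s f τ) (hg : HasPartialLowerDeriv i t g σ)
  (hst : s ∩ t ⊆ {i}) (hf2 : MemLp f 2 (gaussPi ι)) (hg2 : MemLp g 2 (gaussPi ι))

include hf hg hf2 hg2

lemma ae_updateCov_nonneg : ∀ᵐ x ∂gaussPi ι, 0 ≤ updateCov (fun _ => gauss) i f g x := by
  filter_upwards [ae_memLp_two_update (fun _ => gauss) i hf.measurable hf2,
    ae_memLp_two_update (fun _ => gauss) i hg.measurable hg2] with x hfx hgx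
  exact covariance_nonneg_of_monotone (hf.isLowerDeriv x).monotone (hg.isLowerDeriv x).monotone
    hfx hgx

lemma ae_lintegral_bridge_le_updateCov :
    ∀ᵐ x ∂gaussPi ι, ∫⁻ q, τ (Function.update x i q.1) * σ (Function.update x i q.2) ∂bridge ≤
      ENNReal.ofReal (updateCov (fun _ => gauss) i f g x) := by
  filter_upwards [ae_memLp_two_update (fun _ => gauss) i hf.measurable hf2,
    ae_memLp_two_update (fun _ => gauss) i hg.measurable hg2] with x hfx hgx
  exact (hf.isLowerDeriv x).lintegral_bridge_le_covariance (hg.isLowerDeriv x)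
    (hf.measurable_deriv.comp (measurable_update x))
    (hg.measurable_deriv.comp (measurable_update x)) hfx hgx

include hst

lemma covariance_nonneg : 0 ≤ cov[f, g; gaussPi ι] := by
  rw [← integral_updateCov (fun _ => gauss) hf.measurable hg.measurable hf.dependsOn hg.dependsOn
    hst hf2 hg2]
  exact integral_nonneg_of_ae (ae_updateCov_nonneg hf hg hf2 hg2)

lemma lintegral_pairMul_le_covariance :
    ∫⁻ z, pairMul τ σ z ∂bridgePi ι ≤ ENNReal.ofReal cov[f, g; gaussPi ι] := by
  have hint := integrable_updateCov (fun _ => gauss) hf.measurable hg.measurable hf.dependsOn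
    hg.dependsOn hst hf2 hg2
  have hsel := measurePreserving_selectPair s
  calc ∫⁻ z, pairMul τ σ z ∂bridgePi ι
      = ∫⁻ z, ∫⁻ q, τ (Function.update (selectPair s z) i q.1) *
          σ (Function.update (selectPair s z) i q.2) ∂bridge ∂bridgePi ι := by
        rw [lintegral_pi_update (fun _ => bridge) i
          (measurable_pairMul hf.measurable_deriv hg.measurable_deriv)]
        simp only [pairMul_update hf.dependsOn_deriv hg.dependsOn_deriv hst]
    _ ≤ ∫⁻ z, ENNReal.ofReal (updateCov (fun _ => gauss) i f g (selectPair s z)) ∂bridgePi ι :=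
        lintegral_mono_ae
          (hsel.quasiMeasurePreserving.ae (ae_lintegral_bridge_le_updateCov hf hg hf2 hg2))
    _ = ∫⁻ x, ENNReal.ofReal (updateCov (fun _ => gauss) i f g x) ∂gaussPi ι :=
        hsel.hasLaw.lintegral_comp hint.1.aemeasurable.ennreal_ofReal
    _ = ENNReal.ofReal cov[f, g; gaussPi ι] := by
        rw [← ofReal_integral_eq_lintegral_ofReal hint (ae_updateCov_nonneg hf hg hf2 hg2),
          integral_updateCov (fun _ => gauss) hf.measurable hg.measurable hf.dependsOn
            hg.dependsOn hst hf2 hg2]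

variable (hmul : ∀ᵐ z ∂bridgePi ι, pairMul τ σ z = 1)

include hmul

lemma ae_one_le_updateCov :
    ∀ᵐ z ∂bridgePi ι, 1 ≤ updateCov (fun _ => gauss) i f g (selectPair s z) := by
  filter_upwards [ae_ae_update (fun _ => bridge) i hmul,
    (measurePreserving_selectPair s).quasiMeasurePreserving.ae
      (ae_lintegral_bridge_le_updateCov hf hg hf2 hg2)] with z hz hle
  simp only [pairMul_update hf.dependsOn_deriv hg.dependsOn_deriv hst] at hz
  rw [lintegral_congr_ae hz] at hle
  simpa using hle

lemma exists_ae_eq_affine_update (hcov : cov[f, g; gaussPi ι] ≤ 1) :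
    ∃ (x : ι → ℝ) (c b : ℝ), 0 < c ∧ ∀ᵐ u ∂gauss, f (Function.update x i u) = c * u + b := by
  have hsel := measurePreserving_selectPair s
  have hint := integrable_updateCov (fun _ => gauss) hf.measurable hg.measurable hf.dependsOn
    hg.dependsOn hst hf2 hg2
  have hint' := hsel.integrable_comp_of_integrable hint
  obtain ⟨z, hz, hfz, hgz, hzcov⟩ : ∃ z, (∀ᵐ q ∂bridge, pairMul τ σ (Function.update z i q) = 1) ∧
      MemLp (fun u => f (Function.update (selectPair s z) i u)) 2 gauss ∧
      MemLp (fun u => g (Function.update (selectPair s z) i u)) 2 gauss ∧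
      updateCov (fun _ => gauss) i f g (selectPair s z) ≤ 1 := by
    have hge := ae_one_le_updateCov hf hg hst hf2 hg2 hmul
    have heq := (integral_eq_iff_of_ae_le (integrable_const 1) hint' hge).1 <|
      le_antisymm (integral_mono_ae (integrable_const 1) hint' hge) <| by
        rw [hsel.hasLaw.integral_comp hint.1, integral_updateCov (fun _ => gauss) hf.measurable
          hg.measurable hf.dependsOn hg.dependsOn hst hf2 hg2]
        simpa using hcov
    exact ((ae_ae_update (fun _ => bridge) i hmul).and
      ((hsel.quasiMeasurePreserving.ae
        (ae_memLp_two_update (fun _ => gauss) i hf.measurable hf2)).and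
      ((hsel.quasiMeasurePreserving.ae
        (ae_memLp_two_update (fun _ => gauss) i hg.measurable hg2)).and
      (heq.mono fun z hz => hz.ge)))).exists
  simp only [pairMul_update hf.dependsOn_deriv hg.dependsOn_deriv hst] at hz
  exact ⟨_, (hf.isLowerDeriv _).ae_eq_affine_gauss (hg.isLowerDeriv _) hfz hgz
    (volume_absolutelyContinuous_bridge.ae_le hz) hzcov⟩

end HasPartialLowerDeriv

end PartialLowerDeriv

section Knothe

lemma map_withDensity_comp {α β : Type*} [MeasurableSpace α] [MeasurableSpace β] {μ : Measure α}
    {ν : Measure β} {e : α → β} (he : MeasurePreserving e μ ν) {f : β → ℝ≥0∞} (hf : Measurable f) :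
    (μ.withDensity (f ∘ e)).map e = ν.withDensity f := by
  ext s hs
  rw [Measure.map_apply he.measurable hs, withDensity_apply _ (he.measurable hs),
    withDensity_apply _ hs]
  exact he.setLIntegral_comp_preimage hs hf

section SkewTransport

variable {Ω : Type*}

/-- The first marginal of a density `g` relative to the product of a measure and `gauss`. -/
noncomputable def marginalDensity (g : Ω × ℝ → ℝ≥0∞) (w : Ω) : ℝ≥0∞ :=
  ∫⁻ s, g (w, s) ∂gauss

open Classical in
/-- The conditional density of the second variable given the first one. Where the marginal vanishes
or is infinite it is set to `1`, so that it is a probability density for every `w`. -/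
noncomputable def condDensity (g : Ω × ℝ → ℝ≥0∞) (w : Ω) (s : ℝ) : ℝ≥0∞ :=
  if marginalDensity g w ≠ 0 ∧ marginalDensity g w ≠ ∞ then g (w, s) / marginalDensity g w else 1

lemma lintegral_condDensity (g : Ω × ℝ → ℝ≥0∞) (w : Ω) : ∫⁻ s, condDensity g w s ∂gauss = 1 := by
  by_cases h : marginalDensity g w ≠ 0 ∧ marginalDensity g w ≠ ∞
  · simp only [condDensity, if_pos h, div_eq_mul_inv]
    rw [lintegral_mul_const' _ _ (ENNReal.inv_ne_top.2 h.1)]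
    exact ENNReal.mul_inv_cancel h.1 h.2
  · simp [condDensity, if_neg h]

lemma marginalDensity_mul_condDensity {g : Ω × ℝ → ℝ≥0∞} {w : Ω} (h0 : marginalDensity g w ≠ 0)
    (htop : marginalDensity g w ≠ ∞) (s : ℝ) :
    marginalDensity g w * condDensity g w s = g (w, s) := by
  rw [condDensity, if_pos ⟨h0, htop⟩, ENNReal.mul_div_cancel h0 htop]

/-- The map acting as `S` on the first variable and transporting `gauss` to the conditional density
`condDensity g (S w)` on the second one. -/
noncomputable def skewTransport (g : Ω × ℝ → ℝ≥0∞) (S : Ω → Ω) (p : Ω × ℝ) : Ω × ℝ :=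
  (S p.1, gaussTransport (condDensity g (S p.1)) p.2)

variable [MeasurableSpace Ω] {g : Ω × ℝ → ℝ≥0∞} (hg : Measurable g)

include hg

lemma measurable_marginalDensity : Measurable (marginalDensity g) :=
  hg.lintegral_prod_right'

lemma measurable_uncurry_condDensity : Measurable (Function.uncurry (condDensity g)) := by
  have hm := measurable_marginalDensity hg
  have hset : MeasurableSet {w | marginalDensity g w ≠ 0 ∧ marginalDensity g w ≠ ∞} :=
    (hm (measurableSet_singleton 0)).compl.inter (hm (measurableSet_singleton ∞)).compl
  exact Measurable.ite (measurable_fst hset) (hg.div (hm.comp measurable_fst)) measurable_const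

lemma measurable_uncurry_gaussTransport_condDensity :
    Measurable (Function.uncurry fun w => gaussTransport (condDensity g w)) :=
  measurable_uncurry_gaussTransport (measurable_uncurry_condDensity hg) (lintegral_condDensity g)

lemma lintegral_marginalDensity_mul_condDensity {w : Ω} (hw : marginalDensity g w ≠ ∞)
    (h : ℝ → ℝ≥0∞) (hh : Measurable h) :
    marginalDensity g w * ∫⁻ s, condDensity g w s * h s ∂gauss =
      ∫⁻ s, g (w, s) * h s ∂gauss := by
  by_cases h0 : marginalDensity g w = 0
  · have hz : ∀ᵐ s ∂gauss, g (w, s) = 0 :=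
      (lintegral_eq_zero_iff (hg.comp measurable_prodMk_left)).1 h0
    rw [h0, zero_mul, lintegral_congr_ae (hz.mono fun s hs => by rw [hs, zero_mul]),
      lintegral_zero]
  · have hch : Measurable fun s => condDensity g w s * h s :=
      (measurable_uncurry_condDensity hg).of_uncurry_left.mul hh
    simp_rw [← lintegral_const_mul _ hch, ← mul_assoc, marginalDensity_mul_condDensity h0 hw]

variable {S : Ω → Ω} (hS : Measurable S)

include hS

lemma measurable_gaussTransport_condDensity :
    Measurable fun p : Ω × ℝ => gaussTransport (condDensity g (S p.1)) p.2 :=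
  (measurable_uncurry_gaussTransport_condDensity hg).comp
    ((hS.comp measurable_fst).prodMk measurable_snd)

lemma measurable_skewTransport : Measurable (skewTransport g S) :=
  (hS.comp measurable_fst).prodMk (measurable_gaussTransport_condDensity hg hS)

lemma measurable_gaussTransportDeriv_condDensity :
    Measurable fun p : Ω × ℝ => gaussTransportDeriv (condDensity g (S p.1)) p.2 :=
  (measurable_uncurry_gaussTransportDeriv (measurable_uncurry_condDensity hg)
    (lintegral_condDensity g)).comp ((hS.comp measurable_fst).prodMk measurable_snd)

variable {P : Measure Ω}
  (hg_int : ∫⁻ w, marginalDensity g w ∂P ≠ ∞)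
  (hmap : P.map S = P.withDensity (marginalDensity g))

include hg_int hmap

lemma map_skewTransport :
    (P.prod gauss).map (skewTransport g S) = (P.prod gauss).withDensity g := by
  have ht := measurable_uncurry_gaussTransport_condDensity hg
  have hm := measurable_marginalDensity hg
  have hskew := measurable_skewTransport hg hS
  refine Measure.ext_of_lintegral _ fun h hh => ?_
  have hinner : Measurable fun w => ∫⁻ s, h (w, gaussTransport (condDensity g w) s) ∂gauss :=
    Measurable.lintegral_prod_right' (f := fun p : Ω × ℝ =>
      h (p.1, gaussTransport (condDensity g p.1) p.2)) (hh.comp (measurable_fst.prodMk ht))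
  calc ∫⁻ p, h p ∂(P.prod gauss).map (skewTransport g S)
      = ∫⁻ w, ∫⁻ s, h (S w, gaussTransport (condDensity g (S w)) s) ∂gauss ∂P := by
        rw [lintegral_map hh hskew]
        exact lintegral_prod _ (hh.comp hskew).aemeasurable
    _ = ∫⁻ w, ∫⁻ s, h (w, gaussTransport (condDensity g w) s) ∂gauss ∂(P.map S) :=
        (lintegral_map hinner hS).symm
    _ = ∫⁻ w, marginalDensity g w * ∫⁻ s, h (w, gaussTransport (condDensity g w) s) ∂gauss ∂P := by
        rw [hmap]
        exact lintegral_withDensity_eq_lintegral_mul _ hm hinner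
    _ = ∫⁻ w, ∫⁻ s, g (w, s) * h (w, s) ∂gauss ∂P := by
        refine lintegral_congr_ae ((ae_lt_top hm hg_int).mono fun w hw => ?_)
        have hhw : Measurable fun s => h (w, s) := hh.comp measurable_prodMk_left
        dsimp only
        rw [← lintegral_map hhw (monotone_gaussTransport _).measurable,
          map_gaussTransport (lintegral_condDensity g w), lintegral_withDensity_eq_lintegral_mul _
            (measurable_uncurry_condDensity hg).of_uncurry_left hhw]
        exact lintegral_marginalDensity_mul_condDensity hg hw.ne _ hhw
    _ = ∫⁻ p, h p ∂(P.prod gauss).withDensity g := by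
        rw [lintegral_withDensity_eq_lintegral_mul _ hg hh]
        exact (lintegral_prod _ (hg.mul hh).aemeasurable).symm

lemma ae_gaussTransportDeriv_condDensity_mul [SFinite P] :
    ∀ᵐ p ∂P.prod gauss, gaussTransportDeriv (condDensity g (S p.1)) p.2 *
      (gaussianPDF 0 1 (skewTransport g S p).2 * g (skewTransport g S p)) =
        gaussianPDF 0 1 p.2 * marginalDensity g (S p.1) := by
  have hφ := measurable_gaussianPDF 0 1
  have hskew := measurable_skewTransport hg hS
  refine (Measure.ae_prod_iff_ae_ae (measurableSet_eq_fun
    ((measurable_gaussTransportDeriv_condDensity hg hS).mul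
      ((hφ.comp (measurable_snd.comp hskew)).mul (hg.comp hskew)))
    ((hφ.comp measurable_snd).mul
      ((measurable_marginalDensity hg).comp (hS.comp measurable_fst))))).2 ?_
  filter_upwards [ae_ne_zero_and_ne_top_of_map_eq_withDensity hS (measurable_marginalDensity hg)
    hg_int hmap] with w hw
  filter_upwards [ae_gaussTransportDeriv_mul
    (measurable_uncurry_condDensity hg).of_uncurry_left (lintegral_condDensity g (S w))] with s hs
  change gaussTransportDeriv (condDensity g (S w)) s *
    (gaussianPDF 0 1 (gaussTransport (condDensity g (S w)) s) *
      g (S w, gaussTransport (condDensity g (S w)) s)) = gaussianPDF 0 1 s * marginalDensity g (S w)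
  rw [← hs, ← marginalDensity_mul_condDensity hw.1 hw.2]
  ring

end SkewTransport

/-- `T` is a Knothe map from `gaussPi ι` to the measure with density `f` relative to it: its `i`-th
component depends on the coordinates in `s i` and is increasing in the `i`-th one. The vector `τ` is
the diagonal of its Jacobian matrix, whose product is the Jacobian determinant. -/
structure IsKnothe {ι : Type*} [Fintype ι] [DecidableEq ι] (s : ι → Set ι) (f : (ι → ℝ) → ℝ≥0∞)
    (T : (ι → ℝ) → ι → ℝ) (τ : (ι → ℝ) → ι → ℝ≥0∞) : Prop where
  hasPartialLowerDeriv : ∀ i, HasPartialLowerDeriv i (s i) (fun x => T x i) (fun x => τ x i)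
  map_eq : (gaussPi ι).map T = (gaussPi ι).withDensity f
  jacobian : ∀ᵐ x ∂gaussPi ι, (∏ i, τ x i) * ((∏ i, gaussianPDF 0 1 (T x i)) * f (T x)) =
    ∏ i, gaussianPDF 0 1 (x i)

lemma IsKnothe.measurable {ι : Type*} [Fintype ι] [DecidableEq ι] {s : ι → Set ι}
    {f : (ι → ℝ) → ℝ≥0∞} {T : (ι → ℝ) → ι → ℝ} {τ : (ι → ℝ) → ι → ℝ≥0∞}
    (hT : IsKnothe s f T τ) : Measurable T :=
  measurable_pi_lambda _ fun i => (hT.hasPartialLowerDeriv i).measurable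

section InsertNth

variable {n : ℕ} (p : Fin (n + 1))

/-- Insertion of a coordinate at position `p`. -/
def insertNthEquiv : (Fin n → ℝ) × ℝ ≃ᵐ (Fin (n + 1) → ℝ) :=
  MeasurableEquiv.prodComm.trans (MeasurableEquiv.piFinSuccAbove (fun _ => ℝ) p).symm

lemma measurePreserving_insertNthEquiv_symm :
    MeasurePreserving (insertNthEquiv p).symm (gaussPi (Fin (n + 1)))
      ((gaussPi (Fin n)).prod gauss) :=
  Measure.measurePreserving_swap.comp (measurePreserving_piFinSuccAbove (fun _ => gauss) p)

lemma measurePreserving_insertNthEquiv :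
    MeasurePreserving (insertNthEquiv p) ((gaussPi (Fin n)).prod gauss)
      (gaussPi (Fin (n + 1))) :=
  (measurePreserving_insertNthEquiv_symm p).symm (insertNthEquiv p).symm

variable {f : (Fin (n + 1) → ℝ) → ℝ≥0∞} {T : (Fin n → ℝ) → Fin n → ℝ}
  {τ : (Fin n → ℝ) → Fin n → ℝ≥0∞}

lemma lintegral_marginalDensity_insertNthEquiv (hf : Measurable f) :
    ∫⁻ w, marginalDensity (f ∘ insertNthEquiv p) w ∂gaussPi (Fin n) =
      ∫⁻ x, f x ∂gaussPi (Fin (n + 1)) := by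
  rw [← (measurePreserving_insertNthEquiv p).lintegral_comp hf]
  exact (lintegral_prod _ (hf.comp (insertNthEquiv p).measurable).aemeasurable).symm

variable (f T τ) in
/-- The extension of a Knothe map `T` for the marginal of `f` to a Knothe map for `f`, whose new
component at `p` is the transport to the conditional density. -/
noncomputable def knotheExtend (x : Fin (n + 1) → ℝ) : Fin (n + 1) → ℝ :=
  insertNthEquiv p (skewTransport (f ∘ insertNthEquiv p) T ((insertNthEquiv p).symm x))

variable (f T τ) in
/-- The diagonal Jacobian of `knotheExtend`. -/
noncomputable def knotheExtendDeriv (x : Fin (n + 1) → ℝ) : Fin (n + 1) → ℝ≥0∞ :=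
  p.insertNth (α := fun _ => ℝ≥0∞)
    (gaussTransportDeriv (condDensity (f ∘ insertNthEquiv p) (T (p.removeNth x))) (x p))
    (τ (p.removeNth x))

lemma knotheExtend_apply_same (x : Fin (n + 1) → ℝ) : knotheExtend p f T x p =
    gaussTransport (condDensity (f ∘ insertNthEquiv p) (T (p.removeNth x))) (x p) :=
  Fin.insertNth_apply_same (α := fun _ => ℝ) ..

lemma knotheExtend_apply_succAbove (x : Fin (n + 1) → ℝ) (j : Fin n) :
    knotheExtend p f T x (p.succAbove j) = T (p.removeNth x) j :=
  Fin.insertNth_apply_succAbove (α := fun _ => ℝ) ..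

lemma measurable_removeNth : Measurable fun x : Fin (n + 1) → ℝ => p.removeNth x :=
  measurable_pi_lambda _ fun j => measurable_pi_apply (p.succAbove j)

variable {p} in
lemma dependsOn_comp_removeNth {β : Type*} {h : (Fin n → ℝ) → β} {s : Set (Fin n)}
    (hh : DependsOn h s) :
    DependsOn (fun x : Fin (n + 1) → ℝ => h (p.removeNth x)) (p.succAbove '' s) :=
  fun _ _ hxy => hh fun j hj => hxy _ ⟨j, hj, rfl⟩

variable {p} {s : Fin n → Set (Fin n)}
  (hT : IsKnothe s (marginalDensity (f ∘ insertNthEquiv p)) T τ) (hf : Measurable f)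

include hT

lemma IsKnothe.hasPartialLowerDeriv_knotheExtend_succAbove (j : Fin n) :
    HasPartialLowerDeriv (p.succAbove j) (p.succAbove '' s j)
      (fun x => knotheExtend p f T x (p.succAbove j))
      (fun x => knotheExtendDeriv p f T τ x (p.succAbove j)) := by
  have hj := hT.hasPartialLowerDeriv j
  have hr := measurable_removeNth p
  simp only [knotheExtend_apply_succAbove, knotheExtendDeriv, Fin.insertNth_apply_succAbove]
  exact ⟨hj.measurable.comp hr, hj.measurable_deriv.comp hr, dependsOn_comp_removeNth hj.dependsOn,
    dependsOn_comp_removeNth hj.dependsOn_deriv, fun x => by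
      simpa only [Fin.removeNth_update_succAbove] using hj.isLowerDeriv (p.removeNth x)⟩

include hf

lemma IsKnothe.hasPartialLowerDeriv_knotheExtend_same :
    HasPartialLowerDeriv p univ (fun x => knotheExtend p f T x p)
      (fun x => knotheExtendDeriv p f T τ x p) := by
  have hg : Measurable (f ∘ insertNthEquiv p) := hf.comp (insertNthEquiv p).measurable
  have hr := (measurable_removeNth p).prodMk (measurable_pi_apply p)
  simp only [knotheExtend_apply_same, knotheExtendDeriv, Fin.insertNth_apply_same]
  have hmap := (measurable_gaussTransport_condDensity hg hT.measurable).comp hr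
  have hderiv := (measurable_gaussTransportDeriv_condDensity hg hT.measurable).comp hr
  refine ⟨hmap, hderiv, dependsOn_univ _, dependsOn_univ _, fun x => ?_⟩
  simp only [Fin.removeNth_update, Function.update_self]
  exact isLowerDeriv_gaussTransport (measurable_uncurry_condDensity hg).of_uncurry_left
    (lintegral_condDensity _ _)

variable (hf_int : ∫⁻ x, f x ∂gaussPi (Fin (n + 1)) ≠ ∞)

include hf_int

lemma IsKnothe.map_knotheExtend :
    (gaussPi (Fin (n + 1))).map (knotheExtend p f T) = (gaussPi (Fin (n + 1))).withDensity f := by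
  have hg : Measurable (f ∘ insertNthEquiv p) := hf.comp (insertNthEquiv p).measurable
  have he := measurePreserving_insertNthEquiv p
  have hskew := measurable_skewTransport hg hT.measurable
  calc (gaussPi (Fin (n + 1))).map (knotheExtend p f T)
      = (((gaussPi (Fin (n + 1))).map (insertNthEquiv p).symm).map
          (skewTransport (f ∘ insertNthEquiv p) T)).map (insertNthEquiv p) := by
        rw [Measure.map_map hskew (insertNthEquiv p).symm.measurable,
          Measure.map_map (insertNthEquiv p).measurable
            (hskew.comp (insertNthEquiv p).symm.measurable)]
        rfl
    _ = (((gaussPi (Fin n)).prod gauss).withDensity (f ∘ insertNthEquiv p)).map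
          (insertNthEquiv p) := by
        rw [(measurePreserving_insertNthEquiv_symm p).map_eq,
          map_skewTransport hg hT.measurable
            (by rwa [lintegral_marginalDensity_insertNthEquiv p hf]) hT.map_eq]
    _ = (gaussPi (Fin (n + 1))).withDensity f := map_withDensity_comp he hf

lemma IsKnothe.jacobian_knotheExtend :
    ∀ᵐ x ∂gaussPi (Fin (n + 1)), (∏ i, knotheExtendDeriv p f T τ x i) *
      ((∏ i, gaussianPDF 0 1 (knotheExtend p f T x i)) * f (knotheExtend p f T x)) =
        ∏ i, gaussianPDF 0 1 (x i) := by
  have hg : Measurable (f ∘ insertNthEquiv p) := hf.comp (insertNthEquiv p).measurable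
  have he := (measurePreserving_insertNthEquiv_symm p).quasiMeasurePreserving
  filter_upwards [he.ae (Measure.quasiMeasurePreserving_fst.ae hT.jacobian),
    he.ae (ae_gaussTransportDeriv_condDensity_mul hg hT.measurable
      (by rwa [lintegral_marginalDensity_insertNthEquiv p hf]) hT.map_eq)] with x hw hs
  change (∏ i, τ (p.removeNth x) i) * ((∏ i, gaussianPDF 0 1 (T (p.removeNth x) i)) *
    marginalDensity (f ∘ insertNthEquiv p) (T (p.removeNth x))) =
      ∏ i, gaussianPDF 0 1 (x (p.succAbove i)) at hw
  change gaussTransportDeriv (condDensity (f ∘ insertNthEquiv p) (T (p.removeNth x))) (x p) *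
    (gaussianPDF 0 1 (gaussTransport (condDensity (f ∘ insertNthEquiv p) (T (p.removeNth x))) (x p))
      * f (knotheExtend p f T x)) = gaussianPDF 0 1 (x p) *
        marginalDensity (f ∘ insertNthEquiv p) (T (p.removeNth x)) at hs
  simp only [Fin.prod_univ_succAbove _ p, knotheExtendDeriv, Fin.insertNth_apply_same,
    Fin.insertNth_apply_succAbove, knotheExtend_apply_same, knotheExtend_apply_succAbove]
  calc _ = (∏ i, τ (p.removeNth x) i) * (∏ i, gaussianPDF 0 1 (T (p.removeNth x) i)) *
        (gaussTransportDeriv (condDensity (f ∘ insertNthEquiv p) (T (p.removeNth x))) (x p) *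
          (gaussianPDF 0 1 (gaussTransport (condDensity (f ∘ insertNthEquiv p)
            (T (p.removeNth x))) (x p)) * f (knotheExtend p f T x))) := by ring
    _ = _ := by rw [hs, ← hw]; ring

lemma IsKnothe.knotheExtend {s' : Fin (n + 1) → Set (Fin (n + 1))} (hp : s' p = univ)
    (hs : ∀ j, s' (p.succAbove j) = p.succAbove '' s j) :
    IsKnothe s' f (knotheExtend p f T) (knotheExtendDeriv p f T τ) where
  hasPartialLowerDeriv := (Fin.forall_iff_succAbove p).2
    ⟨hp ▸ hT.hasPartialLowerDeriv_knotheExtend_same hf,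
      fun j => hs j ▸ hT.hasPartialLowerDeriv_knotheExtend_succAbove j⟩
  map_eq := hT.map_knotheExtend hf hf_int
  jacobian := hT.jacobian_knotheExtend hf hf_int

end InsertNth

lemma exists_isKnothe_of_pivot (s : ∀ n, Fin n → Set (Fin n)) (p : ∀ n, Fin (n + 1))
    (hp : ∀ n, s (n + 1) (p n) = univ)
    (hs : ∀ n j, s (n + 1) ((p n).succAbove j) = (p n).succAbove '' s n j) {n : ℕ}
    {f : (Fin n → ℝ) → ℝ≥0∞} (hf : Measurable f) (hf1 : ∫⁻ x, f x ∂gaussPi (Fin n) = 1) :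
    ∃ T τ, IsKnothe (s n) f T τ := by
  induction n with
  | zero =>
    have hf_one : f = fun _ => 1 := by
      ext x
      rw [← hf1, lintegral_unique, measure_univ, mul_one]
      exact congrArg f (Subsingleton.elim _ _)
    exact ⟨id, fun _ _ => 1, fun i => i.elim0, by simp [hf_one], by simp [hf_one]⟩
  | succ n ih =>
    have hint := lintegral_marginalDensity_insertNthEquiv (p n) hf
    obtain ⟨T, τ, hT⟩ := ih
      (measurable_marginalDensity (hf.comp (insertNthEquiv (p n)).measurable)) (hint.trans hf1)
    exact ⟨_, _, hT.knotheExtend hf (hf1 ▸ one_ne_top) (hp n) (hs n)⟩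

variable {n : ℕ} {f : (Fin n → ℝ) → ℝ≥0∞} (hf : Measurable f)
  (hf1 : ∫⁻ x, f x ∂gaussPi (Fin n) = 1)

include hf hf1

lemma exists_isKnothe_Ici : ∃ T τ, IsKnothe Ici f T τ :=
  exists_isKnothe_of_pivot (fun _ => Ici) (fun _ => 0) (fun _ => Ici_bot)
    (fun _ j => by simp) hf hf1

lemma exists_isKnothe_Iic : ∃ T τ, IsKnothe Iic f T τ :=
  exists_isKnothe_of_pivot (fun _ => Iic) Fin.last (fun _ => Iic_top)
    (fun _ j => by simp) hf hf1

end Knothe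

section Equality

section LogSum

variable {ι : Type*} [Fintype ι]

lemma card_add_sum_log_le_sum {x : ι → ℝ} (hx : ∀ i, 0 < x i) :
    Fintype.card ι + ∑ i, Real.log (x i) ≤ ∑ i, x i := by
  have h := Finset.sum_le_sum fun i (_ : i ∈ Finset.univ) => Real.log_le_sub_one_of_pos (hx i)
  simp only [Finset.sum_sub_distrib, Finset.sum_const, Finset.card_univ, nsmul_eq_mul,
    mul_one] at h
  linarith

lemma eq_one_of_sum_le_card_add_sum_log {x : ι → ℝ} (hx : ∀ i, 0 < x i)
    (h : ∑ i, x i ≤ Fintype.card ι + ∑ i, Real.log (x i)) (i : ι) : x i = 1 := by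
  have hle := fun i (_ : i ∈ Finset.univ) => Real.log_le_sub_one_of_pos (hx i)
  have heq : ∑ i, Real.log (x i) = ∑ i, (x i - 1) := by
    refine le_antisymm (Finset.sum_le_sum hle) ?_
    simp only [Finset.sum_sub_distrib, Finset.sum_const, Finset.card_univ, nsmul_eq_mul, mul_one]
    linarith
  by_contra hne
  exact (Real.log_lt_sub_one_of_pos (hx i) hne).ne
    ((Finset.sum_eq_sum_iff_of_le hle).1 heq i (Finset.mem_univ i))

lemma ae_eq_one_of_sum_integral_le {Ω : Type*} [MeasurableSpace Ω] {P : Measure Ω}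
    [IsProbabilityMeasure P] {r : ι → Ω → ℝ} (hr : ∀ i, Integrable (r i) P)
    (hpos : ∀ᵐ z ∂P, ∀ i, 0 < r i z) (hlog : Integrable (fun z => ∑ i, Real.log (r i z)) P)
    (h : ∑ i, ∫ z, r i z ∂P ≤ Fintype.card ι + ∫ z, ∑ i, Real.log (r i z) ∂P) :
    ∀ᵐ z ∂P, ∀ i, r i z = 1 := by
  have hle : (fun z => Fintype.card ι + ∑ i, Real.log (r i z)) ≤ᵐ[P] fun z => ∑ i, r i z :=
    hpos.mono fun z hz => card_add_sum_log_le_sum hz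
  have hleft := (integrable_const (Fintype.card ι : ℝ)).add hlog
  have hright : Integrable (fun z => ∑ i, r i z) P := integrable_finsetSum _ fun i _ => hr i
  have heq := (integral_eq_iff_of_ae_le hleft hright hle).1 <|
    le_antisymm (integral_mono_ae hleft hright hle) <| by
      rw [integral_finsetSum _ fun i _ => hr i, integral_add' (integrable_const _) hlog]
      simpa using h
  filter_upwards [hpos, heq] with z hz hzeq
  exact eq_one_of_sum_le_card_add_sum_log hz hzeq.ge

end LogSum

section LogJacobian

variable {ι : Type*} [Fintype ι]

lemma log_gaussianPDFReal (x : ℝ) :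
    Real.log (gaussianPDFReal 0 1 x) = Real.log (√(2 * Real.pi))⁻¹ - x ^ 2 / 2 := by
  rw [gaussianPDFReal_zero_one, Real.log_mul (by positivity) (Real.exp_pos _).ne', Real.log_exp]
  ring

section

variable {t : ι → ℝ≥0∞} {y x : ι → ℝ} {r : ℝ≥0∞}
  (h : (∏ i, t i) * ((∏ i, gaussianPDF 0 1 (y i)) * r) = ∏ i, gaussianPDF 0 1 (x i))

include h

lemma prod_toReal_mul_eq_prod_gaussianPDFReal :
    (∏ i, (t i).toReal) * ((∏ i, gaussianPDFReal 0 1 (y i)) * r.toReal) =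
      ∏ i, gaussianPDFReal 0 1 (x i) := by
  simpa only [ENNReal.toReal_mul, ENNReal.toReal_prod, toReal_gaussianPDF] using
    congrArg ENNReal.toReal h

lemma toReal_pos_of_prod_mul_eq (i : ι) : 0 < (t i).toReal := by
  refine ENNReal.toReal_nonneg.lt_of_ne' fun h0 => ?_
  have h' := prod_toReal_mul_eq_prod_gaussianPDFReal h
  rw [Finset.prod_eq_zero (Finset.mem_univ i) h0, zero_mul] at h'
  exact Finset.prod_ne_zero_iff.2
    (fun i _ => (gaussianPDFReal_pos 0 1 (x i) one_ne_zero).ne') h'.symm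

lemma sum_log_toReal_eq : ∑ i, Real.log (t i).toReal =
    (∑ i, y i ^ 2) / 2 - (∑ i, x i ^ 2) / 2 - Real.log r.toReal := by
  have hφ : ∀ z : ι → ℝ, ∀ i ∈ Finset.univ, gaussianPDFReal 0 1 (z i) ≠ 0 := fun z i _ =>
    (gaussianPDFReal_pos 0 1 (z i) one_ne_zero).ne'
  have h' := prod_toReal_mul_eq_prod_gaussianPDFReal h
  have ht : ∀ i ∈ Finset.univ, (t i).toReal ≠ 0 := fun i _ => (toReal_pos_of_prod_mul_eq h i).ne'
  have hr : r.toReal ≠ 0 := fun h0 => by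
    rw [h0, mul_zero, mul_zero] at h'
    exact Finset.prod_ne_zero_iff.2 (hφ x) h'.symm
  have hlog := congrArg Real.log h'
  rw [Real.log_mul (Finset.prod_ne_zero_iff.2 ht)
      (mul_ne_zero (Finset.prod_ne_zero_iff.2 (hφ y)) hr),
    Real.log_mul (Finset.prod_ne_zero_iff.2 (hφ y)) hr, Real.log_prod ht, Real.log_prod (hφ y),
    Real.log_prod (hφ x)] at hlog
  simp only [log_gaussianPDFReal, Finset.sum_sub_distrib, ← Finset.sum_div] at hlog
  linarith

end

/-- The logarithm of the Jacobian determinant of a triangular map with diagonal derivatives `τ`. -/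
noncomputable def logJacobian (τ : (ι → ℝ) → ι → ℝ≥0∞) (x : ι → ℝ) : ℝ :=
  ∑ i, Real.log (τ x i).toReal

lemma integrable_eval_sq_gaussPi (i : ι) : Integrable (fun x => x i ^ 2) (gaussPi ι) :=
  (measurePreserving_eval (fun _ : ι => gauss) i).integrable_comp_of_integrable
    (memLp_id_gaussianReal (μ := 0) (v := 1) 2).integrable_sq

lemma integral_sq_gauss : ∫ x, x ^ 2 ∂gauss = 1 := by
  have h := variance_of_integral_eq_zero aemeasurable_id
    (integral_id_gaussianReal (μ := 0) (v := 1))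
  simpa [variance_id_gaussianReal] using h.symm

lemma integral_eval_sq_gaussPi (i : ι) : ∫ x, x i ^ 2 ∂gaussPi ι = 1 :=
  ((measurePreserving_eval (fun _ : ι => gauss) i).hasLaw.integral_comp
    (f := fun s => s ^ 2) (by fun_prop)).trans integral_sq_gauss

namespace IsKnothe

variable [DecidableEq ι] {s : ι → Set ι} {f : (ι → ℝ) → ℝ≥0∞} {T : (ι → ℝ) → ι → ℝ}
  {τ : (ι → ℝ) → ι → ℝ≥0∞} (hT : IsKnothe s f T τ)

include hT

lemma measurePreserving : MeasurePreserving T (gaussPi ι) ((gaussPi ι).withDensity f) :=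
  ⟨hT.measurable, hT.map_eq⟩

lemma ae_deriv_pos : ∀ᵐ x ∂gaussPi ι, ∀ i, 0 < (τ x i).toReal :=
  hT.jacobian.mono fun _ hx => toReal_pos_of_prod_mul_eq hx

lemma logJacobian_ae_eq : logJacobian τ =ᵐ[gaussPi ι] fun x =>
    (∑ i, T x i ^ 2) / 2 - (∑ i, x i ^ 2) / 2 - Real.log (f (T x)).toReal :=
  hT.jacobian.mono fun _ hx => sum_log_toReal_eq hx

variable (h2 : ∀ i, Integrable (fun x => x i ^ 2) ((gaussPi ι).withDensity f))

include h2

lemma memLp_two (i : ι) : MemLp (fun x => T x i) 2 (gaussPi ι) :=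
  (memLp_two_iff_integrable_sq
    (hT.hasPartialLowerDeriv i).measurable.aestronglyMeasurable).2
      (hT.measurePreserving.integrable_comp_of_integrable (h2 i))

variable (hlog : Integrable (fun x => Real.log (f x).toReal) ((gaussPi ι).withDensity f))

include hlog

lemma integrable_logJacobian : Integrable (logJacobian τ) (gaussPi ι) :=
  ((((integrable_finsetSum _ fun i _ => (hT.memLp_two h2 i).integrable_sq).div_const 2).sub
    ((integrable_finsetSum _ fun i _ => integrable_eval_sq_gaussPi i).div_const 2)).sub
      (hT.measurePreserving.integrable_comp_of_integrable hlog)).congr hT.logJacobian_ae_eq.symm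

lemma integral_logJacobian : ∫ x, logJacobian τ x ∂gaussPi ι =
    (∑ i, ∫ x, x i ^ 2 ∂(gaussPi ι).withDensity f) / 2 - Fintype.card ι / 2 -
      ∫ x, Real.log (f x).toReal ∂(gaussPi ι).withDensity f := by
  have hT2 := fun i => (hT.memLp_two h2 i).integrable_sq
  have hTsq := (integrable_finsetSum Finset.univ fun i _ => hT2 i).div_const 2
  have hsq := (integrable_finsetSum Finset.univ fun (i : ι) _ =>
    integrable_eval_sq_gaussPi i).div_const 2
  have hdiff : Integrable (fun x => (∑ i, T x i ^ 2) / 2 - (∑ i, x i ^ 2) / 2) (gaussPi ι) :=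
    hTsq.sub hsq
  have hTlog : Integrable (fun x => Real.log (f (T x)).toReal) (gaussPi ι) :=
    hT.measurePreserving.integrable_comp_of_integrable hlog
  have hlaw := hT.measurePreserving.hasLaw
  have hTsq_eq : ∀ i, ∫ x, T x i ^ 2 ∂gaussPi ι = ∫ x, x i ^ 2 ∂(gaussPi ι).withDensity f :=
    fun i => hlaw.integral_comp (f := fun y => y i ^ 2) (h2 i).1
  have hlog_eq : ∫ x, Real.log (f (T x)).toReal ∂gaussPi ι =
      ∫ x, Real.log (f x).toReal ∂(gaussPi ι).withDensity f := hlaw.integral_comp hlog.1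
  rw [integral_congr_ae hT.logJacobian_ae_eq, integral_sub hdiff hTlog,
    integral_sub hTsq hsq, integral_div, integral_div, integral_finsetSum _ fun i _ => hT2 i,
    integral_finsetSum _ fun i _ => integrable_eval_sq_gaussPi i, hlog_eq]
  simp [hTsq_eq, integral_eval_sq_gaussPi]

end IsKnothe

end LogJacobian

section KnothePair

variable {ι : Type*} [Fintype ι] [DecidableEq ι] {s t : ι → Set ι} {f g : (ι → ℝ) → ℝ≥0∞}
  {T S : (ι → ℝ) → ι → ℝ} {τ σ : (ι → ℝ) → ι → ℝ≥0∞}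

/-- The product of the `i`-th diagonal derivatives of two triangular maps, evaluated at a pair of
points. -/
noncomputable def derivMul (τ σ : (ι → ℝ) → ι → ℝ≥0∞) (i : ι) (z : ι → ℝ × ℝ) : ℝ≥0∞ :=
  pairMul (fun x => τ x i) (fun x => σ x i) z

namespace IsKnothe

variable (hT : IsKnothe s f T τ) (hS : IsKnothe t g S σ)

include hT hS

lemma ae_derivMul_pos : ∀ᵐ z ∂bridgePi ι, ∀ i, 0 < (derivMul τ σ i z).toReal := by
  filter_upwards [measurePreserving_fst_bridgePi.quasiMeasurePreserving.ae hT.ae_deriv_pos,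
    measurePreserving_snd_bridgePi.quasiMeasurePreserving.ae hS.ae_deriv_pos] with z hτ hσ i
  rw [derivMul, pairMul, ENNReal.toReal_mul]
  exact mul_pos (hτ i) (hσ i)

lemma sum_log_derivMul_ae_eq :
    (fun z => ∑ i, Real.log (derivMul τ σ i z).toReal) =ᵐ[bridgePi ι] fun z =>
      logJacobian τ (fun j => (z j).1) + logJacobian σ (fun j => (z j).2) := by
  filter_upwards [measurePreserving_fst_bridgePi.quasiMeasurePreserving.ae hT.ae_deriv_pos,
    measurePreserving_snd_bridgePi.quasiMeasurePreserving.ae hS.ae_deriv_pos] with z hτ hσ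
  simp only [logJacobian, ← Finset.sum_add_distrib, derivMul, pairMul, ENNReal.toReal_mul]
  exact Finset.sum_congr rfl fun i _ => Real.log_mul (hτ i).ne' (hσ i).ne'

section

variable (hτ : Integrable (logJacobian τ) (gaussPi ι)) (hσ : Integrable (logJacobian σ) (gaussPi ι))

include hτ hσ

lemma integrable_sum_log_derivMul :
    Integrable (fun z => ∑ i, Real.log (derivMul τ σ i z).toReal) (bridgePi ι) :=
  ((measurePreserving_fst_bridgePi.integrable_comp_of_integrable hτ).add
    (measurePreserving_snd_bridgePi.integrable_comp_of_integrable hσ)).congr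
      (hT.sum_log_derivMul_ae_eq hS).symm

lemma integral_sum_log_derivMul :
    ∫ z, ∑ i, Real.log (derivMul τ σ i z).toReal ∂bridgePi ι =
      ∫ x, logJacobian τ x ∂gaussPi ι + ∫ x, logJacobian σ x ∂gaussPi ι := by
  have hfst : Integrable (fun z => logJacobian τ fun j => (z j).1) (bridgePi ι) :=
    measurePreserving_fst_bridgePi.integrable_comp_of_integrable hτ
  have hsnd : Integrable (fun z => logJacobian σ fun j => (z j).2) (bridgePi ι) :=
    measurePreserving_snd_bridgePi.integrable_comp_of_integrable hσ
  rw [integral_congr_ae (hT.sum_log_derivMul_ae_eq hS), integral_add hfst hsnd]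
  exact congrArg₂ _ (measurePreserving_fst_bridgePi.hasLaw.integral_comp hτ.1)
    (measurePreserving_snd_bridgePi.hasLaw.integral_comp hσ.1)

end

variable (hst : ∀ i, s i ∩ t i ⊆ {i}) (hT2 : ∀ i, MemLp (fun x => T x i) 2 (gaussPi ι))
  (hS2 : ∀ i, MemLp (fun x => S x i) 2 (gaussPi ι))

include hst hT2 hS2

lemma lintegral_derivMul_le (i : ι) : ∫⁻ z, derivMul τ σ i z ∂bridgePi ι ≤
    ENNReal.ofReal cov[fun x => T x i, fun x => S x i; gaussPi ι] :=
  (hT.hasPartialLowerDeriv i).lintegral_pairMul_le_covariance (hS.hasPartialLowerDeriv i) (hst i)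
    (hT2 i) (hS2 i)

lemma integrable_derivMul (i : ι) :
    Integrable (fun z => (derivMul τ σ i z).toReal) (bridgePi ι) :=
  integrable_toReal_of_lintegral_ne_top
    (measurable_pairMul (hT.hasPartialLowerDeriv i).measurable_deriv
      (hS.hasPartialLowerDeriv i).measurable_deriv).aemeasurable
    ((hT.lintegral_derivMul_le hS hst hT2 hS2 i).trans_lt ENNReal.ofReal_lt_top).ne

lemma integral_derivMul_le (i : ι) : ∫ z, (derivMul τ σ i z).toReal ∂bridgePi ι ≤
    cov[fun x => T x i, fun x => S x i; gaussPi ι] := by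
  have hle := hT.lintegral_derivMul_le hS hst hT2 hS2 i
  have hm := measurable_pairMul (hT.hasPartialLowerDeriv i).measurable_deriv
    (hS.hasPartialLowerDeriv i).measurable_deriv
  have hcov := (hT.hasPartialLowerDeriv i).covariance_nonneg (hS.hasPartialLowerDeriv i) (hst i)
    (hT2 i) (hS2 i)
  exact (integral_toReal hm.aemeasurable
    (ae_lt_top hm (hle.trans_lt ENNReal.ofReal_lt_top).ne)).trans_le
      (ENNReal.toReal_le_of_le_ofReal hcov hle)

variable (hτ : Integrable (logJacobian τ) (gaussPi ι)) (hσ : Integrable (logJacobian σ) (gaussPi ι))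
  (hcov : ∑ i, cov[fun x => T x i, fun x => S x i; gaussPi ι] ≤ Fintype.card ι +
    (∫ x, logJacobian τ x ∂gaussPi ι + ∫ x, logJacobian σ x ∂gaussPi ι))

include hτ hσ hcov

lemma ae_derivMul_eq_one : ∀ᵐ z ∂bridgePi ι, ∀ i, derivMul τ σ i z = 1 := by
  refine (ae_eq_one_of_sum_integral_le (hT.integrable_derivMul hS hst hT2 hS2)
    (hT.ae_derivMul_pos hS) (hT.integrable_sum_log_derivMul hS hτ hσ) ?_).mono
      fun z hz i => (ENNReal.toReal_eq_one_iff _).1 (hz i)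
  rw [hT.integral_sum_log_derivMul hS hτ hσ]
  exact (Finset.sum_le_sum fun i _ => hT.integral_derivMul_le hS hst hT2 hS2 i).trans hcov

lemma covariance_eq_one (i : ι) : cov[fun x => T x i, fun x => S x i; gaussPi ι] = 1 := by
  have hone := hT.ae_derivMul_eq_one hS hst hT2 hS2 hτ hσ hcov
  have hge : ∀ i ∈ Finset.univ, 1 ≤ cov[fun x => T x i, fun x => S x i; gaussPi ι] := fun i _ => by
    refine le_trans (le_of_eq ?_) (hT.integral_derivMul_le hS hst hT2 hS2 i)
    simp [integral_congr_ae (hone.mono fun _ hz => congrArg ENNReal.toReal (hz i))]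
  have hlog : ∫ x, logJacobian τ x ∂gaussPi ι + ∫ x, logJacobian σ x ∂gaussPi ι = 0 := by
    rw [← hT.integral_sum_log_derivMul hS hτ hσ]
    exact integral_eq_zero_of_ae (hone.mono fun z hz => by simp [hz])
  rw [hlog, add_zero] at hcov
  exact ((Finset.sum_eq_sum_iff_of_le hge).1
    (le_antisymm (Finset.sum_le_sum hge) (by simpa using hcov)) i (Finset.mem_univ i)).symm

lemma exists_map_eval_eq_affine {i : ι} (hs : s i = {i}) :
    ∃ c b : ℝ, 0 < c ∧
      ((gaussPi ι).withDensity f).map (Function.eval i) = gauss.map fun u => c * u + b := by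
  obtain ⟨x, c, b, hc, h⟩ := (hT.hasPartialLowerDeriv i).exists_ae_eq_affine_update
    (hS.hasPartialLowerDeriv i) (hst i) (hT2 i) (hS2 i)
    ((hT.ae_derivMul_eq_one hS hst hT2 hS2 hτ hσ hcov).mono fun z hz => hz i)
    (hT.covariance_eq_one hS hst hT2 hS2 hτ hσ hcov i).le
  refine ⟨c, b, hc, ?_⟩
  have heval := measurePreserving_eval (fun _ : ι => gauss) i
  rw [← hT.map_eq, Measure.map_map (measurable_pi_apply i) hT.measurable, ← heval.map_eq,
    Measure.map_map (by fun_prop) heval.measurable]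
  refine Measure.map_congr ((heval.quasiMeasurePreserving.ae h).mono fun y hy => Eq.trans ?_ hy)
  refine (hT.hasPartialLowerDeriv i).dependsOn fun j hj => ?_
  obtain rfl : j = i := by rwa [hs] at hj
  simp

end IsKnothe

end KnothePair

theorem exists_map_eval_zero_eq_affine {n : ℕ} {μ ν : Measure (Fin (n + 1) → ℝ)}
    [IsProbabilityMeasure μ] [IsProbabilityMeasure ν]
    (hμ2 : ∀ i, Integrable (fun x => x i ^ 2) μ) (hν2 : ∀ i, Integrable (fun x => x i ^ 2) ν)
    (hμ : klDiv μ (gaussPi (Fin (n + 1))) ≠ ∞) (hν : klDiv ν (gaussPi (Fin (n + 1))) ≠ ∞)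
    (hopt : ∀ X Y : (Fin (n + 1) → ℝ) → Fin (n + 1) → ℝ,
      MeasurePreserving X (gaussPi (Fin (n + 1))) μ →
      MeasurePreserving Y (gaussPi (Fin (n + 1))) ν →
      ∑ i, cov[fun x => X x i, fun x => Y x i; gaussPi (Fin (n + 1))] ≤
        ((∑ i, ∫ x, x i ^ 2 ∂μ) / 2 - (klDiv μ (gaussPi (Fin (n + 1)))).toReal) +
        ((∑ i, ∫ x, x i ^ 2 ∂ν) / 2 - (klDiv ν (gaussPi (Fin (n + 1)))).toReal)) :
    ∃ c b : ℝ, 0 < c ∧ μ.map (Function.eval 0) = gauss.map fun u => c * u + b := by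
  obtain ⟨hμac, hμlog⟩ := klDiv_ne_top_iff.1 hμ
  obtain ⟨hνac, hνlog⟩ := klDiv_ne_top_iff.1 hν
  have hf := Measure.withDensity_rnDeriv_eq _ _ hμac
  have hg := Measure.withDensity_rnDeriv_eq _ _ hνac
  obtain ⟨T, τ, hT⟩ := exists_isKnothe_Iic (Measure.measurable_rnDeriv μ (gaussPi _))
    ((Measure.lintegral_rnDeriv hμac).trans measure_univ)
  obtain ⟨S, σ, hS⟩ := exists_isKnothe_Ici (Measure.measurable_rnDeriv ν (gaussPi _))
    ((Measure.lintegral_rnDeriv hνac).trans measure_univ)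
  have hopt := hopt T S (hf ▸ hT.measurePreserving) (hg ▸ hS.measurePreserving)
  rw [toReal_klDiv_of_measure_eq hμac (by simp), toReal_klDiv_of_measure_eq hνac (by simp)] at hopt
  have hμlog' : Integrable (fun x => Real.log (μ.rnDeriv (gaussPi _) x).toReal)
    ((gaussPi _).withDensity (μ.rnDeriv (gaussPi _))) := by rwa [hf]
  have hνlog' : Integrable (fun x => Real.log (ν.rnDeriv (gaussPi _) x).toReal)
    ((gaussPi _).withDensity (ν.rnDeriv (gaussPi _))) := by rwa [hg]
  rw [← hf] at hμ2
  rw [← hg] at hν2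
  have h := hT.exists_map_eval_eq_affine hS (fun i j hj => le_antisymm hj.1 hj.2)
    (hT.memLp_two hμ2) (hS.memLp_two hν2) (hT.integrable_logJacobian hμ2 hμlog')
    (hS.integrable_logJacobian hν2 hνlog') ?_ (Iic_bot (α := Fin (n + 1)))
  · rwa [hf] at h
  · rw [hT.integral_logJacobian hμ2 hμlog', hS.integral_logJacobian hν2 hνlog', hf, hg]
    simp only [llr] at hopt
    linarith

end Equality

section StdGaussian

variable (d : ℕ)

lemma integrable_exp_neg_sq_norm_div_two {E : Type*} [NormedAddCommGroup E]
    [InnerProductSpace ℝ E] [FiniteDimensional ℝ E] [MeasurableSpace E] [BorelSpace E] :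
    Integrable fun x : E => Real.exp (-‖x‖ ^ 2 / 2) := by
  have h := (GaussianFourier.integrable_cexp_neg_mul_sq_norm_add (b := 1 / 2) (V := E)
    (by norm_num) 0 0).norm
  refine h.congr (ae_of_all _ fun x => ?_)
  have hre : (-(1 / 2) * (‖x‖ : ℂ) ^ 2 + 0 * ((⟪(0 : E), x⟫ : ℝ) : ℂ)).re = -‖x‖ ^ 2 / 2 := by
    rw [show (-(1 / 2) * (‖x‖ : ℂ) ^ 2 + 0 * ((⟪(0 : E), x⟫ : ℝ) : ℂ)) =
      ((-‖x‖ ^ 2 / 2 : ℝ) : ℂ) by push_cast; ring, Complex.ofReal_re]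
  simp only [Complex.norm_exp, hre]

lemma charFun_root_stdGaussian (t : EuclideanSpace ℝ (Fin d)) :
    charFun (_root_.stdGaussian d) t = Complex.exp (-‖t‖ ^ 2 / 2) := by
  have hpos : (0 : ℝ) < 2 * Real.pi := by positivity
  have hconst : ((Real.pi : ℂ) / (1 / 2)) ^
      ((Module.finrank ℝ (EuclideanSpace ℝ (Fin d)) : ℂ) / 2) =
        (((2 * Real.pi) ^ ((d : ℝ) / 2) : ℝ) : ℂ) := by
    rw [Complex.ofReal_cpow hpos.le, finrank_euclideanSpace_fin]
    push_cast
    ring_nf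
  have hintegrand : ∀ x : EuclideanSpace ℝ (Fin d),
      (ENNReal.ofReal ((2 * Real.pi) ^ (-(d : ℝ) / 2) * Real.exp (-‖x‖ ^ 2 / 2))).toReal •
        Complex.exp ((⟪x, t⟫ : ℝ) * Complex.I) =
      (((2 * Real.pi) ^ (-(d : ℝ) / 2) : ℝ) : ℂ) *
        Complex.exp (-(1 / 2) * (‖x‖ : ℂ) ^ 2 + Complex.I * (⟪t, x⟫ : ℝ)) := by
    intro x
    rw [ENNReal.toReal_ofReal (by positivity), Complex.real_smul, Complex.ofReal_mul, mul_assoc,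
      Complex.ofReal_exp, ← Complex.exp_add, real_inner_comm]
    push_cast
    ring_nf
  rw [charFun_apply, _root_.stdGaussian,
    integral_withDensity_eq_integral_toReal_smul (by fun_prop) (by simp)]
  simp_rw [hintegrand]
  rw [integral_const_mul, GaussianFourier.integral_cexp_neg_mul_sq_norm_add (by norm_num),
    hconst, ← mul_assoc, ← Complex.ofReal_mul, ← Real.rpow_add hpos, neg_div, neg_add_cancel,
    Real.rpow_zero, Complex.ofReal_one, one_mul, Complex.I_sq]
  ring_nf

lemma stdGaussian_eq :
    _root_.stdGaussian d = ProbabilityTheory.stdGaussian (EuclideanSpace ℝ (Fin d)) := by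
  have : IsFiniteMeasure (_root_.stdGaussian d) :=
    isFiniteMeasure_withDensity_ofReal
      (integrable_exp_neg_sq_norm_div_two.const_mul ((2 * Real.pi) ^ (-(d : ℝ) / 2))).2
  exact Measure.ext_of_charFun (funext fun t =>
    (charFun_root_stdGaussian d t).trans (charFun_stdGaussian t).symm)

end StdGaussian

section KullbackLeibler

variable {α β : Type*} [MeasurableSpace α] [MeasurableSpace β]

lemma relEnt_eq_klDiv {E : Type*} [MeasurableSpace E] [NormedAddCommGroup E] {μ γ : Measure E}
    [IsProbabilityMeasure μ] [IsProbabilityMeasure γ] : relEnt μ γ = klDiv μ γ := by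
  simp only [relEnt, klDiv_def, llr_def, probReal_univ, add_sub_cancel_right]
  congr

lemma klDiv_map_measurableEquiv (e : α ≃ᵐ β) (μ ν : Measure α) [IsFiniteMeasure μ]
    [IsFiniteMeasure ν] : klDiv (μ.map e) (ν.map e) = klDiv μ ν := by
  refine le_antisymm (klDiv_map_le μ ν e.measurable) ?_
  simpa using klDiv_map_le (μ.map e) (ν.map e) e.symm.measurable

end KullbackLeibler

section Inner

variable {E : Type*} [NormedAddCommGroup E] [InnerProductSpace ℝ E] {Ω : Type*}
  [MeasurableSpace Ω] {P : Measure Ω} {X Y : Ω → E}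

lemma integrable_inner_of_memLp_two (hX : MemLp X 2 P) (hY : MemLp Y 2 P) :
    Integrable (fun ω => ⟪X ω, Y ω⟫) P :=
  (L2.integrable_inner (𝕜 := ℝ) (hX.toLp X) (hY.toLp Y)).congr <| by
    filter_upwards [hX.coeFn_toLp, hY.coeFn_toLp] with ω hXω hYω
    rw [hXω, hYω]

lemma integral_norm_sub_sq (hX : MemLp X 2 P) (hY : MemLp Y 2 P) :
    ∫ ω, ‖X ω - Y ω‖ ^ 2 ∂P =
      ∫ ω, ‖X ω‖ ^ 2 ∂P + ∫ ω, ‖Y ω‖ ^ 2 ∂P - 2 * ∫ ω, ⟪X ω, Y ω⟫ ∂P := by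
  have hX2 := hX.integrable_norm_pow two_ne_zero
  have hY2 := hY.integrable_norm_pow two_ne_zero
  have hadd : Integrable (fun ω => ‖X ω‖ ^ 2 + ‖Y ω‖ ^ 2) P := hX2.add hY2
  simp_rw [norm_sub_sq_real, sub_add_eq_add_sub]
  rw [integral_sub hadd ((integrable_inner_of_memLp_two hX hY).const_mul 2), integral_add hX2 hY2,
    integral_const_mul]

lemma sum_covariance_inner {ι : Type*} [Fintype ι] (b : OrthonormalBasis ι ℝ E) [CompleteSpace E]
    [IsProbabilityMeasure P] (hX : MemLp X 2 P) (hY : MemLp Y 2 P) :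
    ∑ i, cov[fun ω => ⟪b i, X ω⟫, fun ω => ⟪b i, Y ω⟫; P] =
      ∫ ω, ⟪X ω, Y ω⟫ ∂P - ⟪∫ ω, X ω ∂P, ∫ ω, Y ω ∂P⟫ := by
  have hsum : ∀ x y : E, ∑ i, ⟪b i, x⟫ * ⟪b i, y⟫ = ⟪x, y⟫ := fun x y => by
    rw [← b.sum_inner_mul_inner]
    simp_rw [real_inner_comm x]
  have hXb := fun i => hX.const_inner (𝕜 := ℝ) (b i)
  have hYb := fun i => hY.const_inner (𝕜 := ℝ) (b i)
  simp_rw [fun i => covariance_eq_sub (hXb i) (hYb i), Finset.sum_sub_distrib,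
    integral_inner (hX.integrable one_le_two), integral_inner (hY.integrable one_le_two)]
  rw [← integral_finsetSum _ fun i _ => (hXb i).integrable_mul (hYb i)]
  simp only [Pi.mul_apply, hsum]

end Inner

section Wasserstein

variable {E : Type*} [MeasurableSpace E] [NormedAddCommGroup E] [BorelSpace E]
  [SecondCountableTopology E] {μ ν : Measure E} {Ω : Type*} [MeasurableSpace Ω] {P : Measure Ω}
  {X Y : Ω → E}

lemma W2sq_le_lintegral (hX : MeasurePreserving X P μ) (hY : MeasurePreserving Y P ν) :
    W2sq μ ν ≤ ∫⁻ ω, ‖X ω - Y ω‖ₑ ^ 2 ∂P := by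
  have hXY : Measurable fun ω => (X ω, Y ω) := hX.measurable.prodMk hY.measurable
  refine (iInf₂_le (P.map fun ω => (X ω, Y ω)) ⟨?_, ?_⟩).trans_eq
    (lintegral_map (by fun_prop) hXY)
  · rw [Measure.map_map measurable_fst hXY, ← hX.map_eq]
    rfl
  · rw [Measure.map_map measurable_snd hXY, ← hY.map_eq]
    rfl

lemma W2sq_comm : W2sq μ ν = W2sq ν μ := by
  have hle : ∀ ρ τ : Measure E, W2sq ρ τ ≤ W2sq τ ρ := fun ρ τ => le_iInf₂ fun π hπ => by
    simp_rw [← enorm_eq_nnnorm, fun p : E × E => enorm_sub_rev p.1 p.2]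
    exact W2sq_le_lintegral ⟨measurable_snd, hπ.2⟩ ⟨measurable_fst, hπ.1⟩
  exact le_antisymm (hle μ ν) (hle ν μ)

variable [InnerProductSpace ℝ E] [FiniteDimensional ℝ E]

lemma integral_inner_le (hμ2 : MemLp id 2 μ) (hν2 : MemLp id 2 ν)
    (hμ : klDiv μ (ProbabilityTheory.stdGaussian E) ≠ ∞)
    (hν : klDiv ν (ProbabilityTheory.stdGaussian E) ≠ ∞)
    (hW : 2 * klDiv μ (ProbabilityTheory.stdGaussian E) +
      2 * klDiv ν (ProbabilityTheory.stdGaussian E) ≤ W2sq μ ν)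
    (hX : MeasurePreserving X P μ) (hY : MeasurePreserving Y P ν) :
    ∫ ω, ⟪X ω, Y ω⟫ ∂P ≤
      ((∫ x, ‖x‖ ^ 2 ∂μ) / 2 - (klDiv μ (ProbabilityTheory.stdGaussian E)).toReal) +
      ((∫ x, ‖x‖ ^ 2 ∂ν) / 2 - (klDiv ν (ProbabilityTheory.stdGaussian E)).toReal) := by
  have hX2 : MemLp X 2 P := hμ2.comp_measurePreserving hX
  have hY2 : MemLp Y 2 P := hν2.comp_measurePreserving hY
  have hcost : ∫⁻ ω, ‖X ω - Y ω‖ₑ ^ 2 ∂P = ENNReal.ofReal (∫ ω, ‖X ω - Y ω‖ ^ 2 ∂P) := by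
    have hint : Integrable (fun ω => ‖X ω - Y ω‖ ^ 2) P :=
      (hX2.sub hY2).integrable_norm_pow two_ne_zero
    rw [ofReal_integral_eq_lintegral_ofReal hint (ae_of_all _ fun ω => by positivity)]
    simp [ENNReal.ofReal_pow]
  have hle := ENNReal.toReal_le_of_le_ofReal (integral_nonneg fun ω => by positivity)
    ((hW.trans (W2sq_le_lintegral hX hY)).trans_eq hcost)
  have hXnorm : ∫ ω, ‖X ω‖ ^ 2 ∂P = ∫ x, ‖x‖ ^ 2 ∂μ :=
    hX.hasLaw.integral_comp (f := fun x => ‖x‖ ^ 2) (by fun_prop)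
  have hYnorm : ∫ ω, ‖Y ω‖ ^ 2 ∂P = ∫ x, ‖x‖ ^ 2 ∂ν :=
    hY.hasLaw.integral_comp (f := fun x => ‖x‖ ^ 2) (by fun_prop)
  rw [ENNReal.toReal_add (ENNReal.mul_ne_top ENNReal.ofNat_ne_top hμ)
      (ENNReal.mul_ne_top ENNReal.ofNat_ne_top hν), ENNReal.toReal_mul, ENNReal.toReal_mul,
    ENNReal.toReal_ofNat, integral_norm_sub_sq hX2 hY2, hXnorm, hYnorm] at hle
  linarith

end Wasserstein

section Coordinates

variable {ι E : Type*} [Fintype ι] [NormedAddCommGroup E] [InnerProductSpace ℝ E]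
  [MeasurableSpace E] [BorelSpace E] (b : OrthonormalBasis ι ℝ E)

/-- The coordinates in an orthonormal basis, as a measurable equivalence. -/
noncomputable def coordEquiv : E ≃ᵐ (ι → ℝ) :=
  b.measurableEquiv.trans (MeasurableEquiv.toLp 2 (ι → ℝ)).symm

lemma coordEquiv_apply (x : E) (i : ι) : coordEquiv b x i = ⟪b i, x⟫ := b.repr_apply_apply x i

lemma inner_coordEquiv_symm (a : ι → ℝ) (i : ι) : ⟪b i, (coordEquiv b).symm a⟫ = a i := by
  rw [← coordEquiv_apply, (coordEquiv b).apply_symm_apply]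

lemma sum_sq_coordEquiv (x : E) : ∑ i, coordEquiv b x i ^ 2 = ‖x‖ ^ 2 := by
  simpa [coordEquiv_apply] using b.sum_sq_norm_inner_right x

lemma map_coordEquiv_stdGaussian [FiniteDimensional ℝ E] :
    (ProbabilityTheory.stdGaussian E).map (coordEquiv b) = gaussPi ι := by
  have hsymm : (fun a : ι → ℝ => ∑ i, a i • b i) = (coordEquiv b).symm :=
    funext fun a => b.sum_repr_symm (WithLp.toLp 2 a)
  rw [stdGaussian_eq_map_pi_orthonormalBasis b, hsymm, (coordEquiv b).map_map_symm]

variable {b} {μ : Measure E}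

lemma integrable_eval_sq_map_coordEquiv (hμ : Integrable (fun x => ‖x‖ ^ 2) μ) (i : ι) :
    Integrable (fun x => x i ^ 2) (μ.map (coordEquiv b)) := by
  refine (integrable_map_equiv _ _).2 (hμ.mono' (by fun_prop) (ae_of_all _ fun x => ?_))
  rw [← sum_sq_coordEquiv b x]
  simpa using Finset.single_le_sum (fun j _ => sq_nonneg (coordEquiv b x j)) (Finset.mem_univ i)

lemma sum_integral_sq_map_coordEquiv (hμ : Integrable (fun x => ‖x‖ ^ 2) μ) :
    ∑ i, ∫ x, x i ^ 2 ∂μ.map (coordEquiv b) = ∫ x, ‖x‖ ^ 2 ∂μ := by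
  rw [← integral_finsetSum _ fun i _ => integrable_eval_sq_map_coordEquiv hμ i,
    integral_map_equiv]
  simp_rw [sum_sq_coordEquiv]

end Coordinates

section Marginals

variable {E : Type*} [NormedAddCommGroup E] [InnerProductSpace ℝ E] [FiniteDimensional ℝ E]

lemma exists_orthonormalBasis_zero_eq {u : E} (hu : ‖u‖ = 1) :
    ∃ (n : ℕ) (b : OrthonormalBasis (Fin (n + 1)) ℝ E), b 0 = u := by
  have : Nontrivial E := nontrivial_of_ne u 0 (by rintro rfl; simp at hu)
  obtain ⟨n, hn⟩ := Nat.exists_eq_succ_of_ne_zero (Module.finrank_pos (R := ℝ) (M := E)).ne'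
  obtain ⟨b, hb⟩ := Orthonormal.exists_orthonormalBasis_extension_of_card_eq (𝕜 := ℝ) (E := E)
    (ι := Fin (n + 1)) (by simpa using hn) (v := fun _ => u) (s := {0})
    ⟨fun i => by simpa using hu, fun i j hij => (hij (Subsingleton.elim i j)).elim⟩
  exact ⟨n, b, hb 0 rfl⟩

lemma exists_map_affine_gauss_eq {c : ℝ} (hc : 0 < c) (b : ℝ) :
    ∃ v : ℝ≥0, v ≠ 0 ∧ gauss.map (fun u => c * u + b) = gaussianReal b v := by
  refine ⟨.mk (c ^ 2) (sq_nonneg c), fun h => by simp [← NNReal.coe_eq_zero, hc.ne'] at h, ?_⟩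
  have hcomp : (fun u => c * u + b) = (· + b) ∘ (c * ·) := rfl
  rw [hcomp, ← Measure.map_map (by fun_prop) (by fun_prop), gaussianReal_map_const_mul,
    gaussianReal_map_add_const]
  simp

variable [MeasurableSpace E] [BorelSpace E] {μ ν : Measure E} [IsProbabilityMeasure μ]
  [IsProbabilityMeasure ν]

theorem exists_map_inner_eq_gaussianReal (hμ2 : MemLp id 2 μ) (hν2 : MemLp id 2 ν)
    (hμ : klDiv μ (ProbabilityTheory.stdGaussian E) ≠ ∞)
    (hν : klDiv ν (ProbabilityTheory.stdGaussian E) ≠ ∞)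
    (hmean : 0 ≤ ⟪∫ x, x ∂μ, ∫ x, x ∂ν⟫)
    (hW : 2 * klDiv μ (ProbabilityTheory.stdGaussian E) +
      2 * klDiv ν (ProbabilityTheory.stdGaussian E) ≤ W2sq μ ν) {u : E} (hu : ‖u‖ = 1) :
    ∃ (m : ℝ) (v : ℝ≥0), v ≠ 0 ∧ μ.map (fun x => ⟪u, x⟫) = gaussianReal m v := by
  obtain ⟨n, b, rfl⟩ := exists_orthonormalBasis_zero_eq hu
  set e := coordEquiv b
  have hkl : ∀ ρ : Measure E, [IsProbabilityMeasure ρ] →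
      klDiv (ρ.map e) (gaussPi (Fin (n + 1))) = klDiv ρ (ProbabilityTheory.stdGaussian E) :=
    fun ρ _ => by rw [← map_coordEquiv_stdGaussian b, klDiv_map_measurableEquiv]
  have hμn := hμ2.integrable_norm_pow two_ne_zero
  have hνn := hν2.integrable_norm_pow two_ne_zero
  have := Measure.isProbabilityMeasure_map (μ := μ) e.measurable.aemeasurable
  have := Measure.isProbabilityMeasure_map (μ := ν) e.measurable.aemeasurable
  obtain ⟨c, t, hc, h⟩ := exists_map_eval_zero_eq_affine (μ := μ.map e) (ν := ν.map e)
    (integrable_eval_sq_map_coordEquiv hμn) (integrable_eval_sq_map_coordEquiv hνn)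
    (by rwa [hkl]) (by rwa [hkl]) fun X Y hX hY => by
      have hX' : MeasurePreserving (e.symm ∘ X) (gaussPi (Fin (n + 1))) μ :=
        (MeasurePreserving.symm e ⟨e.measurable, rfl⟩).comp hX
      have hY' : MeasurePreserving (e.symm ∘ Y) (gaussPi (Fin (n + 1))) ν :=
        (MeasurePreserving.symm e ⟨e.measurable, rfl⟩).comp hY
      have hcov := sum_covariance_inner b (hμ2.comp_measurePreserving hX')
        (hν2.comp_measurePreserving hY')
      simp only [Function.comp_apply, id, e, inner_coordEquiv_symm] at hcov
      have hle := integral_inner_le hμ2 hν2 hμ hν hW hX' hY'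
      have hEX := hX'.hasLaw.integral_eq
      have hEY := hY'.hasLaw.integral_eq
      rw [hcov, hkl, hkl, sum_integral_sq_map_coordEquiv hμn, sum_integral_sq_map_coordEquiv hνn]
      simp only [Function.comp_apply, e] at hle hEX hEY
      rw [hEX, hEY]
      linarith
  have hproj : (fun x => ⟪b 0, x⟫) = Function.eval 0 ∘ e :=
    funext fun x => (coordEquiv_apply b x 0).symm
  obtain ⟨v, hv, hmap⟩ := exists_map_affine_gauss_eq hc t
  exact ⟨t, v, hv, by
    rw [hproj, ← Measure.map_map (measurable_pi_apply 0) e.measurable, h, hmap]⟩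

end Marginals

section GaussianMarginals

variable {E : Type*} [NormedAddCommGroup E] [InnerProductSpace ℝ E] [FiniteDimensional ℝ E]
  [MeasurableSpace E] [BorelSpace E] {μ : Measure E}

lemma exists_map_inner_eq_gaussianReal_of_unit [IsProbabilityMeasure μ]
    (h : ∀ u : E, ‖u‖ = 1 → ∃ (m : ℝ) (v : ℝ≥0), v ≠ 0 ∧
      μ.map (fun x => ⟪u, x⟫) = gaussianReal m v) (w : E) :
    ∃ (m : ℝ) (v : ℝ≥0), (w ≠ 0 → v ≠ 0) ∧ μ.map (fun x => ⟪w, x⟫) = gaussianReal m v := by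
  rcases eq_or_ne w 0 with rfl | hw
  · exact ⟨0, 0, fun hw => absurd rfl hw, by simp [Measure.map_const]⟩
  · obtain ⟨m, v, hv, hmap⟩ := h (‖w‖⁻¹ • w) (norm_smul_inv_norm (𝕜 := ℝ) hw)
    have hcomp : (fun x => ⟪w, x⟫) = (fun s => ‖w‖ * s) ∘ fun x => ⟪‖w‖⁻¹ • w, x⟫ := by
      funext x
      simp [real_inner_smul_left, mul_inv_cancel_left₀ (norm_ne_zero_iff.2 hw)]
    refine ⟨‖w‖ * m, .mk (‖w‖ ^ 2) (sq_nonneg _) * v, fun _ => mul_ne_zero ?_ hv, ?_⟩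
    · simpa [← NNReal.coe_ne_zero] using hw
    · rw [hcomp, ← Measure.map_map (by fun_prop) (by fun_prop), hmap, gaussianReal_map_const_mul]

lemma isGaussian_of_map_inner_eq_gaussianReal
    (h : ∀ w : E, ∃ (m : ℝ) (v : ℝ≥0), μ.map (fun x => ⟪w, x⟫) = gaussianReal m v) :
    IsGaussian μ :=
  isGaussian_of_map_eq_gaussianReal fun L => by
    obtain ⟨w, rfl⟩ := (InnerProductSpace.toDual ℝ E).surjective L
    exact h w

lemma covarianceBilin_self_eq_of_map_inner [IsFiniteMeasure μ] (hμ2 : MemLp id 2 μ) {w : E}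
    {m : ℝ} {v : ℝ≥0} (h : μ.map (fun x => ⟪w, x⟫) = gaussianReal m v) :
    covarianceBilin μ w w = v := by
  rw [covarianceBilin_self hμ2, ← variance_id_gaussianReal (μ := m) (v := v), ← h,
    variance_map (by fun_prop) (by fun_prop)]
  rfl

end GaussianMarginals

section CovarianceMatrix

open Matrix

variable {ι : Type*} [Fintype ι] [DecidableEq ι] {μ : Measure (EuclideanSpace ℝ ι)}

/-- The covariance matrix of a measure on a Euclidean space, in the standard basis. -/
noncomputable def covarianceMatrix (μ : Measure (EuclideanSpace ℝ ι)) : Matrix ι ι ℝ :=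
  .of fun i j => covarianceBilin μ (EuclideanSpace.single i 1) (EuclideanSpace.single j 1)

lemma covarianceBilin_eq_dotProduct (x y : EuclideanSpace ℝ ι) :
    covarianceBilin μ x y = x ⬝ᵥ covarianceMatrix μ *ᵥ y := by
  let e := EuclideanSpace.basisFun ι ℝ
  conv_lhs => rw [← e.sum_repr x, ← e.sum_repr y]
  simp only [map_sum, map_smul, _root_.sum_apply, _root_.smul_apply, smul_eq_mul, dotProduct,
    mulVec, Finset.mul_sum, covarianceMatrix, of_apply]
  rw [Finset.sum_comm]
  refine Finset.sum_congr rfl fun i _ => Finset.sum_congr rfl fun j _ => ?_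
  simp only [EuclideanSpace.basisFun_repr, EuclideanSpace.basisFun_apply, e]
  ring

lemma posDef_covarianceMatrix (h : ∀ x, x ≠ 0 → 0 < covarianceBilin μ x x) :
    (covarianceMatrix μ).PosDef := by
  have hherm : (covarianceMatrix μ).IsHermitian := by
    ext i j
    simpa [covarianceMatrix] using covarianceBilin_comm _ _
  refine PosDef.of_dotProduct_mulVec_pos hherm fun x hx => ?_
  have hpos := h (WithLp.toLp 2 x) (by simpa using hx)
  rw [covarianceBilin_eq_dotProduct] at hpos
  simpa using hpos

lemma eq_multivariateGaussian [IsGaussian μ] (h : (covarianceMatrix μ).PosSemidef) :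
    μ = multivariateGaussian (∫ x, x ∂μ) (covarianceMatrix μ) := by
  refine IsGaussian.ext (by simp) ?_
  ext x y
  rw [covarianceBilin_multivariateGaussian h, covarianceBilin_eq_dotProduct]

lemma exists_posDef_eq_multivariateGaussian [IsProbabilityMeasure μ]
    (h : ∀ u : EuclideanSpace ℝ ι, ‖u‖ = 1 → ∃ (m : ℝ) (v : ℝ≥0), v ≠ 0 ∧
      μ.map (fun x => ⟪u, x⟫) = gaussianReal m v) :
    ∃ A : Matrix ι ι ℝ, A.PosDef ∧ μ = multivariateGaussian (∫ x, x ∂μ) A := by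
  choose m v hv hmap using exists_map_inner_eq_gaussianReal_of_unit h
  have hG : IsGaussian μ :=
    isGaussian_of_map_inner_eq_gaussianReal fun w => ⟨m w, v w, hmap w⟩
  have hpos : (covarianceMatrix μ).PosDef := posDef_covarianceMatrix fun w hw => by
    rw [covarianceBilin_self_eq_of_map_inner IsGaussian.memLp_two_id (hmap w)]
    exact NNReal.coe_pos.2 (pos_iff_ne_zero.2 (hv w hw))
  exact ⟨covarianceMatrix μ, hpos, eq_multivariateGaussian hpos.posSemidef⟩

end CovarianceMatrix

section GaussianDensity

open Matrix

variable {d : ℕ} {A T : Matrix (Fin d) (Fin d) ℝ} (m : EuclideanSpace ℝ (Fin d))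

/-- The real-valued density of `gaussianMeasure m A` with respect to Lebesgue measure. The
precision matrix acts through `toEuclideanCLM`, which makes continuity available. -/
noncomputable def gaussianDensity (m : EuclideanSpace ℝ (Fin d)) (A : Matrix (Fin d) (Fin d) ℝ)
    (x : EuclideanSpace ℝ (Fin d)) : ℝ :=
  ((2 * Real.pi) ^ d * A.det) ^ (-(1 : ℝ) / 2) *
    Real.exp (-⟪x - m, toEuclideanCLM (𝕜 := ℝ) A⁻¹ (x - m)⟫ / 2)

lemma gaussianMeasure_eq_withDensity (A : Matrix (Fin d) (Fin d) ℝ) :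
    gaussianMeasure m A = volume.withDensity fun x => ENNReal.ofReal (gaussianDensity m A x) :=
  rfl

lemma measurable_gaussianDensity : Measurable (gaussianDensity m A) := by
  unfold gaussianDensity
  fun_prop

lemma gaussianDensity_pos (hA : 0 < A.det) (x : EuclideanSpace ℝ (Fin d)) :
    0 < gaussianDensity m A x := by
  unfold gaussianDensity
  positivity

lemma log_gaussianDensity (hA : 0 < A.det) (x : EuclideanSpace ℝ (Fin d)) :
    Real.log (gaussianDensity m A x) =
      -⟪x - m, toEuclideanCLM (𝕜 := ℝ) A⁻¹ (x - m)⟫ / 2 - Real.log A.det / 2 -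
        d / 2 * Real.log (2 * Real.pi) := by
  rw [gaussianDensity, Real.log_mul (by positivity) (by positivity), Real.log_exp,
    Real.log_rpow (by positivity), Real.log_mul (by positivity) hA.ne', Real.log_pow]
  ring

lemma stdGaussian_eq_gaussianMeasure : _root_.stdGaussian d = gaussianMeasure 0 1 := by
  have hconst : ((2 * Real.pi) ^ d) ^ (-(1 : ℝ) / 2) = (2 * Real.pi) ^ (-(d : ℝ) / 2) := by
    rw [← Real.rpow_natCast, ← Real.rpow_mul (by positivity)]
    ring_nf
  simp [_root_.stdGaussian, gaussianMeasure_eq_withDensity, gaussianDensity, hconst]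

lemma inner_toEuclideanCLM_left (x y : EuclideanSpace ℝ (Fin d)) :
    ⟪toEuclideanCLM (𝕜 := ℝ) T x, y⟫ = ⟪x, toEuclideanCLM (𝕜 := ℝ) Tᴴ y⟫ := by
  rw [← star_eq_conjTranspose, map_star, ContinuousLinearMap.star_eq_adjoint,
    ContinuousLinearMap.adjoint_inner_right]

lemma inner_inv_mul_conjTranspose (hT : T.det ≠ 0) (x : EuclideanSpace ℝ (Fin d)) :
    ⟪toEuclideanCLM (𝕜 := ℝ) T x,
      toEuclideanCLM (𝕜 := ℝ) (T * Tᴴ)⁻¹ (toEuclideanCLM (𝕜 := ℝ) T x)⟫ = ‖x‖ ^ 2 := by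
  have hTT : Tᴴ * (T * Tᴴ)⁻¹ * T = 1 := by
    rw [Matrix.mul_inv_rev, Matrix.mul_assoc, Matrix.mul_assoc, nonsing_inv_mul _ hT.isUnit,
      Matrix.mul_one, mul_nonsing_inv _ (by simpa [det_conjTranspose] using hT)]
  rw [inner_toEuclideanCLM_left, ← mul_apply_eq_comp, ← mul_apply_eq_comp,
    ← map_mul, ← map_mul, hTT, map_one, one_apply_eq_self, real_inner_self_eq_norm_sq]

lemma abs_det_mul_gaussianDensity (hT : T.det ≠ 0) (x : EuclideanSpace ℝ (Fin d)) :
    |T.det| * gaussianDensity m (T * Tᴴ) (m + toEuclideanCLM (𝕜 := ℝ) T x) =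
      gaussianDensity 0 1 x := by
  have hTpos : 0 < |T.det| := abs_pos.2 hT
  have hdet : (T * Tᴴ).det = |T.det| ^ (2 : ℝ) := by
    simp [sq]
  have hroot : (|T.det| ^ (2 : ℝ)) ^ (-(1 : ℝ) / 2) = |T.det|⁻¹ := by
    rw [← Real.rpow_mul hTpos.le, ← Real.rpow_neg_one]
    norm_num
  simp only [gaussianDensity, add_sub_cancel_left, inner_inv_mul_conjTranspose hT, hdet,
    Real.mul_rpow (show (0 : ℝ) ≤ (2 * Real.pi) ^ d by positivity) (Real.rpow_nonneg hTpos.le 2),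
    hroot]
  simp only [det_one, mul_one, inv_one, map_one, one_apply_eq_self, sub_zero,
    real_inner_self_eq_norm_sq]
  field_simp

lemma measurePreserving_affine_volume (hT : T.det ≠ 0) :
    MeasurePreserving (fun x => m + toEuclideanCLM (𝕜 := ℝ) T x) volume
      (ENNReal.ofReal |T.det|⁻¹ • volume) := by
  have hdet : LinearMap.det (toEuclideanLin T) = T.det := LinearMap.det_toLpLin 2 T
  have hlin : volume.map (toEuclideanCLM (𝕜 := ℝ) T) =
      ENNReal.ofReal |T.det|⁻¹ • (volume : Measure (EuclideanSpace ℝ (Fin d))) := by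
    rw [← abs_inv, ← hdet]
    exact Measure.map_linearMap_addHaar_eq_smul_addHaar volume (hdet.trans_ne hT)
  refine ⟨by fun_prop, ?_⟩
  rw [← Function.comp_def (m + ·), ← Measure.map_map (by fun_prop) (by fun_prop), hlin,
    Measure.map_smul, map_add_left_eq_self]

lemma measurePreserving_affine_stdGaussian (hT : T.det ≠ 0) :
    MeasurePreserving (fun x => m + toEuclideanCLM (𝕜 := ℝ) T x)
      (ProbabilityTheory.stdGaussian (EuclideanSpace ℝ (Fin d))) (gaussianMeasure m (T * Tᴴ)) := by
  have hvol := measurePreserving_affine_volume m hT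
  have hmeas := ((measurable_gaussianDensity m (A := T * Tᴴ)).const_mul |T.det|).ennreal_ofReal
  have hmap := map_withDensity_comp hvol hmeas
  simp_rw [Function.comp_def, abs_det_mul_gaussianDensity m hT] at hmap
  refine ⟨hvol.measurable, ?_⟩
  rw [← stdGaussian_eq, stdGaussian_eq_gaussianMeasure, gaussianMeasure_eq_withDensity, hmap,
    gaussianMeasure_eq_withDensity, withDensity_smul_measure, ← withDensity_smul _ hmeas]
  congr with y
  rw [Pi.smul_apply, smul_eq_mul, ← ENNReal.ofReal_mul (by positivity),
    inv_mul_cancel_left₀ (abs_ne_zero.2 hT)]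

end GaussianDensity

section SquareRoot

open Matrix
open scoped MatrixOrder

variable {n : Type*} [Fintype n] [DecidableEq n] {A : Matrix n n ℝ}

lemma posDef_sqrt (hA : A.PosDef) : (CFC.sqrt A).PosDef := by
  have hsqrt : (CFC.sqrt A).PosSemidef := (CFC.sqrt_nonneg A).posSemidef
  exact hsqrt.posDef_iff_isUnit.2 ((CFC.isUnit_sqrt_iff A hA.posSemidef.nonneg).2 hA.isUnit)

lemma sqrt_mul_conjTranspose_sqrt (hA : A.PosDef) : CFC.sqrt A * (CFC.sqrt A)ᴴ = A := by
  rw [(posDef_sqrt hA).isHermitian.eq, CFC.sqrt_mul_sqrt_self A hA.posSemidef.nonneg]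

end SquareRoot

section StdGaussianIntegrals

variable {E : Type*} [NormedAddCommGroup E] [InnerProductSpace ℝ E] [FiniteDimensional ℝ E]
  [MeasurableSpace E] [BorelSpace E]

lemma integral_inner_mul_inner_stdGaussian (x y : E) :
    ∫ z, ⟪x, z⟫ * ⟪y, z⟫ ∂ProbabilityTheory.stdGaussian E = ⟪x, y⟫ := by
  have hcov := covarianceBilin_apply (μ := ProbabilityTheory.stdGaussian E)
    IsGaussian.memLp_two_id x y
  rw [covarianceBilin_stdGaussian, innerSL_apply_apply] at hcov
  simpa using hcov.symm

lemma integrable_inner_apply_stdGaussian (L : E →L[ℝ] E) :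
    Integrable (fun z => ⟪z, L z⟫) (ProbabilityTheory.stdGaussian E) :=
  integrable_inner_of_memLp_two IsGaussian.memLp_two_id (L.comp_memLp' IsGaussian.memLp_two_id)

lemma integral_inner_apply_stdGaussian (L : E →L[ℝ] E) :
    ∫ z, ⟪z, L z⟫ ∂ProbabilityTheory.stdGaussian E = LinearMap.trace ℝ E L := by
  let b := stdOrthonormalBasis ℝ E
  have hexpand : ∀ z, ⟪z, L z⟫ = ∑ i, ⟪b i, z⟫ * ⟪L.adjoint (b i), z⟫ := fun z => by
    rw [← b.sum_inner_mul_inner]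
    simp_rw [L.adjoint_inner_left, real_inner_comm z]
  have hL2 : ∀ w : E, MemLp (fun z => ⟪w, z⟫) 2 (ProbabilityTheory.stdGaussian E) := fun w =>
    IsGaussian.memLp_two_id.const_inner w
  have hint : ∀ i, Integrable (fun z => ⟪b i, z⟫ * ⟪L.adjoint (b i), z⟫)
      (ProbabilityTheory.stdGaussian E) := fun i => (hL2 _).integrable_mul (hL2 _)
  simp_rw [hexpand]
  rw [integral_finsetSum _ fun i _ => hint i, LinearMap.trace_eq_sum_inner _ b]
  simp_rw [integral_inner_mul_inner_stdGaussian, L.adjoint_inner_right, real_inner_comm (b _)]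
  rfl

lemma integral_norm_sq_stdGaussian :
    ∫ z, ‖z‖ ^ 2 ∂ProbabilityTheory.stdGaussian E = Module.finrank ℝ E := by
  simpa using integral_inner_apply_stdGaussian (ContinuousLinearMap.id ℝ E)

lemma integral_inner_affine_stdGaussian (m₁ m₂ : E) (K L : E →L[ℝ] E) :
    ∫ z, ⟪m₁ + K z, m₂ + L z⟫ ∂ProbabilityTheory.stdGaussian E =
      ⟪m₁, m₂⟫ + LinearMap.trace ℝ E (K.adjoint * L : E →L[ℝ] E) := by
  have hexpand : ∀ z, ⟪m₁ + K z, m₂ + L z⟫ =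
      ⟪m₁, m₂⟫ + ⟪K.adjoint m₂ + L.adjoint m₁, z⟫ + ⟪z, (K.adjoint * L) z⟫ := fun z => by
    simp only [inner_add_left, inner_add_right, mul_apply_eq_comp,
      ContinuousLinearMap.adjoint_inner_left, ContinuousLinearMap.adjoint_inner_right,
      real_inner_comm (K z)]
    ring
  have hid : Integrable (fun z => z) (ProbabilityTheory.stdGaussian E) := IsGaussian.integrable_id
  have hlin : ∫ z, ⟪K.adjoint m₂ + L.adjoint m₁, z⟫ ∂ProbabilityTheory.stdGaussian E = 0 := by
    rw [integral_inner hid, integral_id_stdGaussian, inner_zero_right]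
  have hlin_int : Integrable (fun z => ⟪K.adjoint m₂ + L.adjoint m₁, z⟫)
      (ProbabilityTheory.stdGaussian E) := hid.const_inner _
  have haff_int : Integrable (fun z => ⟪m₁, m₂⟫ + ⟪K.adjoint m₂ + L.adjoint m₁, z⟫)
      (ProbabilityTheory.stdGaussian E) := (integrable_const _).add hlin_int
  simp_rw [hexpand]
  rw [integral_add haff_int (integrable_inner_apply_stdGaussian _),
    integral_add (integrable_const _) hlin_int, hlin, integral_inner_apply_stdGaussian]
  simp

end StdGaussianIntegrals

section GaussianEntropy

open Matrix
open scoped MatrixOrder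

lemma llr_withDensity_ofReal {α : Type*} [MeasurableSpace α] {ρ : Measure α} [SigmaFinite ρ]
    {f g : α → ℝ} (hf : Measurable f) (hg : Measurable g) (hf0 : ∀ x, 0 < f x)
    (hg0 : ∀ x, 0 < g x) :
    llr (ρ.withDensity fun x => ENNReal.ofReal (f x))
      (ρ.withDensity fun x => ENNReal.ofReal (g x)) =ᵐ[ρ]
        fun x => Real.log (f x) - Real.log (g x) := by
  have hright := Measure.rnDeriv_withDensity_right (ρ.withDensity fun x => ENNReal.ofReal (f x)) ρ
    hg.ennreal_ofReal.aemeasurable (ae_of_all _ fun x => (ENNReal.ofReal_pos.2 (hg0 x)).ne')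
    (ae_of_all _ fun x => ENNReal.ofReal_ne_top)
  filter_upwards [hright, Measure.rnDeriv_withDensity ρ hf.ennreal_ofReal] with x hx hfx
  rw [llr, hx, hfx, ENNReal.toReal_mul, ENNReal.toReal_inv, ENNReal.toReal_ofReal (hf0 x).le,
    ENNReal.toReal_ofReal (hg0 x).le, Real.log_mul (inv_pos.2 (hg0 x)).ne' (hf0 x).ne',
    Real.log_inv]
  ring

variable {d : ℕ} {A : Matrix (Fin d) (Fin d) ℝ} (m : EuclideanSpace ℝ (Fin d))

lemma multivariateGaussian_eq (hA : A.PosDef) :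
    multivariateGaussian m A = gaussianMeasure m A := by
  have hmap := (measurePreserving_affine_stdGaussian m (posDef_sqrt hA).det_pos.ne').map_eq
  rwa [sqrt_mul_conjTranspose_sqrt hA] at hmap

lemma isGaussian_gaussianMeasure (hA : A.PosDef) : IsGaussian (gaussianMeasure m A) :=
  multivariateGaussian_eq m hA ▸ inferInstance

lemma llr_gaussianMeasure (hA : 0 < A.det) :
    llr (gaussianMeasure m A) (ProbabilityTheory.stdGaussian (EuclideanSpace ℝ (Fin d)))
      =ᵐ[gaussianMeasure m A] fun x => ‖x‖ ^ 2 / 2 -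
        ⟪x - m, toEuclideanCLM (𝕜 := ℝ) A⁻¹ (x - m)⟫ / 2 - Real.log A.det / 2 := by
  have hone : 0 < (1 : Matrix (Fin d) (Fin d) ℝ).det := by simp
  rw [← stdGaussian_eq, stdGaussian_eq_gaussianMeasure]
  filter_upwards [(withDensity_absolutelyContinuous _ _).ae_le
    (llr_withDensity_ofReal (ρ := volume) (measurable_gaussianDensity m)
      (measurable_gaussianDensity 0) (gaussianDensity_pos m hA) (gaussianDensity_pos 0 hone))]
    with x hx
  refine hx.trans ?_
  rw [log_gaussianDensity m hA, log_gaussianDensity 0 hone]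
  simp only [sub_zero, inv_one, map_one, one_apply_eq_self, real_inner_self_eq_norm_sq, det_one,
    Real.log_one, zero_div]
  ring

lemma integrable_quadForm_gaussianMeasure (hA : A.PosDef) :
    Integrable (fun x => ⟪x - m, toEuclideanCLM (𝕜 := ℝ) A⁻¹ (x - m)⟫) (gaussianMeasure m A) := by
  have := isGaussian_gaussianMeasure m hA
  have hsub : MemLp (fun x => x - m) 2 (gaussianMeasure m A) :=
    IsGaussian.memLp_two_id.sub (memLp_const m)
  exact integrable_inner_of_memLp_two hsub (ContinuousLinearMap.comp_memLp' _ hsub)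

lemma integral_quadForm_gaussianMeasure (hA : A.PosDef) :
    ∫ x, ⟪x - m, toEuclideanCLM (𝕜 := ℝ) A⁻¹ (x - m)⟫ ∂gaussianMeasure m A = d := by
  have hdet := (posDef_sqrt hA).det_pos.ne'
  have hlaw := (measurePreserving_affine_stdGaussian m hdet).hasLaw
  rw [sqrt_mul_conjTranspose_sqrt hA] at hlaw
  calc ∫ x, ⟪x - m, toEuclideanCLM (𝕜 := ℝ) A⁻¹ (x - m)⟫ ∂gaussianMeasure m A
      = ∫ z, ‖z‖ ^ 2 ∂ProbabilityTheory.stdGaussian (EuclideanSpace ℝ (Fin d)) := by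
        rw [← hlaw.integral_comp (by fun_prop)]
        refine integral_congr_ae (ae_of_all _ fun z => ?_)
        have hz := inner_inv_mul_conjTranspose hdet z
        rw [sqrt_mul_conjTranspose_sqrt hA] at hz
        simpa using hz
    _ = d := by simp [integral_norm_sq_stdGaussian]

lemma gaussianMeasure_absolutelyContinuous_stdGaussian (A : Matrix (Fin d) (Fin d) ℝ) :
    gaussianMeasure m A ≪ ProbabilityTheory.stdGaussian (EuclideanSpace ℝ (Fin d)) := by
  rw [← stdGaussian_eq]
  refine (withDensity_absolutelyContinuous _ _).trans
    (withDensity_absolutelyContinuous' (by fun_prop) (ae_of_all _ fun x => ?_))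
  exact (ENNReal.ofReal_pos.2 (by positivity)).ne'

lemma klDiv_gaussianMeasure_ne_top (hA : A.PosDef) :
    klDiv (gaussianMeasure m A) (ProbabilityTheory.stdGaussian (EuclideanSpace ℝ (Fin d))) ≠ ∞ := by
  have := isGaussian_gaussianMeasure m hA
  have hnorm : Integrable (fun x => ‖x‖ ^ 2) (gaussianMeasure m A) :=
    IsGaussian.memLp_two_id.integrable_norm_pow two_ne_zero
  exact klDiv_ne_top (gaussianMeasure_absolutelyContinuous_stdGaussian m A)
    ((((hnorm.div_const 2).sub ((integrable_quadForm_gaussianMeasure m hA).div_const 2)).sub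
      (integrable_const _)).congr (llr_gaussianMeasure m hA.det_pos).symm)

lemma toReal_klDiv_gaussianMeasure (hA : A.PosDef) :
    (klDiv (gaussianMeasure m A)
      (ProbabilityTheory.stdGaussian (EuclideanSpace ℝ (Fin d)))).toReal =
        (∫ x, ‖x‖ ^ 2 ∂gaussianMeasure m A) / 2 - d / 2 - Real.log A.det / 2 := by
  have := isGaussian_gaussianMeasure m hA
  have hnorm : Integrable (fun x => ‖x‖ ^ 2 / 2) (gaussianMeasure m A) :=
    (IsGaussian.memLp_two_id.integrable_norm_pow two_ne_zero).div_const 2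
  have hquad := (integrable_quadForm_gaussianMeasure m hA).div_const 2
  have hdiff : Integrable (fun x => ‖x‖ ^ 2 / 2 -
      ⟪x - m, toEuclideanCLM (𝕜 := ℝ) A⁻¹ (x - m)⟫ / 2) (gaussianMeasure m A) := hnorm.sub hquad
  rw [toReal_klDiv_of_measure_eq (gaussianMeasure_absolutelyContinuous_stdGaussian m A) (by simp),
    integral_congr_ae (llr_gaussianMeasure m hA.det_pos), integral_sub hdiff (integrable_const _),
    integral_sub hnorm hquad, integral_div, integral_div, integral_quadForm_gaussianMeasure m hA]
  simp

end GaussianEntropy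

section Rigidity

open Matrix
open scoped MatrixOrder

lemma eq_one_of_trace_le {n : Type*} [Fintype n] [DecidableEq n] {M : Matrix n n ℝ}
    (hM : M.PosDef) (h : M.trace ≤ Fintype.card n + Real.log M.det) : M = 1 := by
  have heig : hM.isHermitian.eigenvalues = 1 := by
    rw [hM.isHermitian.trace_eq_sum_eigenvalues, hM.isHermitian.det_eq_prod_eigenvalues,
      Real.log_prod fun i _ => by simpa using (hM.eigenvalues_pos i).ne'] at h
    exact funext (eq_one_of_sum_le_card_add_sum_log hM.eigenvalues_pos h)
  rw [hM.isHermitian.spectral_theorem, heig]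
  simp

lemma exists_posDef_conjTranspose_mul {n : Type*} [Fintype n]
    {A B : Matrix n n ℝ} (hA : A.PosDef) (hB : B.PosDef) :
    ∃ S T : Matrix n n ℝ, S * Sᴴ = A ∧ T * Tᴴ = B ∧ (Sᴴ * T).PosDef := by
  classical
  have hS := posDef_sqrt hA
  set S := CFC.sqrt A
  have hSdet : IsUnit S.det := hS.det_pos.ne'.isUnit
  have hSBS : (S * B * Sᴴ).PosDef := hB.mul_mul_conjTranspose_same
    (vecMul_injective_iff_isUnit.2 hS.isUnit)
  have hM := posDef_sqrt hSBS
  have hMM := sqrt_mul_conjTranspose_sqrt hSBS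
  set M := CFC.sqrt (S * B * Sᴴ)
  refine ⟨S, S⁻¹ * M, sqrt_mul_conjTranspose_sqrt hA, ?_, ?_⟩
  · calc S⁻¹ * M * (S⁻¹ * M)ᴴ = S⁻¹ * (M * Mᴴ) * (S⁻¹)ᴴ := by
          simp only [conjTranspose_mul, Matrix.mul_assoc]
      _ = S⁻¹ * S * B * (S⁻¹ * S)ᴴ := by
          rw [hMM]
          simp only [conjTranspose_mul, Matrix.mul_assoc]
      _ = B := by simp [nonsing_inv_mul _ hSdet]
  · rwa [hS.isHermitian.eq, mul_nonsing_inv_cancel_left _ _ hSdet]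

variable {d : ℕ} {m₁ m₂ : EuclideanSpace ℝ (Fin d)}

lemma trace_toEuclideanCLM (M : Matrix (Fin d) (Fin d) ℝ) :
    LinearMap.trace ℝ (EuclideanSpace ℝ (Fin d)) (toEuclideanCLM (𝕜 := ℝ) M) = M.trace := by
  rw [LinearMap.trace_eq_sum_inner _ (EuclideanSpace.basisFun (Fin d) ℝ)]
  simp [Matrix.trace, EuclideanSpace.inner_single_left]

lemma inner_add_trace_le {S T : Matrix (Fin d) (Fin d) ℝ} (hA : (S * Sᴴ).PosDef)
    (hB : (T * Tᴴ).PosDef)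
    (hW : 2 * klDiv (gaussianMeasure m₁ (S * Sᴴ)) (ProbabilityTheory.stdGaussian _) +
      2 * klDiv (gaussianMeasure m₂ (T * Tᴴ)) (ProbabilityTheory.stdGaussian _) ≤
        W2sq (gaussianMeasure m₁ (S * Sᴴ)) (gaussianMeasure m₂ (T * Tᴴ))) :
    ⟪m₁, m₂⟫ + (Sᴴ * T).trace ≤ d + Real.log (Sᴴ * T).det := by
  have := isGaussian_gaussianMeasure m₁ hA
  have := isGaussian_gaussianMeasure m₂ hB
  have hS : S.det ≠ 0 := left_ne_zero_of_mul (det_mul S Sᴴ ▸ hA.det_pos.ne')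
  have hT : T.det ≠ 0 := left_ne_zero_of_mul (det_mul T Tᴴ ▸ hB.det_pos.ne')
  have hle := integral_inner_le IsGaussian.memLp_two_id IsGaussian.memLp_two_id
    (klDiv_gaussianMeasure_ne_top m₁ hA) (klDiv_gaussianMeasure_ne_top m₂ hB) hW
    (measurePreserving_affine_stdGaussian m₁ hS) (measurePreserving_affine_stdGaussian m₂ hT)
  have hlog : ∀ R : Matrix (Fin d) (Fin d) ℝ, Real.log (R * Rᴴ).det = 2 * Real.log R.det :=
    fun R => by rw [det_mul, det_conjTranspose, star_trivial, ← sq, Real.log_pow, Nat.cast_ofNat]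
  rw [toReal_klDiv_gaussianMeasure m₁ hA, toReal_klDiv_gaussianMeasure m₂ hB, hlog, hlog,
    integral_inner_affine_stdGaussian, ← ContinuousLinearMap.star_eq_adjoint, ← map_star,
    ← map_mul, trace_toEuclideanCLM, star_eq_conjTranspose] at hle
  rw [det_mul, det_conjTranspose, star_trivial, Real.log_mul hS hT]
  linarith

lemma eq_inv_of_le_W2sq {A B : Matrix (Fin d) (Fin d) ℝ} (hA : A.PosDef) (hB : B.PosDef)
    (hmean : 0 ≤ ⟪m₁, m₂⟫)
    (hW : 2 * klDiv (gaussianMeasure m₁ A) (ProbabilityTheory.stdGaussian _) +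
      2 * klDiv (gaussianMeasure m₂ B) (ProbabilityTheory.stdGaussian _) ≤
        W2sq (gaussianMeasure m₁ A) (gaussianMeasure m₂ B)) : B = A⁻¹ := by
  obtain ⟨S, T, rfl, rfl, hST⟩ := exists_posDef_conjTranspose_mul hA hB
  have hone : Sᴴ * T = 1 := eq_one_of_trace_le hST <| by
    have := inner_add_trace_le hA hB hW
    rw [Fintype.card_fin]
    linarith
  have hone' : Tᴴ * S = 1 := by simpa using congrArg conjTranspose hone
  refine (inv_eq_left_inv ?_).symm
  calc T * Tᴴ * (S * Sᴴ) = T * (Tᴴ * S) * Sᴴ := by simp only [Matrix.mul_assoc]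
    _ = 1 := by rw [hone', Matrix.mul_one, mul_eq_one_comm.1 hone]

end Rigidity

end SymmTalagrand

open SymmTalagrand in
theorem symmetrized_talagrand_eq_iff_gaussian_general (d : ℕ)
    (μ ν : Measure (EuclideanSpace ℝ (Fin d)))
    [IsProbabilityMeasure μ] [IsProbabilityMeasure ν]
    (hμ2 : Integrable (fun x => ‖x‖ ^ 2) μ) (hν2 : Integrable (fun x => ‖x‖ ^ 2) ν)
    (hμent : relEnt μ (stdGaussian d) ≠ ∞) (hνent : relEnt ν (stdGaussian d) ≠ ∞)
    (hmean : 0 ≤ ⟪∫ x, x ∂μ, ∫ x, x ∂ν⟫)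
    (hW : 2 * relEnt μ (stdGaussian d) + 2 * relEnt ν (stdGaussian d) ≤ W2sq μ ν) :
    ∃ A : Matrix (Fin d) (Fin d) ℝ, A.PosDef ∧
      μ = gaussianMeasure (∫ x, x ∂μ) A ∧ ν = gaussianMeasure (∫ x, x ∂ν) A⁻¹ := by
  simp only [stdGaussian_eq, relEnt_eq_klDiv] at hμent hνent hW
  have hμL2 : MemLp id 2 μ := (memLp_two_iff_integrable_sq_norm aestronglyMeasurable_id).2 hμ2
  have hνL2 : MemLp id 2 ν := (memLp_two_iff_integrable_sq_norm aestronglyMeasurable_id).2 hν2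
  obtain ⟨A, hA, hμA⟩ := exists_posDef_eq_multivariateGaussian fun u hu =>
    exists_map_inner_eq_gaussianReal hμL2 hνL2 hμent hνent hmean hW hu
  obtain ⟨B, hB, hνB⟩ := exists_posDef_eq_multivariateGaussian fun u hu =>
    exists_map_inner_eq_gaussianReal hνL2 hμL2 hνent hμent (by rwa [real_inner_comm])
      (by rwa [add_comm, W2sq_comm]) hu
  rw [multivariateGaussian_eq _ hA] at hμA
  rw [multivariateGaussian_eq _ hB] at hνB
  have hBA : B = A⁻¹ := eq_inv_of_le_W2sq hA hB hmean (by rwa [← hμA, ← hνB])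
  exact ⟨A, hA, hμA, hBA ▸ hνB⟩

/-- **Equality cases of the symmetrized Talagrand inequality, necessity**: if `μ` is centered,
both measures have finite second moment and finite relative entropy with respect to the
standard Gaussian `γ`, and `W₂(μ,ν)² = 2 Ent_γ(μ) + 2 Ent_γ(ν)`, then there is a symmetric
positive definite matrix `A` and `m ∈ ℝ^d` with `μ = N(0, A)` and `ν = N(m, A⁻¹)`. -/
theorem symmetrized_talagrand_eq_iff_gaussian (d : ℕ) (hd : 1 ≤ d)
    (μ ν : Measure (EuclideanSpace ℝ (Fin d)))
    [IsProbabilityMeasure μ] [IsProbabilityMeasure ν]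
    (hμ2 : Integrable (fun x => ‖x‖ ^ 2) μ) (hν2 : Integrable (fun x => ‖x‖ ^ 2) ν)
    (hμent : relEnt μ (stdGaussian d) ≠ ∞) (hνent : relEnt ν (stdGaussian d) ≠ ∞)
    (hcent : ∫ x, x ∂μ = 0)
    (heq : W2sq μ ν = 2 * relEnt μ (stdGaussian d) + 2 * relEnt ν (stdGaussian d)) :
    ∃ (A : Matrix (Fin d) (Fin d) ℝ) (m : EuclideanSpace ℝ (Fin d)),
      A.PosDef ∧ A.IsSymm ∧ μ = gaussianMeasure 0 A ∧ ν = gaussianMeasure m A⁻¹ := by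
  obtain ⟨A, hA, hμA, hνA⟩ := symmetrized_talagrand_eq_iff_gaussian_general d μ ν hμ2 hν2 hμent
    hνent (by rw [hcent, inner_zero_left]) heq.ge
  exact ⟨A, ∫ x, x ∂ν, hA, Matrix.isHermitian_iff_isSymm.1 hA.isHermitian, hcent ▸ hμA, hνA⟩
end

section
/- Talagrand's transport-entropy inequality for the Gaussian measure: Let d ≥ 1 and let γ be the standard Gaussian measure on ℝ^d. For every probability measure ν on ℝ^d with finite second moment, W₂(ν, γ)² ≤ 2 Ent_γ(ν). -/
open MeasureTheory ENNReal
open scoped RealInnerProductSpace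

/-!
Transport `ν` to `γ` by the Knothe map: coordinate after coordinate, push the conditional law of
`ν` given the preceding coordinates onto the one-dimensional Gaussian by the monotone rearrangement.
The squared costs of the coordinates add up, and so do their relative entropies by the chain rule,
so it suffices to bound the cost of a one-dimensional monotone rearrangement `S`.

Let `φ` be the one-dimensional Gaussian density and `w t = φ (S t) / φ t`. The Gibbs inequality
`∫ log w dν + 1 ≤ H(ν | γ) + ∫ w dγ` reads `∫ (t² - S²) / 2 dν + 1 ≤ H(ν | γ) + ∫ φ (S t) dt`.
Since `φ (S t) = ∫_{s > S t} s dγ(s) = ∫_{y > t} S y dν(y)`, Fubini gives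
`∫ φ (S t) dt = ∫ t S dν`, and with `∫ S² dν = 1` this rearranges to `∫ (t - S)² dν ≤ 2 H(ν | γ)`.
The integrations need a second moment of `ν`, which finite entropy provides: apply the Gibbs
inequality to the `γ`-integrable function `exp (t² / 4)`.
-/

section Gibbs

open InformationTheory Real Set

variable {α : Type*} [MeasurableSpace α] {μ ν : Measure α}

theorem integrable_toReal_rnDeriv_mul [SigmaFinite μ] [SigmaFinite ν] {w : α → ℝ}
    (hw : Integrable w μ) : Integrable (fun x => (μ.rnDeriv ν x).toReal * w x) ν :=
  (integrable_withDensity_iff_integrable_smul₀' (Measure.measurable_rnDeriv μ ν).aemeasurable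
    (μ.rnDeriv_lt_top ν)).1 (hw.mono_measure (Measure.withDensity_rnDeriv_le μ ν))

theorem integral_toReal_rnDeriv_mul_le [SigmaFinite μ] [SigmaFinite ν] {w : α → ℝ}
    (hw : Integrable w μ) (hw0 : 0 ≤ᵐ[μ] w) :
    ∫ x, (μ.rnDeriv ν x).toReal * w x ∂ν ≤ ∫ x, w x ∂μ := by
  calc ∫ x, (μ.rnDeriv ν x).toReal * w x ∂ν = ∫ x, w x ∂ν.withDensity (μ.rnDeriv ν) :=
        (integral_withDensity_eq_integral_toReal_smul
          (Measure.measurable_rnDeriv μ ν) (μ.rnDeriv_lt_top ν) w).symm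
    _ ≤ ∫ x, w x ∂μ := integral_mono_measure (Measure.withDensity_rnDeriv_le μ ν) hw0 hw

theorem ae_add_one_le_llr_add_rnDeriv_mul_exp [SigmaFinite μ] [SigmaFinite ν] (hνμ : ν ≪ μ)
    (g : α → ℝ) :
    ∀ᵐ x ∂ν, g x + 1 ≤ llr ν μ x + (μ.rnDeriv ν x).toReal * exp (g x) := by
  filter_upwards [exp_neg_llr hνμ] with x hx
  have h := add_one_le_exp (-llr ν μ x + g x)
  rw [exp_add, hx] at h
  linarith

theorem integrable_of_klDiv_ne_top_of_integrable_exp [IsFiniteMeasure μ] [IsFiniteMeasure ν]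
    (h : klDiv ν μ ≠ ∞) {g : α → ℝ} (hg : AEStronglyMeasurable g ν) (hg0 : 0 ≤ g)
    (hexp : Integrable (fun x => exp (g x)) μ) : Integrable g ν := by
  obtain ⟨hνμ, hllr⟩ := klDiv_ne_top_iff.1 h
  refine (hllr.add (integrable_toReal_rnDeriv_mul hexp)).mono' hg ?_
  filter_upwards [ae_add_one_le_llr_add_rnDeriv_mul_exp hνμ g] with x hx
  rw [norm_of_nonneg (hg0 x), Pi.add_apply]
  linarith

theorem integral_add_le_klDiv_add_integral [IsFiniteMeasure μ] [IsFiniteMeasure ν]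
    (h : klDiv ν μ ≠ ∞) {w g : α → ℝ} (hw : Integrable w μ) (hw0 : 0 ≤ᵐ[μ] w)
    (hg : Integrable g ν) (hwg : ∀ᵐ x ∂ν, w x = exp (g x)) :
    ∫ x, g x ∂ν + μ.real univ ≤ (klDiv ν μ).toReal + ∫ x, w x ∂μ := by
  obtain ⟨hνμ, hllr⟩ := klDiv_ne_top_iff.1 h
  have hrw := integrable_toReal_rnDeriv_mul (ν := ν) hw
  have hmono : ∫ x, (g x + 1) ∂ν ≤ ∫ x, (llr ν μ x + (μ.rnDeriv ν x).toReal * w x) ∂ν := by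
    refine integral_mono_ae (hg.add (integrable_const 1)) (hllr.add hrw) ?_
    filter_upwards [ae_add_one_le_llr_add_rnDeriv_mul_exp hνμ g, hwg] with x hx hwx
    rwa [hwx]
  rw [integral_add hg (integrable_const 1), integral_add hllr hrw, integral_const, smul_eq_mul,
    mul_one] at hmono
  rw [toReal_klDiv hνμ hllr]
  linarith [integral_toReal_rnDeriv_mul_le (ν := ν) hw hw0]

end Gibbs

section MonotoneRearrangement

open ProbabilityTheory Set Filter Topology

/-- The quantile function of a law on `ℝ`, set to `0` outside the open unit interval, where the
infimum need not make sense. -/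
noncomputable def quantile (ρ : Measure ℝ) : ℝ → ℝ :=
  (Ioo 0 1).indicator fun u => sInf {t | u ≤ cdf ρ t}

theorem quantile_le_iff {ρ : Measure ℝ} {u a : ℝ} (hu : u ∈ Ioo (0 : ℝ) 1) :
    quantile ρ u ≤ a ↔ u ≤ cdf ρ a := by
  rw [quantile, indicator_of_mem hu]
  obtain ⟨b, hb⟩ := ((tendsto_cdf_atBot ρ).eventually (gt_mem_nhds hu.1)).exists
  have hbdd : BddBelow {t | u ≤ cdf ρ t} :=
    ⟨b, fun t ht => ((monotone_cdf ρ).reflect_lt (hb.trans_le ht)).le⟩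
  refine ⟨fun h => ?_, fun h => csInf_le hbdd h⟩
  have hne : {t | u ≤ cdf ρ t}.Nonempty :=
    ((tendsto_cdf_atTop ρ).eventually (lt_mem_nhds hu.2)).exists.imp fun t ht => ht.le
  have hright : ∀ t ∈ Ioi (sInf {t | u ≤ cdf ρ t}), u ≤ cdf ρ t := fun t ht =>
    let ⟨s, hs, hst⟩ := exists_lt_of_csInf_lt hne ht
    hs.trans (monotone_cdf ρ hst.le)
  exact (ge_of_tendsto (((cdf ρ).right_continuous _).mono Ioi_subset_Ici_self)
    (eventually_nhdsWithin_of_forall hright)).trans (monotone_cdf ρ h)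

theorem measurable_quantile (ρ : Measure ℝ) : Measurable (quantile ρ) := by
  refine measurable_of_Iic fun a => ?_
  have h : quantile ρ ⁻¹' Iic a = (Ioo 0 1 ∩ Iic (cdf ρ a)) ∪ ((Ioo 0 1)ᶜ ∩ {_u | 0 ≤ a}) := by
    ext u
    by_cases hu : u ∈ Ioo (0 : ℝ) 1
    · simpa [hu.1, hu.2] using quantile_le_iff hu
    · rw [mem_preimage, quantile, indicator_of_notMem hu]
      simp [hu, -mem_Ioo]
  rw [h]
  exact (measurableSet_Ioo.inter measurableSet_Iic).union
    (measurableSet_Ioo.compl.inter (.const _))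

theorem continuous_cdf (ρ : Measure ℝ) [IsProbabilityMeasure ρ] [NullSingletonClass ρ] :
    Continuous (cdf ρ) := by
  rw [continuous_iff_continuousAt]
  intro x
  rw [(monotone_cdf ρ).continuousAt_iff_leftLim_eq_rightLim, StieltjesFunction.rightLim_eq]
  have h : ρ {x} = 0 := measure_singleton x
  rw [← measure_cdf ρ, StieltjesFunction.measure_singleton, ENNReal.ofReal_eq_zero] at h
  exact le_antisymm ((monotone_cdf ρ).leftLim_le le_rfl) (by linarith)

theorem cdf_quantile (ρ : Measure ℝ) [IsProbabilityMeasure ρ] [NullSingletonClass ρ] {u : ℝ}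
    (hu : u ∈ Ioo (0 : ℝ) 1) : cdf ρ (quantile ρ u) = u := by
  refine le_antisymm ?_ ((quantile_le_iff hu).1 le_rfl)
  have hleft : ∀ t ∈ Iio (quantile ρ u), cdf ρ t ≤ u := fun t ht =>
    (not_le.1 ((quantile_le_iff hu).not.1 (not_le.2 ht))).le
  exact le_of_tendsto ((continuous_cdf ρ).continuousWithinAt (s := Iio (quantile ρ u)))
    (eventually_nhdsWithin_of_forall hleft)

theorem map_quantile (ρ : Measure ℝ) [IsProbabilityMeasure ρ] :
    (volume.restrict (Ioo (0 : ℝ) 1)).map (quantile ρ) = ρ := by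
  refine Measure.ext_of_Iic _ _ fun a => ?_
  rw [Measure.map_apply (measurable_quantile ρ) measurableSet_Iic,
    Measure.restrict_apply' measurableSet_Ioo, ← ofReal_cdf]
  have h : quantile ρ ⁻¹' Iic a ∩ Ioo 0 1 = Iic (cdf ρ a) ∩ Ioo 0 1 := by
    ext u
    exact and_congr_left fun hu => quantile_le_iff hu
  rw [h, measure_congr ((ae_eq_refl _).inter Ioo_ae_eq_Ioc), inter_comm, Ioc_inter_Iic,
    min_eq_right (cdf_le_one ρ a), Real.volume_Ioc, sub_zero]

theorem measure_le_cdf (ν : Measure ℝ) [IsProbabilityMeasure ν] [NullSingletonClass ν] {u : ℝ}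
    (hu : u ∈ Ioo (0 : ℝ) 1) : ν {t | u ≤ cdf ν t} = ENNReal.ofReal (1 - u) := by
  have h : {t | u ≤ cdf ν t} = Ici (quantile ν u) := ext fun t => (quantile_le_iff hu).symm
  rw [h, ← Ioi_ae_eq_Ici.measure_eq, ← compl_Iic, prob_compl_eq_one_sub measurableSet_Iic,
    ← ofReal_cdf, cdf_quantile ν hu, ENNReal.ofReal_sub _ hu.1.le, ENNReal.ofReal_one]

theorem measure_one_le_cdf (ν : Measure ℝ) [IsProbabilityMeasure ν] [NullSingletonClass ν] :
    ν {t | 1 ≤ cdf ν t} = 0 := by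
  have hlim : Tendsto (fun v : ℝ => ENNReal.ofReal (1 - v)) (𝓝[<] 1) (𝓝 0) := by
    have h : Continuous fun v : ℝ => ENNReal.ofReal (1 - v) :=
      ENNReal.continuous_ofReal.comp (by fun_prop)
    simpa using (h.tendsto 1).mono_left nhdsWithin_le_nhds
  rw [← nonpos_iff_eq_zero]
  refine ge_of_tendsto hlim ?_
  filter_upwards [Ioo_mem_nhdsLT (zero_lt_one' ℝ)] with v hv
  rw [← measure_le_cdf ν hv]
  exact measure_mono fun t ht => hv.2.le.trans ht

theorem map_cdf (ν : Measure ℝ) [IsProbabilityMeasure ν] [NullSingletonClass ν] :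
    ν.map (cdf ν) = volume.restrict (Ioo 0 1) := by
  have := Measure.isProbabilityMeasure_map (μ := ν) (monotone_cdf ν).measurable.aemeasurable
  refine Measure.ext_of_Ici _ _ fun u => ?_
  rw [Measure.map_apply (monotone_cdf ν).measurable measurableSet_Ici,
    Measure.restrict_apply' measurableSet_Ioo]
  change ν {t | u ≤ cdf ν t} = _
  rcases le_or_gt u 0 with hu0 | hu0
  · have h : Ici u ∩ Ioo 0 1 = Ioo 0 1 := inter_eq_right.2 fun v hv => hu0.trans hv.1.le
    simp [h, hu0.trans (cdf_nonneg ν _)]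
  rcases lt_or_ge u 1 with hu1 | hu1
  · have h : Ici u ∩ Ioo 0 1 = Ico u 1 :=
      ext fun v => ⟨fun hv => ⟨hv.1, hv.2.2⟩, fun hv => ⟨hv.1, hu0.trans_le hv.1, hv.2⟩⟩
    rw [h, Real.volume_Ico, measure_le_cdf ν ⟨hu0, hu1⟩]
  · have h : Ici u ∩ Ioo 0 1 = ∅ := by
      ext v
      simpa using fun hv _ => hu1.trans hv
    rw [h, measure_empty]
    exact measure_mono_null (fun t ht => hu1.trans ht) (measure_one_le_cdf ν)

theorem ae_cdf_mem_Ioo (ν : Measure ℝ) [IsProbabilityMeasure ν] [NullSingletonClass ν] :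
    ∀ᵐ t ∂ν, cdf ν t ∈ Ioo (0 : ℝ) 1 := by
  refine ae_of_ae_map (monotone_cdf ν).measurable.aemeasurable ?_
  rw [map_cdf]
  exact ae_restrict_mem measurableSet_Ioo

/-- The monotone rearrangement of `ν` onto `ρ`, that is `F_ρ⁻¹ ∘ F_ν` with `F` denoting cumulative
distribution functions. -/
noncomputable def monotoneRearrangement (ν ρ : Measure ℝ) (t : ℝ) : ℝ :=
  quantile ρ (cdf ν t)

theorem measurable_monotoneRearrangement (ν ρ : Measure ℝ) :
    Measurable (monotoneRearrangement ν ρ) :=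
  (measurable_quantile ρ).comp (monotone_cdf ν).measurable

theorem map_monotoneRearrangement (ν ρ : Measure ℝ) [IsProbabilityMeasure ν]
    [NullSingletonClass ν] [IsProbabilityMeasure ρ] : ν.map (monotoneRearrangement ν ρ) = ρ := by
  have h := Measure.map_map (μ := ν) (measurable_quantile ρ) (monotone_cdf ν).measurable
  rw [map_cdf, map_quantile] at h
  exact h.symm

theorem measurePreserving_monotoneRearrangement (ν ρ : Measure ℝ) [IsProbabilityMeasure ν]
    [NullSingletonClass ν] [IsProbabilityMeasure ρ] :
    MeasurePreserving (monotoneRearrangement ν ρ) ν ρ :=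
  ⟨measurable_monotoneRearrangement ν ρ, map_monotoneRearrangement ν ρ⟩

theorem Iic_ae_eq_cdf_le (ν : Measure ℝ) [IsProbabilityMeasure ν] [NullSingletonClass ν] (t : ℝ) :
    Iic t =ᵐ[ν] {y | cdf ν y ≤ cdf ν t} := by
  refine ae_eq_of_subset_of_measure_ge (fun y hy => monotone_cdf ν hy) ?_
    measurableSet_Iic.nullMeasurableSet (measure_ne_top _ _)
  calc ν {y | cdf ν y ≤ cdf ν t} = ν.map (cdf ν) (Iic (cdf ν t)) :=
        (Measure.map_apply (monotone_cdf ν).measurable measurableSet_Iic).symm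
    _ = volume (Iic (cdf ν t) ∩ Ioo 0 1) := by
        rw [map_cdf, Measure.restrict_apply measurableSet_Iic]
    _ ≤ volume (Icc 0 (cdf ν t)) := measure_mono fun u hu => ⟨hu.2.1.le, hu.1⟩
    _ = ν (Iic t) := by rw [Real.volume_Icc, sub_zero, ofReal_cdf]

theorem Ioi_ae_eq_preimage_monotoneRearrangement (ν ρ : Measure ℝ) [IsProbabilityMeasure ν]
    [NullSingletonClass ν] [IsProbabilityMeasure ρ] [NullSingletonClass ρ] {t : ℝ}
    (ht : cdf ν t ∈ Ioo (0 : ℝ) 1) :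
    Ioi t =ᵐ[ν] monotoneRearrangement ν ρ ⁻¹' Ioi (monotoneRearrangement ν ρ t) := by
  filter_upwards [ae_cdf_mem_Ioo ν, (Iic_ae_eq_cdf_le ν t).mem_iff] with y hy hyt
  apply propext
  change t < y ↔ quantile ρ (cdf ν t) < quantile ρ (cdf ν y)
  rw [← not_le, ← not_le, quantile_le_iff hy, cdf_quantile ρ ht]
  exact not_congr hyt

theorem setIntegral_Ioi_monotoneRearrangement (ν ρ : Measure ℝ) [IsProbabilityMeasure ν]
    [NullSingletonClass ν] [IsProbabilityMeasure ρ] [NullSingletonClass ρ] {t : ℝ}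
    (ht : cdf ν t ∈ Ioo (0 : ℝ) 1) :
    ∫ y in Ioi t, monotoneRearrangement ν ρ y ∂ν =
      ∫ s in Ioi (monotoneRearrangement ν ρ t), s ∂ρ := by
  rw [setIntegral_congr_set (Ioi_ae_eq_preimage_monotoneRearrangement ν ρ ht)]
  have h := measurePreserving_monotoneRearrangement ν ρ
  rw [← h.map_eq, setIntegral_map measurableSet_Ioi (by fun_prop) h.aemeasurable, h.map_eq]

end MonotoneRearrangement

section TailIntegral

open ProbabilityTheory Set Filter

/-- The function `t ↦ 1_{t < y} - 1_{t < 0}`, which integrates to `y` against Lebesgue measure. It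
writes a first moment as an integral over thresholds `t`. -/
noncomputable def signedInterval (y t : ℝ) : ℝ :=
  (Iio y).indicator 1 t - (Iio 0).indicator 1 t

theorem measurable_signedInterval : Measurable fun p : ℝ × ℝ => signedInterval p.1 p.2 := by
  have h1 : Measurable ({p : ℝ × ℝ | p.2 < p.1}.indicator (1 : ℝ × ℝ → ℝ)) :=
    measurable_one.indicator (measurableSet_lt measurable_snd measurable_fst)
  have h2 : Measurable ({p : ℝ × ℝ | p.2 < 0}.indicator (1 : ℝ × ℝ → ℝ)) :=
    measurable_one.indicator (measurableSet_lt measurable_snd measurable_const)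
  exact h1.sub h2

theorem signedInterval_of_nonneg {y : ℝ} (hy : 0 ≤ y) :
    signedInterval y = (Ico 0 y).indicator 1 := by
  ext t
  simp only [signedInterval, indicator, mem_Iio, mem_Ico, Pi.one_apply]
  grind

theorem signedInterval_of_nonpos {y : ℝ} (hy : y ≤ 0) :
    signedInterval y = -(Ico y 0).indicator 1 := by
  ext t
  simp only [signedInterval, indicator, mem_Iio, mem_Ico, Pi.one_apply, Pi.neg_apply]
  grind

theorem integrable_signedInterval (y : ℝ) : Integrable (signedInterval y) := by
  have h : ∀ a b : ℝ, Integrable ((Ico a b).indicator (1 : ℝ → ℝ)) := fun a b =>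
    (integrable_indicator_iff measurableSet_Ico).2 (by simp [Pi.one_def])
  rcases le_total 0 y with hy | hy
  · exact signedInterval_of_nonneg hy ▸ h 0 y
  · exact signedInterval_of_nonpos hy ▸ (h y 0).neg

theorem integral_signedInterval (y : ℝ) : ∫ t, signedInterval y t = y := by
  rcases le_total 0 y with hy | hy
  · simp [signedInterval_of_nonneg hy, integral_indicator_one, hy]
  · simp [signedInterval_of_nonpos hy, integral_neg, integral_indicator_one, hy]

theorem integral_norm_signedInterval (y : ℝ) : ∫ t, ‖signedInterval y t‖ = |y| := by
  rcases le_total 0 y with hy | hy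
  · simp [signedInterval_of_nonneg hy, norm_indicator_eq_indicator_norm,
      integral_indicator measurableSet_Ico, hy, abs_of_nonneg hy]
  · simp [signedInterval_of_nonpos hy, norm_indicator_eq_indicator_norm,
      integral_indicator measurableSet_Ico, hy, abs_of_nonpos hy]

variable {ν : Measure ℝ} {S : ℝ → ℝ}

theorem integral_signedInterval_mul (hS : Integrable S ν) (hS0 : ∫ y, S y ∂ν = 0) (t : ℝ) :
    ∫ y, signedInterval y t * S y ∂ν = ∫ y in Ioi t, S y ∂ν := by
  have h : ∀ y, signedInterval y t * S y =
      (Ioi t).indicator S y - (Iio (0 : ℝ)).indicator 1 t * S y := by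
    intro y
    rw [signedInterval, sub_mul]
    congr 1
    by_cases hy : t < y <;> simp [hy]
  simp_rw [h]
  rw [integral_sub (hS.indicator measurableSet_Ioi) (hS.const_mul _), integral_const_mul, hS0,
    mul_zero, sub_zero, integral_indicator measurableSet_Ioi]

theorem integrable_signedInterval_mul [SFinite ν] (hS : AEStronglyMeasurable S ν)
    (hyS : Integrable (fun y => y * S y) ν) :
    Integrable (fun p : ℝ × ℝ => signedInterval p.1 p.2 * S p.1) (ν.prod volume) := by
  have hm : AEStronglyMeasurable (fun p : ℝ × ℝ => signedInterval p.1 p.2 * S p.1)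
      (ν.prod volume) := measurable_signedInterval.aestronglyMeasurable.mul hS.comp_fst
  rw [integrable_prod_iff hm]
  refine ⟨Eventually.of_forall fun y => (integrable_signedInterval y).mul_const (S y), ?_⟩
  refine hyS.norm.congr (Eventually.of_forall fun y => ?_)
  simp only [norm_mul, integral_mul_const, integral_norm_signedInterval, ← Real.norm_eq_abs]

theorem integrable_setIntegral_Ioi [SFinite ν] (hS : Integrable S ν) (hS0 : ∫ y, S y ∂ν = 0)
    (hyS : Integrable (fun y => y * S y) ν) : Integrable fun t => ∫ y in Ioi t, S y ∂ν :=
  (integrable_signedInterval_mul hS.1 hyS).integral_prod_right.congr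
    (Eventually.of_forall (integral_signedInterval_mul hS hS0))

theorem integral_setIntegral_Ioi [SFinite ν] (hS : Integrable S ν) (hS0 : ∫ y, S y ∂ν = 0)
    (hyS : Integrable (fun y => y * S y) ν) :
    ∫ t, ∫ y in Ioi t, S y ∂ν = ∫ y, y * S y ∂ν := by
  have h := integral_integral_swap (f := fun y t => signedInterval y t * S y)
    (integrable_signedInterval_mul hS.1 hyS)
  simp_rw [integral_signedInterval_mul hS hS0, integral_mul_const, integral_signedInterval] at h
  exact h.symm

end TailIntegral

section OneDimensional

open InformationTheory ProbabilityTheory Set Filter Topology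

theorem nullSingletonClass_of_absolutelyContinuous {α : Type*} [MeasurableSpace α]
    {μ ν : Measure α} [NullSingletonClass ν] (h : μ ≪ ν) : NullSingletonClass μ :=
  ⟨fun x => h (measure_singleton x)⟩

theorem gaussianPDFReal_zero_one (s : ℝ) :
    gaussianPDFReal 0 1 s = (√(2 * Real.pi))⁻¹ * Real.exp (-s ^ 2 / 2) := by
  simp [gaussianPDFReal]

theorem hasDerivAt_neg_gaussianPDFReal_zero_one (s : ℝ) :
    HasDerivAt (fun s => -gaussianPDFReal 0 1 s) (gaussianPDFReal 0 1 s * s) s := by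
  simp_rw [gaussianPDFReal_zero_one]
  have h2 : HasDerivAt (fun s : ℝ => -s ^ 2 / 2) (-s) s := by
    refine ((hasDerivAt_pow 2 s).fun_neg.div_const 2).congr_deriv ?_
    push_cast
    ring
  exact (h2.exp.const_mul (√(2 * Real.pi))⁻¹).fun_neg.congr_deriv (by ring)

theorem tendsto_gaussianPDFReal_zero_one_atTop :
    Tendsto (gaussianPDFReal 0 1) atTop (𝓝 0) := by
  have h : Tendsto (fun s : ℝ => -s ^ 2 / 2) atTop atBot := by
    have := (tendsto_pow_atTop (α := ℝ) two_ne_zero).atTop_div_const (by norm_num : (0:ℝ) < 2)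
    refine (tendsto_neg_atTop_atBot.comp this).congr fun s => ?_
    simp [neg_div]
  have := (Real.tendsto_exp_atBot.comp h).const_mul (√(2 * Real.pi))⁻¹
  rw [mul_zero] at this
  exact this.congr fun s => (gaussianPDFReal_zero_one s).symm

theorem integrable_gaussianReal_iff {μ : ℝ} {v : NNReal} (hv : v ≠ 0) {f : ℝ → ℝ} :
    Integrable f (gaussianReal μ v) ↔ Integrable fun x => gaussianPDFReal μ v x * f x := by
  rw [gaussianReal_of_var_ne_zero μ hv, integrable_withDensity_iff_integrable_smul'
    (measurable_gaussianPDF μ v) (by simp [gaussianPDF])]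
  simp [toReal_gaussianPDF]

theorem setIntegral_Ioi_id_gaussianReal (a : ℝ) :
    ∫ s in Ioi a, s ∂gaussianReal 0 1 = gaussianPDFReal 0 1 a := by
  have hid : Integrable (fun s : ℝ => s) (gaussianReal 0 1) :=
    (memLp_id_gaussianReal 1).integrable le_rfl
  rw [← integral_indicator measurableSet_Ioi, integral_gaussianReal_eq_integral_smul one_ne_zero]
  have h : (fun x => gaussianPDFReal 0 1 x • (Ioi a).indicator (fun s : ℝ => s) x) =
      (Ioi a).indicator fun s => gaussianPDFReal 0 1 s * s := by
    ext x; by_cases hx : x ∈ Ioi a <;> simp [hx]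
  rw [h, integral_indicator measurableSet_Ioi,
    integral_Ioi_of_hasDerivAt_of_tendsto' (fun x _ => hasDerivAt_neg_gaussianPDFReal_zero_one x)
      ((integrable_gaussianReal_iff one_ne_zero).1 hid).integrableOn
      tendsto_gaussianPDFReal_zero_one_atTop.neg]
  simp

theorem integrable_exp_sq_div_four_gaussianReal :
    Integrable (fun s : ℝ => Real.exp (s ^ 2 / 4)) (gaussianReal 0 1) := by
  rw [integrable_gaussianReal_iff one_ne_zero]
  refine ((integrable_exp_neg_mul_sq (by norm_num : (0 : ℝ) < 1 / 4)).const_mul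
    (√(2 * Real.pi))⁻¹).congr (Eventually.of_forall fun s => ?_)
  simp only [gaussianPDFReal_zero_one, mul_assoc, ← Real.exp_add]
  ring_nf

theorem integral_sq_gaussianReal : ∫ s : ℝ, s ^ 2 ∂gaussianReal 0 1 = 1 := by
  have h := variance_fun_id_gaussianReal (μ := 0) (v := 1)
  rw [variance_of_integral_eq_zero (by fun_prop) integral_id_gaussianReal] at h
  simpa using h

/-- With `S` the monotone rearrangement of `ν` onto the standard Gaussian and `φ` the Gaussian
density, this is `ν`-almost everywhere the ratio `φ (S t) / φ t`. The tail integral replaces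
`φ (S t)` because its integral in `t` requires no derivative of `S`. -/
noncomputable def rearrangementWeight (ν : Measure ℝ) (t : ℝ) : ℝ :=
  (gaussianPDFReal 0 1 t)⁻¹ * ∫ y in Ioi t, monotoneRearrangement ν (gaussianReal 0 1) y ∂ν

theorem gaussianPDFReal_mul_rearrangementWeight (ν : Measure ℝ) (t : ℝ) :
    gaussianPDFReal 0 1 t * rearrangementWeight ν t =
      ∫ y in Ioi t, monotoneRearrangement ν (gaussianReal 0 1) y ∂ν :=
  mul_inv_cancel_left₀ (gaussianPDFReal_pos _ _ _ one_ne_zero).ne' _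

variable {ν : Measure ℝ} [IsProbabilityMeasure ν]

theorem memLp_id_of_klDiv_gaussianReal_ne_top (h : klDiv ν (gaussianReal 0 1) ≠ ∞) :
    MemLp id 2 ν := by
  have hsq := (integrable_of_klDiv_ne_top_of_integrable_exp h (g := fun s => s ^ 2 / 4)
    (by fun_prop) (fun s => by positivity) integrable_exp_sq_div_four_gaussianReal).const_mul 4
  refine (memLp_two_iff_integrable_sq (by fun_prop)).2
    (hsq.congr (Eventually.of_forall fun s => ?_))
  simp only [id]
  ring

variable [NullSingletonClass ν]

theorem memLp_monotoneRearrangement_gaussianReal :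
    MemLp (monotoneRearrangement ν (gaussianReal 0 1)) 2 ν :=
  (memLp_id_gaussianReal 2).comp_measurePreserving (measurePreserving_monotoneRearrangement ν _)

theorem integral_monotoneRearrangement_gaussianReal :
    ∫ t, monotoneRearrangement ν (gaussianReal 0 1) t ∂ν = 0 := by
  have h : ∫ s, s ∂gaussianReal 0 1 = 0 := integral_id_gaussianReal
  rwa [← map_monotoneRearrangement ν (gaussianReal 0 1),
    integral_map (measurable_monotoneRearrangement _ _).aemeasurable (by fun_prop)] at h

theorem integral_monotoneRearrangement_sq_gaussianReal :
    ∫ t, monotoneRearrangement ν (gaussianReal 0 1) t ^ 2 ∂ν = 1 := by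
  have h := integral_sq_gaussianReal
  rwa [← map_monotoneRearrangement ν (gaussianReal 0 1),
    integral_map (measurable_monotoneRearrangement _ _).aemeasurable (by fun_prop)] at h

theorem setIntegral_Ioi_monotoneRearrangement_gaussianReal_nonneg (t : ℝ) :
    0 ≤ ∫ y in Ioi t, monotoneRearrangement ν (gaussianReal 0 1) y ∂ν := by
  have := nullSingletonClass_gaussianReal (μ := 0) one_ne_zero
  rcases (cdf_nonneg ν t).eq_or_lt with h0 | h0
  · have h : Ioi t =ᵐ[ν] (univ : Set ℝ) := by
      rw [ae_eq_univ, compl_Ioi, ← ofReal_cdf, ← h0, ENNReal.ofReal_zero]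
    rw [setIntegral_congr_set h, setIntegral_univ, integral_monotoneRearrangement_gaussianReal]
  rcases (cdf_le_one ν t).eq_or_lt with h1 | h1
  · have h : ν (Ioi t) = 0 := by
      rw [← compl_Iic, prob_compl_eq_zero_iff measurableSet_Iic, ← ofReal_cdf, h1,
        ENNReal.ofReal_one]
    rw [setIntegral_measure_zero _ h]
  · rw [setIntegral_Ioi_monotoneRearrangement ν _ ⟨h0, h1⟩, setIntegral_Ioi_id_gaussianReal]
    exact gaussianPDFReal_nonneg _ _ _

theorem rearrangementWeight_nonneg (t : ℝ) : 0 ≤ rearrangementWeight ν t :=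
  mul_nonneg (inv_nonneg.2 (gaussianPDFReal_nonneg _ _ _))
    (setIntegral_Ioi_monotoneRearrangement_gaussianReal_nonneg t)

theorem ae_rearrangementWeight_eq_exp : ∀ᵐ t ∂ν, rearrangementWeight ν t =
    Real.exp ((t ^ 2 - monotoneRearrangement ν (gaussianReal 0 1) t ^ 2) / 2) := by
  have := nullSingletonClass_gaussianReal (μ := 0) one_ne_zero
  filter_upwards [ae_cdf_mem_Ioo ν] with t ht
  rw [rearrangementWeight, setIntegral_Ioi_monotoneRearrangement ν _ ht,
    setIntegral_Ioi_id_gaussianReal, gaussianPDFReal_zero_one, gaussianPDFReal_zero_one, mul_inv,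
    inv_inv, mul_mul_mul_comm, mul_inv_cancel₀ (by positivity), one_mul, ← Real.exp_neg,
    ← Real.exp_add]
  ring_nf

theorem integrable_rearrangementWeight (hν : MemLp id 2 ν) :
    Integrable (rearrangementWeight ν) (gaussianReal 0 1) := by
  have hS := memLp_monotoneRearrangement_gaussianReal (ν := ν)
  rw [integrable_gaussianReal_iff one_ne_zero]
  simp_rw [gaussianPDFReal_mul_rearrangementWeight]
  exact integrable_setIntegral_Ioi (hS.integrable one_le_two)
    integral_monotoneRearrangement_gaussianReal (hν.integrable_mul hS)

theorem integral_rearrangementWeight (hν : MemLp id 2 ν) :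
    ∫ t, rearrangementWeight ν t ∂gaussianReal 0 1 =
      ∫ t, t * monotoneRearrangement ν (gaussianReal 0 1) t ∂ν := by
  have hS := memLp_monotoneRearrangement_gaussianReal (ν := ν)
  rw [integral_gaussianReal_eq_integral_smul one_ne_zero]
  simp_rw [smul_eq_mul, gaussianPDFReal_mul_rearrangementWeight]
  exact integral_setIntegral_Ioi (hS.integrable one_le_two)
    integral_monotoneRearrangement_gaussianReal (hν.integrable_mul hS)

theorem integral_sub_monotoneRearrangement_sq_le (h : klDiv ν (gaussianReal 0 1) ≠ ∞) :
    ∫ t, (t - monotoneRearrangement ν (gaussianReal 0 1) t) ^ 2 ∂ν ≤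
      2 * (klDiv ν (gaussianReal 0 1)).toReal := by
  have hν := memLp_id_of_klDiv_gaussianReal_ne_top h
  have hS := memLp_monotoneRearrangement_gaussianReal (ν := ν)
  have hS1 := integral_monotoneRearrangement_sq_gaussianReal (ν := ν)
  set S := monotoneRearrangement ν (gaussianReal 0 1)
  have hν2 : Integrable (fun t => t ^ 2) ν := hν.integrable_sq
  have hνS : Integrable (fun t => t * S t) ν := hν.integrable_mul hS
  have hgibbs := integral_add_le_klDiv_add_integral h (integrable_rearrangementWeight hν)
    (ae_of_all _ rearrangementWeight_nonneg) ((hν2.sub hS.integrable_sq).div_const 2)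
    ae_rearrangementWeight_eq_exp
  simp only [Pi.sub_apply] at hgibbs
  rw [integral_rearrangementWeight hν, integral_div, integral_sub hν2 hS.integrable_sq, hS1,
    probReal_univ] at hgibbs
  calc ∫ t, (t - S t) ^ 2 ∂ν = ∫ t, (t ^ 2 - 2 * (t * S t) + S t ^ 2) ∂ν := by
        congr with t
        ring
    _ = ∫ t, t ^ 2 ∂ν - 2 * ∫ t, t * S t ∂ν + 1 := by
        have hsub : Integrable (fun t => t ^ 2 - 2 * (t * S t)) ν := hν2.sub (hνS.const_mul 2)
        rw [integral_add hsub hS.integrable_sq, integral_sub hν2 (hνS.const_mul 2),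
          integral_const_mul, hS1]
    _ ≤ 2 * (klDiv ν (gaussianReal 0 1)).toReal := by linarith

theorem lintegral_sub_monotoneRearrangement_sq_le (ν : Measure ℝ) [IsProbabilityMeasure ν] :
    ∫⁻ t, ENNReal.ofReal ((t - monotoneRearrangement ν (gaussianReal 0 1) t) ^ 2) ∂ν ≤
      2 * klDiv ν (gaussianReal 0 1) := by
  by_cases h : klDiv ν (gaussianReal 0 1) = ∞
  · simp [h]
  have := nullSingletonClass_gaussianReal (μ := 0) one_ne_zero
  have := nullSingletonClass_of_absolutelyContinuous (klDiv_ne_top_iff.1 h).1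
  have hL2 : Integrable (fun t => (t - monotoneRearrangement ν (gaussianReal 0 1) t) ^ 2) ν :=
    ((memLp_id_of_klDiv_gaussianReal_ne_top h).sub
      memLp_monotoneRearrangement_gaussianReal).integrable_sq
  rw [← ofReal_integral_eq_lintegral_ofReal hL2 (ae_of_all _ fun t => sq_nonneg _)]
  refine (ENNReal.ofReal_le_ofReal (integral_sub_monotoneRearrangement_sq_le h)).trans_eq ?_
  rw [ENNReal.ofReal_mul zero_le_two, ENNReal.ofReal_toReal h, ENNReal.ofReal_ofNat]

end OneDimensional

section ConditionalEntropy

open ProbabilityTheory InformationTheory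

variable {α β : Type*} {mα : MeasurableSpace α} {mβ : MeasurableSpace β}
  [MeasurableSpace.CountableOrCountablyGenerated α β] {μ : Measure α} [IsFiniteMeasure μ]
  {κ η : Kernel α β} [IsFiniteKernel κ] [IsFiniteKernel η]

theorem compProd_eq_withDensity_kernel_rnDeriv (h : μ ⊗ₘ κ ≪ μ ⊗ₘ η) :
    μ ⊗ₘ κ = (μ ⊗ₘ η).withDensity fun p => κ.rnDeriv η p.1 p.2 := by
  have hκ : κ =ᵐ[μ] η.withDensity (κ.rnDeriv η) := by
    filter_upwards [h.kernel_of_compProd] with a ha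
    exact (Kernel.withDensity_rnDeriv_eq ha).symm
  rw [Measure.compProd_congr hκ, Measure.compProd_withDensity (Kernel.measurable_rnDeriv κ η)]

theorem klDiv_compProd_same_left (h : μ ⊗ₘ κ ≪ μ ⊗ₘ η) :
    klDiv (μ ⊗ₘ κ) (μ ⊗ₘ η) = ∫⁻ a, klDiv (κ a) (η a) ∂μ := by
  have hmeas : Measurable fun p : α × β => κ.rnDeriv η p.1 p.2 := Kernel.measurable_rnDeriv κ η
  have hrn : (μ ⊗ₘ κ).rnDeriv (μ ⊗ₘ η) =ᵐ[μ ⊗ₘ η] fun p => κ.rnDeriv η p.1 p.2 := by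
    conv_lhs => rw [compProd_eq_withDensity_kernel_rnDeriv h]
    exact Measure.rnDeriv_withDensity _ hmeas
  calc klDiv (μ ⊗ₘ κ) (μ ⊗ₘ η)
      = ∫⁻ p, ENNReal.ofReal (klFun (κ.rnDeriv η p.1 p.2).toReal) ∂(μ ⊗ₘ η) := by
        rw [klDiv_eq_lintegral_klFun_of_ac h]
        exact lintegral_congr_ae (hrn.mono fun p hp => by simp only [hp])
    _ = ∫⁻ a, ∫⁻ b, ENNReal.ofReal (klFun (κ.rnDeriv η a b).toReal) ∂(η a) ∂μ :=
        Measure.lintegral_compProd (measurable_klFun.comp hmeas.ennreal_toReal).ennreal_ofReal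
    _ = ∫⁻ a, klDiv (κ a) (η a) ∂μ := by
        refine lintegral_congr_ae ?_
        filter_upwards [h.kernel_of_compProd] with a ha
        rw [klDiv_eq_lintegral_klFun_of_ac ha]
        refine lintegral_congr_ae ?_
        filter_upwards [Kernel.rnDeriv_eq_rnDeriv_measure (κ := κ) (η := η) (a := a)] with b hb
        simp only [hb]

end ConditionalEntropy

section Tensorization

open ProbabilityTheory InformationTheory

variable {E F : Type*} {mE : MeasurableSpace E} {mF : MeasurableSpace F}

/-- `γ` satisfies Talagrand's inequality in Monge form for the cost `c`: every probability measure
`ν` of finite relative entropy `H(ν | γ)` is pushed forward to `γ` by a map of cost at most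
`2 H(ν | γ)`. -/
def SatisfiesTalagrand (γ : Measure E) (c : E → E → ℝ≥0∞) : Prop :=
  ∀ (ν : Measure E) [IsProbabilityMeasure ν], klDiv ν γ ≠ ∞ →
    ∃ T : E → E, MeasurePreserving T ν γ ∧ ∫⁻ x, c x (T x) ∂ν ≤ 2 * klDiv ν γ

theorem measurable_monotoneRearrangement_kernel (κ : Kernel E ℝ) [IsMarkovKernel κ]
    (ρ : Measure ℝ) : Measurable fun p : E × ℝ => monotoneRearrangement (κ p.1) ρ p.2 := by
  refine (measurable_quantile ρ).comp ?_
  simp only [cdf_eq_real]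
  have hIic : MeasurableSet {q : (E × ℝ) × ℝ | q.2 ≤ q.1.2} :=
    measurableSet_le measurable_snd (measurable_snd.comp measurable_fst)
  exact (Kernel.measurable_kernel_prodMk_left
    (κ := κ.comap Prod.fst measurable_fst) hIic).ennreal_toReal

theorem measurePreserving_compProd_prod {μ : Measure E} [SFinite μ] {γ : Measure F} [SFinite γ]
    {α β : Type*} {mα : MeasurableSpace α} {mβ : MeasurableSpace β} {κ : Kernel E α}
    [IsSFiniteKernel κ] {ρ : Measure β} [SFinite ρ] {T : E → F} {S : E → α → β}
    (hT : MeasurePreserving T μ γ) (hS : Measurable (Function.uncurry S))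
    (hSρ : ∀ᵐ e ∂μ, (κ e).map (S e) = ρ) :
    MeasurePreserving (fun p : E × α => (T p.1, S p.1 p.2)) (μ ⊗ₘ κ) (γ.prod ρ) := by
  have hTS : Measurable fun p : E × α => (T p.1, S p.1 p.2) :=
    (hT.measurable.comp measurable_fst).prodMk hS
  refine ⟨hTS, Measure.ext fun A hA => ?_⟩
  rw [Measure.map_apply hTS hA, Measure.compProd_apply (hTS hA), Measure.prod_apply hA,
    ← hT.map_eq, lintegral_map (measurable_measure_prodMk_left hA) hT.measurable]
  refine lintegral_congr_ae ?_
  filter_upwards [hSρ] with e he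
  have hSe : Measurable (S e) := hS.comp measurable_prodMk_left
  rw [← he, Measure.map_apply hSe (measurable_prodMk_left hA)]
  rfl

theorem ae_condKernel_absolutelyContinuous [StandardBorelSpace F] [Nonempty F]
    {ν : Measure (E × F)} [IsFiniteMeasure ν] {γ : Measure E} [SFinite γ] {ρ : Measure F}
    [IsFiniteMeasure ρ] (h : ν ≪ γ.prod ρ) : ∀ᵐ e ∂ν.fst, ν.condKernel e ≪ ρ := by
  rw [← ν.disintegrate ν.condKernel, ← Measure.compProd_const] at h
  simpa using h.kernel_of_compProd

theorem klDiv_prod_eq_add_lintegral_condKernel [StandardBorelSpace F] [Nonempty F]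
    {ν : Measure (E × F)} [IsFiniteMeasure ν] {γ : Measure E} [IsFiniteMeasure γ]
    {ρ : Measure F} [IsProbabilityMeasure ρ] (h : ν ≪ γ.prod ρ) :
    klDiv ν (γ.prod ρ) = klDiv ν.fst γ + ∫⁻ e, klDiv (ν.condKernel e) ρ ∂ν.fst := by
  have hac : ν.fst ⊗ₘ ν.condKernel ≪ ν.fst ⊗ₘ Kernel.const E ρ :=
    Measure.AbsolutelyContinuous.compProd_right (ae_condKernel_absolutelyContinuous h)
  calc klDiv ν (γ.prod ρ)
      = klDiv (ν.fst ⊗ₘ ν.condKernel) (γ ⊗ₘ Kernel.const E ρ) := by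
        rw [ν.disintegrate, Measure.compProd_const]
    _ = klDiv ν.fst γ + ∫⁻ e, klDiv (ν.condKernel e) ρ ∂ν.fst := by
        rw [klDiv_compProd_eq_add, klDiv_compProd_same_left hac]
        simp only [Kernel.const_apply]

theorem SatisfiesTalagrand.prod_gaussianReal {γ : Measure E} [IsProbabilityMeasure γ]
    {c : E → E → ℝ≥0∞} (hc : Measurable (Function.uncurry c)) (h : SatisfiesTalagrand γ c) :
    SatisfiesTalagrand (γ.prod (gaussianReal 0 1))
      fun p q => c p.1 q.1 + ENNReal.ofReal ((p.2 - q.2) ^ 2) := by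
  intro ν _ hν
  have hac := (klDiv_ne_top_iff.1 hν).1
  have hadd := klDiv_prod_eq_add_lintegral_condKernel hac
  set κ := ν.condKernel
  have hdisint : ν.fst ⊗ₘ κ = ν := ν.disintegrate κ
  obtain ⟨T, hT, hTcost⟩ := h ν.fst (ENNReal.add_ne_top.1 (hadd ▸ hν)).1
  set S := fun e => monotoneRearrangement (κ e) (gaussianReal 0 1)
  have hS : Measurable (Function.uncurry S) := measurable_monotoneRearrangement_kernel κ _
  have hκ : ∀ᵐ e ∂ν.fst, (κ e).map (S e) = gaussianReal 0 1 := by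
    filter_upwards [ae_condKernel_absolutelyContinuous hac] with e he
    have := nullSingletonClass_gaussianReal (μ := 0) one_ne_zero
    have := nullSingletonClass_of_absolutelyContinuous he
    exact map_monotoneRearrangement _ _
  refine ⟨fun p => (T p.1, S p.1 p.2), hdisint ▸ measurePreserving_compProd_prod hT hS hκ, ?_⟩
  have hcT : Measurable fun e => c e (T e) := hc.comp (measurable_id.prodMk hT.measurable)
  have hcS : Measurable fun p : E × ℝ => ENNReal.ofReal ((p.2 - S p.1 p.2) ^ 2) :=
    ((measurable_snd.sub hS).pow_const 2).ennreal_ofReal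
  calc ∫⁻ p, (c p.1 (T p.1) + ENNReal.ofReal ((p.2 - S p.1 p.2) ^ 2)) ∂ν
      = ∫⁻ e, c e (T e) ∂ν.fst +
          ∫⁻ e, ∫⁻ t, ENNReal.ofReal ((t - S e t) ^ 2) ∂(κ e) ∂ν.fst := by
        rw [lintegral_add_right _ hcS, Measure.fst, lintegral_map hcT measurable_fst,
          ← Measure.fst, ← Measure.lintegral_compProd hcS, hdisint]
    _ ≤ 2 * klDiv ν.fst γ + ∫⁻ e, 2 * klDiv (κ e) (gaussianReal 0 1) ∂ν.fst :=
        add_le_add hTcost (lintegral_mono fun e => lintegral_sub_monotoneRearrangement_sq_le (κ e))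
    _ = 2 * klDiv ν (γ.prod (gaussianReal 0 1)) := by
        rw [lintegral_const_mul' _ _ ENNReal.ofNat_ne_top, hadd, mul_add]

theorem SatisfiesTalagrand.comp_measurableEquiv {γ : Measure E} [IsFiniteMeasure γ]
    {γ' : Measure F} {c : F → F → ℝ≥0∞} (h : SatisfiesTalagrand γ' c) (e : E ≃ᵐ F)
    (he : MeasurePreserving e γ γ') :
    SatisfiesTalagrand γ fun x y => c (e x) (e y) := by
  intro ν _ hν
  have : IsProbabilityMeasure (ν.map e) :=
    Measure.isProbabilityMeasure_map e.measurable.aemeasurable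
  have hle : klDiv (ν.map e) γ' ≤ klDiv ν γ := he.map_eq ▸ klDiv_map_le ν γ e.measurable
  obtain ⟨T, hT, hTcost⟩ := h (ν.map e) (hle.trans_lt hν.lt_top).ne
  refine ⟨e.symm ∘ T ∘ e, (he.symm e).comp (hT.comp (e.measurable.measurePreserving ν)), ?_⟩
  calc ∫⁻ x, c (e x) (e ((e.symm ∘ T ∘ e) x)) ∂ν = ∫⁻ y, c y (T y) ∂ν.map e := by
        simp [lintegral_map_equiv]
    _ ≤ 2 * klDiv ν γ := hTcost.trans (mul_le_mul_right hle 2)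

theorem satisfiesTalagrand_pi_gaussianReal : ∀ n : ℕ,
    SatisfiesTalagrand (Measure.pi fun _ : Fin n => gaussianReal 0 1)
      fun x y => ∑ i, ENNReal.ofReal ((x i - y i) ^ 2)
  | 0 => fun ν _ _ => by
    refine ⟨id, ⟨measurable_id, ?_⟩, by simp⟩
    rw [Measure.map_id]
    refine Measure.ext fun s _ => ?_
    rcases s.eq_empty_or_nonempty with rfl | hs
    · simp
    · simp [Subsingleton.eq_univ_of_nonempty hs]
  | n + 1 => by
    have hsplit : MeasurePreserving
        ((MeasurableEquiv.piFinSuccAbove (fun _ : Fin (n + 1) => ℝ) 0).trans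
          MeasurableEquiv.prodComm)
        (Measure.pi fun _ => gaussianReal 0 1)
        ((Measure.pi fun _ => gaussianReal 0 1).prod (gaussianReal 0 1)) :=
      Measure.measurePreserving_swap.comp
        (measurePreserving_piFinSuccAbove (fun _ => gaussianReal 0 1) 0)
    have hcost : Measurable (Function.uncurry fun x y : Fin n → ℝ =>
        ∑ i, ENNReal.ofReal ((x i - y i) ^ 2)) :=
      Finset.measurable_sum _ fun i _ => by fun_prop
    convert ((satisfiesTalagrand_pi_gaussianReal n).prod_gaussianReal hcost).comp_measurableEquiv _
      hsplit using 3 with x y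
    rw [Fin.sum_univ_succ, add_comm]
    rfl

end Tensorization

section ProductDensity

theorem lintegral_fin_prod_eq_prod {n : ℕ} {α : Fin n → Type*} [∀ i, MeasurableSpace (α i)]
    (μ : ∀ i, Measure (α i)) [∀ i, SigmaFinite (μ i)] {f : ∀ i, α i → ℝ≥0∞}
    (hf : ∀ i, Measurable (f i)) :
    ∫⁻ x, ∏ i, f i (x i) ∂Measure.pi μ = ∏ i, ∫⁻ t, f i t ∂μ i := by
  induction n with
  | zero => simp
  | succ n ih =>
    have htail : Measurable fun x : ∀ i : Fin n, α i.succ => ∏ i, f i.succ (x i) := by fun_prop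
    calc ∫⁻ x, ∏ i, f i (x i) ∂Measure.pi μ
        = ∫⁻ p, f 0 p.1 * ∏ i : Fin n, f i.succ (p.2 i)
            ∂(μ 0).prod (Measure.pi fun i => μ i.succ) := by
          simp only [Fin.prod_univ_succ]
          exact (measurePreserving_piFinSuccAbove μ 0).lintegral_comp_emb
            (MeasurableEquiv.measurableEmbedding _)
            fun p => f 0 p.1 * ∏ i : Fin n, f i.succ (p.2 i)
      _ = (∫⁻ t, f 0 t ∂μ 0) * ∏ i : Fin n, ∫⁻ t, f i.succ t ∂μ i.succ := by
          rw [lintegral_prod_mul (hf 0).aemeasurable htail.aemeasurable,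
            ih _ fun i => hf i.succ]
      _ = ∏ i, ∫⁻ t, f i t ∂μ i := by rw [Fin.prod_univ_succ]

variable {ι : Type*} [Fintype ι]

theorem lintegral_fintype_prod_eq_prod {α : ι → Type*} [∀ i, MeasurableSpace (α i)]
    (μ : ∀ i, Measure (α i)) [∀ i, SigmaFinite (μ i)] {f : ∀ i, α i → ℝ≥0∞}
    (hf : ∀ i, Measurable (f i)) :
    ∫⁻ x, ∏ i, f i (x i) ∂Measure.pi μ = ∏ i, ∫⁻ t, f i t ∂μ i := by
  let e := (Fintype.equivFin ι).symm
  rw [← (measurePreserving_piCongrLeft μ e).lintegral_comp_emb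
    (MeasurableEquiv.measurableEmbedding _)]
  simp_rw [← e.prod_comp, MeasurableEquiv.coe_piCongrLeft, Equiv.piCongrLeft_apply_apply]
  exact lintegral_fin_prod_eq_prod _ fun i => hf (e i)

theorem pi_withDensity {α : ι → Type*} [∀ i, MeasurableSpace (α i)] (μ : ∀ i, Measure (α i))
    [∀ i, SigmaFinite (μ i)] {f : ∀ i, α i → ℝ≥0∞} (hf : ∀ i, Measurable (f i))
    [∀ i, SigmaFinite ((μ i).withDensity (f i))] :
    Measure.pi (fun i => (μ i).withDensity (f i)) =
      (Measure.pi μ).withDensity fun x => ∏ i, f i (x i) := by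
  refine Measure.pi_eq fun s hs => ?_
  rw [withDensity_apply _ (MeasurableSet.univ_pi hs), Measure.restrict_pi_pi,
    lintegral_fintype_prod_eq_prod _ hf]
  exact Finset.prod_congr rfl fun i _ => (withDensity_apply _ (hs i)).symm

theorem measurePreserving_withDensity_comp {α β : Type*} [MeasurableSpace α] [MeasurableSpace β]
    {μ : Measure α} {ν : Measure β} {g : α → β} (hg : MeasurePreserving g μ ν)
    {f : β → ℝ≥0∞} (hf : Measurable f) :
    MeasurePreserving g (μ.withDensity (f ∘ g)) (ν.withDensity f) := by
  refine ⟨hg.measurable, Measure.ext fun s hs => ?_⟩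
  rw [Measure.map_apply hg.measurable hs, withDensity_apply _ (hg.measurable hs),
    withDensity_apply _ hs]
  exact hg.setLIntegral_comp_preimage hs hf

end ProductDensity

section Euclidean

open ProbabilityTheory hiding stdGaussian
open InformationTheory

theorem pi_gaussianReal_eq_withDensity (d : ℕ) :
    Measure.pi (fun _ : Fin d => gaussianReal 0 1) = volume.withDensity fun x =>
      ENNReal.ofReal ((2 * Real.pi) ^ (-(d : ℝ) / 2) * Real.exp (-(∑ i, x i ^ 2) / 2)) := by
  have hconst : (2 * Real.pi) ^ (-(d : ℝ) / 2) = ((√(2 * Real.pi))⁻¹) ^ d := by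
    rw [Real.sqrt_eq_rpow, ← Real.rpow_neg (by positivity), ← Real.rpow_natCast,
      ← Real.rpow_mul (by positivity)]
    congr 1
    ring
  have hprob : IsProbabilityMeasure (volume.withDensity (gaussianPDF 0 1)) :=
    gaussianReal_of_var_ne_zero 0 one_ne_zero ▸ inferInstance
  simp only [gaussianReal_of_var_ne_zero 0 one_ne_zero]
  rw [pi_withDensity _ fun _ => measurable_gaussianPDF 0 1, ← volume_pi]
  congr 1 with x
  simp only [gaussianPDF]
  rw [← ENNReal.ofReal_prod_of_nonneg fun i _ => gaussianPDFReal_nonneg 0 1 (x i), hconst]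
  simp only [gaussianPDFReal_zero_one]
  rw [Finset.prod_mul_distrib, ← Real.exp_sum, Finset.prod_const, Finset.card_univ,
    Fintype.card_fin, ← Finset.sum_div, ← Finset.sum_neg_distrib]

theorem measurePreserving_ofLp_stdGaussian (d : ℕ) :
    MeasurePreserving (MeasurableEquiv.toLp 2 (Fin d → ℝ)).symm (stdGaussian d)
      (Measure.pi fun _ => gaussianReal 0 1) := by
  rw [pi_gaussianReal_eq_withDensity]
  convert measurePreserving_withDensity_comp
    (EuclideanSpace.volume_preserving_symm_measurableEquiv_toLp (Fin d)) _ using 1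
  · rw [stdGaussian]
    congr 1 with x
    simp [EuclideanSpace.real_norm_sq_eq]
  · fun_prop

instance isProbabilityMeasure_stdGaussian (d : ℕ) : IsProbabilityMeasure (stdGaussian d) :=
  (measurePreserving_ofLp_stdGaussian d).symm.map_eq ▸
    Measure.isProbabilityMeasure_map (MeasurableEquiv.measurable _).aemeasurable

theorem satisfiesTalagrand_stdGaussian (d : ℕ) :
    SatisfiesTalagrand (stdGaussian d) fun x y => (‖x - y‖₊ : ℝ≥0∞) ^ 2 := by
  convert (satisfiesTalagrand_pi_gaussianReal d).comp_measurableEquiv _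
    (measurePreserving_ofLp_stdGaussian d) using 3 with x y
  rw [← ENNReal.ofReal_sum_of_nonneg fun i _ => sq_nonneg _]
  change _ = ENNReal.ofReal (∑ i, (x i - y i) ^ 2)
  simp_rw [← PiLp.sub_apply]
  rw [← EuclideanSpace.real_norm_sq_eq, ENNReal.ofReal_pow (norm_nonneg _),
    ofReal_norm]
  rfl

theorem W2sq_le_lintegral_of_measurePreserving {E : Type*} [MeasurableSpace E]
    [NormedAddCommGroup E] [BorelSpace E] [SecondCountableTopology E] {μ ν : Measure E} {T : E → E}
    (hT : MeasurePreserving T μ ν) : W2sq μ ν ≤ ∫⁻ x, (‖x - T x‖₊ : ℝ≥0∞) ^ 2 ∂μ := by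
  have hgraph : Measurable fun x => (x, T x) := measurable_id.prodMk hT.measurable
  have hcoupling : IsCoupling (μ.map fun x => (x, T x)) μ ν := by
    refine ⟨?_, ?_⟩
    · rw [Measure.map_map measurable_fst hgraph]
      exact Measure.map_id
    · rw [Measure.map_map measurable_snd hgraph]
      exact hT.map_eq
  unfold W2sq
  refine (iInf₂_le (μ.map fun x => (x, T x)) hcoupling).trans_eq ?_
  rw [lintegral_map (by fun_prop) hgraph]

theorem relEnt_eq_klDiv {E : Type*} [MeasurableSpace E] (μ γ : Measure E)
    [IsProbabilityMeasure μ] [IsProbabilityMeasure γ] : relEnt μ γ = klDiv μ γ := by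
  by_cases h : μ ≪ γ ∧ Integrable (fun x => Real.log (μ.rnDeriv γ x).toReal) μ
  · rw [klDiv_of_ac_of_integrable h.1 h.2, relEnt, if_pos h]
    simp [llr_def]
  · rw [relEnt, if_neg h, eq_comm, klDiv_eq_top_iff]
    exact fun hac hint => h ⟨hac, hint⟩

end Euclidean

theorem talagrand_gaussian_general (d : ℕ) (ν : Measure (EuclideanSpace ℝ (Fin d)))
    [IsProbabilityMeasure ν] : W2sq ν (stdGaussian d) ≤ 2 * relEnt ν (stdGaussian d) := by
  rw [relEnt_eq_klDiv]
  by_cases h : InformationTheory.klDiv ν (stdGaussian d) = ∞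
  · simp [h]
  · obtain ⟨T, hT, hcost⟩ := satisfiesTalagrand_stdGaussian d ν h
    exact (W2sq_le_lintegral_of_measurePreserving hT).trans hcost

/-- **Talagrand's transport-entropy inequality** for the standard Gaussian measure `γ` on
`ℝ^d`: for every probability measure `ν` with finite second moment, `W₂(ν,γ)² ≤ 2 Ent_γ(ν)`. -/
theorem talagrand_gaussian (d : ℕ) (hd : 1 ≤ d)
    (ν : Measure (EuclideanSpace ℝ (Fin d))) [IsProbabilityMeasure ν]
    (hν2 : Integrable (fun x => ‖x‖ ^ 2) ν) :
    W2sq ν (stdGaussian d) ≤ 2 * relEnt ν (stdGaussian d) :=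
  talagrand_gaussian_general d ν
end
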